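/- Let X be a Borel subset of the Cantor space 2^ω that is dense in 2^ω, such that the subspace X is homogeneous and X ∉ Δ. Then the complement 2^ω \ X, with the subspace topology, is homogeneous. -/

import Mathlib

open Set

abbrev Cantor := ℕ → Bool

def UpwardClosed (S : Set Cantor) : Prop :=
  ∀ x ∈ S, ∀ y : Cantor, (∀ n, x n = true → y n = true) → y ∈ S

def DownwardClosed (R : Set Cantor) : Prop :=
  ∀ y ∈ R, ∀ x : Cantor, (∀ n, x n = true → y n = true) → x ∈ R

def ClosedUnderFinMod (S : Set Cantor) : Prop :=
  ∀ x ∈ S, ∀ y : Cantor, {n | x n ≠ y n}.Finite → y ∈ S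

def IsSemifilter (S : Set Cantor) : Prop :=
  (fun _ => false) ∉ S ∧ (fun _ => true) ∈ S ∧ UpwardClosed S ∧ ClosedUnderFinMod S

def IsSemiideal (R : Set Cantor) : Prop :=
  (fun _ => false) ∈ R ∧ (fun _ => true) ∉ R ∧ DownwardClosed R ∧ ClosedUnderFinMod R

def ClosedUnderInter (S : Set Cantor) : Prop :=
  ∀ x ∈ S, ∀ y ∈ S, (fun n => x n && y n) ∈ S

def IsFilterOnOmega (F : Set Cantor) : Prop := IsSemifilter F ∧ ClosedUnderInter F

def IsHomogeneous (X : Type*) [TopologicalSpace X] : Prop :=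
  ∀ x y : X, ∃ h : X ≃ₜ X, h x = y

def IsFsigma (A : Set Cantor) : Prop :=
  ∃ F : ℕ → Set Cantor, (∀ n, IsClosed (F n)) ∧ A = ⋃ n, F n

def DOmegaSigmaTwo (X : Set Cantor) : Prop :=
  ∃ A : ℕ → Set Cantor, (∀ n, IsFsigma (A n)) ∧ Monotone A ∧
    X = ⋃ n ∈ {n : ℕ | Odd n}, (A n \ ⋃ m < n, A m)

def InDelta (X : Set Cantor) : Prop := DOmegaSigmaTwo X ∧ DOmegaSigmaTwo Xᶜ

def WadgeLe (A B : Set Cantor) : Prop :=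
  ∃ f : Cantor → Cantor, Continuous f ∧ A = f ⁻¹' B

def WadgeEquiv (A B : Set Cantor) : Prop := WadgeLe A B ∧ WadgeLe B A

def CompletelyMetrizable (X : Type*) [t : TopologicalSpace X] : Prop :=
  ∃ m : MetricSpace X, m.toUniformSpace.toTopologicalSpace = t ∧
    @CompleteSpace X m.toUniformSpace

def FirstCategory (X : Type*) [TopologicalSpace X] : Prop :=
  ∃ f : ℕ → Set X, (∀ n, interior (closure (f n)) = ∅) ∧ (Set.univ : Set X) = ⋃ n, f n

def CantorFin : Set Cantor := {x | {n | x n = true}.Finite}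

def BorelSet (X : Set Cantor) : Prop := @MeasurableSet Cantor (borel Cantor) X

/-!
Suppose first that `X` is meagre and that `(Cantor, X)` embeds, as a pair, into every nonempty open
set. A homeomorphism `h` which respects `X` on a closed nowhere dense set `K` can be changed
slightly, and not at all on `K`, so as to respect `X` on a larger closed nowhere dense set as well:
the embeddings provide an injection `φ` close to the identity such that `h ∘ φ` respects `X`
everywhere, and a theorem of Knaster–Reichbach type extends the restriction of `φ` to the larger
set to a homeomorphism. Exhausting `X` by closed nowhere dense sets, a back-and-forth construction
yields homeomorphisms of the pair `(Cantor, X)` which move any point outside `X` to any other. If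
`X` is not meagre, homogeneity makes its complement meagre, and the same argument applies to the
complement, since embeddings of pairs respect complements.

To find the embeddings, a labelled version of `X` is compared with the part of `X` in a cylinder by
means of a Wadge game, which is determined by Martin's theorem. A win for one player provides the
embedding, the labels being used to make it injective. A win for the other one, combined with
homogeneity, provides reductions of `X` to itself and to its complement with values in arbitrary
cylinders, defined up to an error that is negligible because `X` is outside Δ. Infinite compositions
of these lead to a Borel set in which membership is reversed by every change of a single bit, and
this contradicts the Baire category theorem.
-/

universe u v

/-! ## Game trees and coverings -/

section InverseSystem

variable {E : ℕ → Type u} (r : ∀ i, E (i + 1) → E i)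

theorem exists_thread_through {i₀ : ℕ} (hr : ∀ i, i₀ ≤ i → Function.Surjective (r i)) (q : E i₀) :
    ∃ p : ∀ i, E i, (∀ i, r i (p (i + 1)) = p i) ∧ p i₀ = q := by
  induction i₀ generalizing E with
  | zero =>
    choose f hf using fun i => hr i (Nat.zero_le _)
    exact ⟨fun i => Nat.rec q f i, fun i => hf i _, rfl⟩
  | succ n ih =>
    obtain ⟨p, hp, hq⟩ :=
      ih (E := fun i => E (i + 1)) (fun i => r (i + 1)) (fun i hi => hr (i + 1) (by omega)) q
    refine ⟨fun i => Nat.casesOn i (r 0 (p 0)) p, fun i => ?_, hq⟩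
    cases i with
    | zero => rfl
    | succ j => exact hp j

variable {r} {p p' : ∀ i, E i} {n : ℕ}

theorem thread_eq_of_le (hp : ∀ i, r i (p (i + 1)) = p i)
    (hp' : ∀ i, r i (p' (i + 1)) = p' i) (h : p n = p' n) {j : ℕ} (hj : j ≤ n) : p j = p' j := by
  induction n, hj using Nat.le_induction with
  | base => exact h
  | succ n _ ih => exact ih (by rw [← hp, ← hp', h])

theorem thread_ext (hp : ∀ i, r i (p (i + 1)) = p i)
    (hp' : ∀ i, r i (p' (i + 1)) = p' i) (h : p n = p' n)
    (hr : ∀ i, n ≤ i → Function.Injective (r i)) : p = p' := by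
  funext j
  rcases Nat.lt_or_ge j n with hj | hj
  · exact thread_eq_of_le hp hp' h hj.le
  · induction j, hj using Nat.le_induction with
    | base => exact h
    | succ j hj ih => exact hr j hj (by rw [hp, hp', ih])

end InverseSystem

/-- A pruned tree, presented by its levels: `Pos n` is the set of positions after `n` moves and
`parent` undoes the last move. At a position of level `n` it is the turn of the player
`Nat.bodd n : Bool`. -/
structure GameTree where
  Pos : ℕ → Type u
  parent : ∀ n, Pos (n + 1) → Pos n
  surjective_parent : ∀ n, Function.Surjective (parent n)

namespace GameTree

/-- A branch of the tree, that is, an infinite run of the game. -/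
@[ext]
structure Play (G : GameTree.{u}) where
  pos : ∀ n, G.Pos n
  parent_pos : ∀ n, G.parent n (pos (n + 1)) = pos n

/-- A strategy prescribes a move at every position; a player uses it at his own levels only. -/
@[ext]
structure Strategy (G : GameTree.{u}) where
  move : ∀ n, G.Pos n → G.Pos (n + 1)
  parent_move : ∀ n p, G.parent n (move n p) = p

/-- In the play `x`, the player `b` follows the strategy `s`. -/
def Play.Follows {G : GameTree.{u}} (x : G.Play) (b : Bool) (s : G.Strategy) : Prop :=
  ∀ n, Nat.bodd n = b → x.pos (n + 1) = s.move n (x.pos n)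

section Positions

variable {G : GameTree.{u}}

noncomputable instance : Inhabited G.Strategy :=
  ⟨⟨fun n => Function.surjInv (G.surjective_parent n),
    fun n => Function.surjInv_eq (G.surjective_parent n)⟩⟩

instance : TopologicalSpace G.Play where
  IsOpen W := ∀ x ∈ W, ∃ n, ∀ y : G.Play, y.pos n = x.pos n → y ∈ W
  isOpen_univ _ _ := ⟨0, fun _ _ => trivial⟩
  isOpen_inter V W hV hW x hx := by
    obtain ⟨m, hm⟩ := hV x hx.1
    obtain ⟨n, hn⟩ := hW x hx.2
    refine ⟨max m n, fun y hy => ⟨hm y ?_, hn y ?_⟩⟩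
    · exact thread_eq_of_le y.parent_pos x.parent_pos hy (le_max_left m n)
    · exact thread_eq_of_le y.parent_pos x.parent_pos hy (le_max_right m n)
  isOpen_sUnion 𝒲 h𝒲 x := by
    rintro ⟨W, hW, hx⟩
    obtain ⟨n, hn⟩ := h𝒲 W hW x hx
    exact ⟨n, fun y hy => ⟨W, hW, hn y hy⟩⟩

theorem Play.isOpen_iff {W : Set G.Play} :
    IsOpen W ↔ ∀ x ∈ W, ∃ n, ∀ y : G.Play, y.pos n = x.pos n → y ∈ W :=
  Iff.rfl

theorem Play.pos_eq_of_le {x y : G.Play} {n j : ℕ} (h : x.pos n = y.pos n) (hj : j ≤ n) :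
    x.pos j = y.pos j :=
  thread_eq_of_le x.parent_pos y.parent_pos h hj

theorem exists_play_through {n : ℕ} (q : G.Pos n) : ∃ x : G.Play, x.pos n = q := by
  obtain ⟨p, hp, hq⟩ := exists_thread_through G.parent (fun i _ => G.surjective_parent i) q
  exact ⟨⟨p, hp⟩, hq⟩

/-- The ancestor at level `j` of a position of level `n`, read off some play through it;
it is meaningful for `j ≤ n` only. -/
noncomputable def trunc (j : ℕ) {n : ℕ} (q : G.Pos n) : G.Pos j :=
  (exists_play_through q).choose.pos j

@[simp]
theorem trunc_self {n : ℕ} (q : G.Pos n) : trunc n q = q :=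
  (exists_play_through q).choose_spec

theorem trunc_pos (x : G.Play) {j n : ℕ} (h : j ≤ n) : trunc j (x.pos n) = x.pos j :=
  Play.pos_eq_of_le (exists_play_through (x.pos n)).choose_spec h

theorem trunc_trunc {i j n : ℕ} (q : G.Pos n) (hij : i ≤ j) :
    trunc i (trunc j q) = trunc i q :=
  trunc_pos (exists_play_through q).choose hij

theorem trunc_parent {j n : ℕ} (q : G.Pos (n + 1)) (h : j ≤ n) :
    trunc j (G.parent n q) = trunc j q := by
  obtain ⟨x, rfl⟩ := exists_play_through q
  rw [x.parent_pos, trunc_pos x h, trunc_pos x (by omega)]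

end Positions

/-- A covering of `G` by `H` in the sense of Martin's proof of Borel determinacy: positions of `H`
project to positions of `G` (bijectively up to level `k`), and strategies for `H` project to
strategies for `G` in such a way that every play following the projected strategy lifts to a play
following the original one. -/
structure Covering (H G : GameTree.{u}) (k : ℕ) where
  toPos : ∀ n, H.Pos n → G.Pos n
  toPos_parent : ∀ n p, toPos n (H.parent n p) = G.parent n (toPos (n + 1) p)
  bijective_toPos : ∀ n, n ≤ k → Function.Bijective (toPos n)
  strat : Bool → H.Strategy → G.Strategy
  strat_congr : ∀ b s s' n, (∀ m, m ≤ n → s.move m = s'.move m) →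
    (strat b s).move n = (strat b s').move n
  strat_toPos : ∀ b s n, n + 1 ≤ k → ∀ p,
    (strat b s).move n (toPos n p) = toPos (n + 1) (s.move n p)
  exists_lift : ∀ b s (x : G.Play), x.Follows b (strat b s) →
    ∃ y : H.Play, y.Follows b s ∧ ∀ n, toPos n (y.pos n) = x.pos n

namespace Covering

variable {H G F : GameTree.{u}} {k l : ℕ}

/-- The projection of plays. -/
def mapPlay (c : Covering H G k) (y : H.Play) : G.Play :=
  ⟨fun n => c.toPos n (y.pos n), fun n => by rw [← c.toPos_parent, y.parent_pos]⟩

theorem continuous_mapPlay (c : Covering H G k) : Continuous c.mapPlay := by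
  refine continuous_def.2 fun W hW x hx => ?_
  obtain ⟨n, hn⟩ := hW _ hx
  exact ⟨n, fun y hy => hn _ (congrArg (c.toPos n) hy)⟩

/-- The composition of two coverings. -/
def comp (d : Covering G F k) (c : Covering H G k) : Covering H F k where
  toPos n p := d.toPos n (c.toPos n p)
  toPos_parent n p := by rw [c.toPos_parent, d.toPos_parent]
  bijective_toPos n h := (d.bijective_toPos n h).comp (c.bijective_toPos n h)
  strat b s := d.strat b (c.strat b s)
  strat_congr b s s' n h := d.strat_congr b _ _ n fun m hm =>
    c.strat_congr b _ _ m fun m' hm' => h m' (hm'.trans hm)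
  strat_toPos b s n h p := by rw [d.strat_toPos b _ n h, c.strat_toPos b _ n h]
  exists_lift b s x hx := by
    obtain ⟨y, hy, hyx⟩ := d.exists_lift b _ x hx
    obtain ⟨z, hz, hzy⟩ := c.exists_lift b _ y hy
    exact ⟨z, hz, fun n => by rw [hzy, hyx]⟩

/-- The same covering, regarded as one that is bijective up to a smaller level. -/
def mono (c : Covering H G k) (h : l ≤ k) : Covering H G l where
  toPos := c.toPos
  toPos_parent := c.toPos_parent
  bijective_toPos n hn := c.bijective_toPos n (hn.trans h)
  strat := c.strat
  strat_congr := c.strat_congr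
  strat_toPos b s n hn := c.strat_toPos b s n (hn.trans h)
  exists_lift := c.exists_lift

end Covering

section InverseLimit

variable {G : ℕ → GameTree.{u}} {k : ℕ} (c : ∀ i, Covering (G (i + 1)) (G i) (k + i))

/-- The positions of the inverse limit of a sequence of coverings: coherent sequences of positions
of the trees `G i`. -/
@[ext]
structure LimitPos (n : ℕ) where
  proj : ∀ i, (G i).Pos n
  toPos_proj : ∀ i, (c i).toPos n (proj (i + 1)) = proj i

variable {c} in
theorem exists_limitPos {n i : ℕ} (h : n ≤ k + i) (q : (G i).Pos n) :
    ∃ p : LimitPos c n, p.proj i = q := by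
  obtain ⟨p, hp, hq⟩ := exists_thread_through (E := fun i => (G i).Pos n)
    (fun i => (c i).toPos n) (fun j hj => ((c j).bijective_toPos n (by omega)).2) q
  exact ⟨⟨p, hp⟩, hq⟩

variable {c} in
theorem limitPos_ext_of_le {n i : ℕ} (h : n ≤ k + i) {p p' : LimitPos c n}
    (hp : p.proj i = p'.proj i) : p = p' :=
  LimitPos.ext <| thread_ext p.toPos_proj p'.toPos_proj hp
    fun j hj => ((c j).bijective_toPos n (by omega)).1

/-- The inverse limit of a sequence of coverings of increasing accuracy. -/
def limit : GameTree.{u} where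
  Pos := LimitPos c
  parent n p := ⟨fun i => (G i).parent n (p.proj i), fun i => by
    rw [(c i).toPos_parent, p.toPos_proj]⟩
  surjective_parent n p := by
    obtain ⟨q, hq⟩ := (G (n + 1)).surjective_parent n (p.proj (n + 1))
    obtain ⟨p', hp'⟩ := exists_limitPos (c := c) (show n + 1 ≤ k + (n + 1) by omega) q
    exact ⟨p', limitPos_ext_of_le (show n ≤ k + (n + 1) by omega) ((congrArg _ hp').trans hq)⟩

/-- The projection of plays on the limit to `G i`. -/
def limitPlayProj (i : ℕ) (x : (limit c).Play) : (G i).Play :=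
  ⟨fun n => (x.pos n).proj i, fun n => congrArg (fun p => p.proj i) (x.parent_pos n)⟩

theorem continuous_limitPlayProj (i : ℕ) : Continuous (limitPlayProj c i) := by
  refine continuous_def.2 fun W hW x hx => ?_
  obtain ⟨n, hn⟩ := hW _ hx
  exact ⟨n, fun y hy => hn _ (congrArg (fun p => p.proj i) hy)⟩

variable {c} in
open Classical in
/-- The strategy induced on `G i` by a strategy on the limit. Only its values at the levels
`n ≤ k + i`, where positions of `G i` determine positions of the limit, are relevant. -/
noncomputable def inducedStrategy (s : (limit c).Strategy) (i : ℕ) : (G i).Strategy where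
  move n q := if h : ∃ p : LimitPos c n, p.proj i = q then (s.move n h.choose).proj i
    else (default : (G i).Strategy).move n q
  parent_move n q := by
    split_ifs with h
    · exact (congrArg (fun p => p.proj i) (s.parent_move n h.choose)).trans h.choose_spec
    · exact Strategy.parent_move _ n q

variable {c} in
theorem inducedStrategy_proj (s : (limit c).Strategy) {i n : ℕ} (h : n ≤ k + i)
    (p : LimitPos c n) : (inducedStrategy s i).move n (p.proj i) = (s.move n p).proj i := by
  have hp : ∃ p' : LimitPos c n, p'.proj i = p.proj i := ⟨p, rfl⟩
  simp only [inducedStrategy, dif_pos hp]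
  rw [limitPos_ext_of_le h hp.choose_spec]

variable {c} in
/-- The strategy on `G i` obtained by inducing one on `G (i + d)` and projecting it down. -/
noncomputable def projStrategy (b : Bool) (s : (limit c).Strategy) : ℕ → ∀ i, (G i).Strategy
  | 0 => inducedStrategy s
  | d + 1 => fun i => (c i).strat b (projStrategy b s d (i + 1))

variable {c} {b : Bool}

theorem projStrategy_congr {s s' : (limit c).Strategy} {n : ℕ}
    (h : ∀ m, m ≤ n → s.move m = s'.move m) (d i m : ℕ) (hm : m ≤ n) :
    (projStrategy b s d i).move m = (projStrategy b s' d i).move m := by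
  induction d generalizing i m with
  | zero => simp only [projStrategy, inducedStrategy, h m hm]
  | succ d ih => exact (c i).strat_congr b _ _ m fun m' hm' => ih (i + 1) m' (hm'.trans hm)

theorem projStrategy_succ (s : (limit c).Strategy) (d : ℕ) {i n : ℕ} (h : n + 1 ≤ k + i + d) :
    (projStrategy b s (d + 1) i).move n = (projStrategy b s d i).move n := by
  induction d generalizing i n with
  | zero =>
    funext q
    obtain ⟨p, rfl⟩ := exists_limitPos (c := c) (show n ≤ k + i by omega) q
    calc ((c i).strat b (inducedStrategy s (i + 1))).move n (p.proj i)
      _ = ((c i).strat b (inducedStrategy s (i + 1))).move n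
            ((c i).toPos n (p.proj (i + 1))) := by rw [p.toPos_proj]
      _ = (c i).toPos (n + 1) ((s.move n p).proj (i + 1)) := by
        rw [(c i).strat_toPos b _ n (by omega), inducedStrategy_proj s (by omega)]
      _ = (inducedStrategy s i).move n (p.proj i) := by
        rw [inducedStrategy_proj s (by omega)]
        exact (s.move n p).toPos_proj i
  | succ d ih => exact (c i).strat_congr b _ _ n fun m hm => ih (by omega)

theorem projStrategy_eq_of_le (s : (limit c).Strategy) {d e i n : ℕ} (hde : d ≤ e)
    (h : n + 1 ≤ k + i + d) :
    (projStrategy b s e i).move n = (projStrategy b s d i).move n := by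
  induction e, hde using Nat.le_induction with
  | base => rfl
  | succ e _ ih => rw [projStrategy_succ s e (by omega), ih]

/-- The strategy on `G i` to which `projStrategy b s d i` stabilizes, level by level, as `d`
grows. -/
noncomputable def limitStrategy (b : Bool) (s : (limit c).Strategy) (i : ℕ) : (G i).Strategy where
  move n := (projStrategy b s (n + 1) i).move n
  parent_move n := (projStrategy b s (n + 1) i).parent_move n

theorem limitStrategy_proj (s : (limit c).Strategy) {i n : ℕ} (h : n + 1 ≤ k + i)
    (p : LimitPos c n) : (limitStrategy b s i).move n (p.proj i) = (s.move n p).proj i := by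
  rw [← inducedStrategy_proj s (by omega) p]
  exact congrFun (projStrategy_eq_of_le s (Nat.zero_le (n + 1)) h) _

theorem strat_limitStrategy (s : (limit c).Strategy) (i : ℕ) :
    (c i).strat b (limitStrategy b s (i + 1)) = limitStrategy b s i := by
  ext1
  funext n
  refine Eq.trans ?_ (projStrategy_succ s (n + 1) (by omega))
  exact (c i).strat_congr b _ _ n fun m hm =>
    (projStrategy_eq_of_le s (by omega) (by omega)).symm

theorem exists_limitPlay_lift (s : (limit c).Strategy) {x : (G 0).Play}
    (hx : x.Follows b (limitStrategy b s 0)) :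
    ∃ y : (limit c).Play, y.Follows b s ∧ ∀ n, (y.pos n).proj 0 = x.pos n := by
  have lift_one : ∀ i (y : {y : (G i).Play // y.Follows b (limitStrategy b s i)}),
      ∃ z : {z : (G (i + 1)).Play // z.Follows b (limitStrategy b s (i + 1))},
        ∀ n, (c i).toPos n (z.1.pos n) = y.1.pos n := by
    rintro i ⟨y, hy⟩
    obtain ⟨z, hz, hzy⟩ :=
      (c i).exists_lift b (limitStrategy b s (i + 1)) y (by rwa [strat_limitStrategy])
    exact ⟨⟨z, hz⟩, hzy⟩
  choose lift toPos_lift using lift_one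
  let z : ∀ i, {y : (G i).Play // y.Follows b (limitStrategy b s i)} :=
    fun i => Nat.rec ⟨x, hx⟩ lift i
  let y : ∀ n, LimitPos c n := fun n =>
    ⟨fun i => (z i).1.pos n, fun i => toPos_lift i (z i) n⟩
  refine ⟨⟨y, fun n => ?_⟩, fun n hn => ?_, fun n => rfl⟩
  · exact LimitPos.ext (funext fun i => (z i).1.parent_pos n)
  · apply limitPos_ext_of_le (i := n + 1) (by omega)
    exact ((z (n + 1)).2 n hn).trans (limitStrategy_proj s (by omega) (y n))

variable (c) in
/-- The covering of `G 0` by the inverse limit. -/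
noncomputable def limitCovering : Covering (limit c) (G 0) k where
  toPos _ p := p.proj 0
  toPos_parent _ _ := rfl
  bijective_toPos _ h := ⟨fun _ _ => limitPos_ext_of_le h, exists_limitPos h⟩
  strat b s := limitStrategy b s 0
  strat_congr _ _ _ n h := projStrategy_congr h (n + 1) 0 n le_rfl
  strat_toPos _ s _ h p := limitStrategy_proj s h p
  exists_lift _ s _ hx := exists_limitPlay_lift s hx

end InverseLimit

end GameTree

/-! ## Forcing in game trees -/

namespace GameTree

section Forcing

variable {G : GameTree.{u}}

/-- A set of positions, given level by level. -/
abbrev PosSet (G : GameTree.{u}) := ∀ n, Set (G.Pos n)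

/-- Some position at or before `q` belongs to `A`. -/
def Meets (A : G.PosSet) {n : ℕ} (q : G.Pos n) : Prop :=
  ∃ j ≤ n, trunc j q ∈ A j

/-- The first position at or before `q` that belongs to `A`; it is meaningful only if
`Meets A q`. -/
noncomputable def firstHit (A : G.PosSet) {n : ℕ} (q : G.Pos n) : Σ m, G.Pos m :=
  ⟨_, trunc (sInf {j | j ≤ n ∧ trunc j q ∈ A j}) q⟩

theorem meets_pos {A : G.PosSet} {x : G.Play} {n : ℕ} :
    Meets A (x.pos n) ↔ ∃ j ≤ n, x.pos j ∈ A j :=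
  exists_congr fun _ => and_congr_right fun hj => by rw [trunc_pos x hj]

theorem firstHit_pos {A : G.PosSet} {x : G.Play} {m n : ℕ} (hm : x.pos m ∈ A m)
    (hfirst : ∀ j < m, x.pos j ∉ A j) (hmn : m ≤ n) :
    firstHit A (x.pos n) = ⟨m, x.pos m⟩ := by
  have hmem : m ∈ {j | j ≤ n ∧ trunc j (x.pos n) ∈ A j} := ⟨hmn, by rwa [trunc_pos x hmn]⟩
  have hinf : sInf {j | j ≤ n ∧ trunc j (x.pos n) ∈ A j} = m := by
    refine le_antisymm (Nat.sInf_le hmem) (not_lt.1 fun hlt => hfirst _ hlt ?_)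
    obtain ⟨hle, hA⟩ := Nat.sInf_mem ⟨m, hmem⟩
    rwa [trunc_pos x hle] at hA
  rw [firstHit, hinf, trunc_pos x hmn]

theorem Play.exists_first {A : G.PosSet} {x : G.Play} (h : ∃ n, x.pos n ∈ A n) :
    ∃ m, x.pos m ∈ A m ∧ ∀ j < m, x.pos j ∉ A j := by
  classical
  exact ⟨Nat.find h, Nat.find_spec h, fun j hj => Nat.find_min h hj⟩

/-- From level `n` on, the player `b` follows `σ` in `x` until `U` is met. -/
def Play.FollowsUntil (x : G.Play) (b : Bool) (σ : G.Strategy) (U : G.PosSet) (n : ℕ) : Prop :=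
  ∀ m, n ≤ m → Nat.bodd m = b → ¬ Meets U (x.pos m) → x.pos (m + 1) = σ.move m (x.pos m)

/-- From level `n` on, the play `x` reaches `U` without leaving `S`. -/
def Play.ReachesWithin (x : G.Play) (S U : G.PosSet) (n : ℕ) : Prop :=
  ∃ m, x.pos m ∈ U m ∧ ∀ j, n < j → j ≤ m → x.pos j ∈ S j

/-- The player `b` can force every play through `q` to reach `U` without leaving `S`. -/
def Forces (b : Bool) (S U : G.PosSet) {n : ℕ} (q : G.Pos n) : Prop :=
  ∃ σ : G.Strategy, ∀ x : G.Play, x.pos n = q → x.FollowsUntil b σ U n → x.ReachesWithin S U n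

variable {b : Bool} {S U : G.PosSet} {n : ℕ}

theorem forces_of_mem {q : G.Pos n} (h : q ∈ U n) : Forces b S U q := by
  refine ⟨default, fun x hx _ => ⟨n, hx ▸ h, fun j h₁ h₂ => ?_⟩⟩
  omega

theorem Play.ReachesWithin.of_succ {x : G.Play} (h : x.ReachesWithin S U (n + 1))
    (hS : x.pos (n + 1) ∈ S (n + 1)) : x.ReachesWithin S U n := by
  obtain ⟨m, hm, hmS⟩ := h
  refine ⟨m, hm, fun j h₁ h₂ => ?_⟩
  rcases Nat.eq_or_lt_of_le (Nat.succ_le_of_lt h₁) with rfl | h₁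
  exacts [hS, hmS j h₁ h₂]

theorem Play.reachesWithin_of_meets {x : G.Play} (h : Meets U (x.pos n)) :
    x.ReachesWithin S U n := by
  obtain ⟨j, hj, hU⟩ := meets_pos.1 h
  exact ⟨j, hU, fun i h₁ h₂ => by omega⟩

theorem Play.FollowsUntil.congr {x : G.Play} {σ τ : G.Strategy} (h : x.FollowsUntil b σ U n)
    (hστ : ∀ m, n ≤ m → σ.move m (x.pos m) = τ.move m (x.pos m)) : x.FollowsUntil b τ U n :=
  fun m hm hb hU => (h m hm hb hU).trans (hστ m hm)

theorem Play.FollowsUntil.mono {x : G.Play} {σ : G.Strategy} {m : ℕ}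
    (h : x.FollowsUntil b σ U n) (hm : n ≤ m) : x.FollowsUntil b σ U m :=
  fun i hi => h i (hm.trans hi)

theorem forces_of_own_move (hb : Nat.bodd n = b) {c : G.Pos (n + 1)} (hcS : c ∈ S (n + 1))
    (hc : Forces b S U c) : Forces b S U (G.parent n c) := by
  classical
  obtain ⟨σ, hσ⟩ := hc
  obtain ⟨z, hz⟩ := exists_play_through c
  let τ : G.Strategy :=
    { move := fun m p => if m ≤ n ∧ p = z.pos m then z.pos (m + 1) else σ.move m p
      parent_move := fun m p => by
        split_ifs with h
        · rw [h.2, z.parent_pos]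
        · exact σ.parent_move m p }
  refine ⟨τ, fun x hx hτ => ?_⟩
  by_cases hU : Meets U (x.pos n)
  · exact Play.reachesWithin_of_meets hU
  have hxz : x.pos n = z.pos n := by rw [hx, ← hz, z.parent_pos]
  have hxc : x.pos (n + 1) = c := by
    rw [hτ n le_rfl hb hU, ← hz]
    exact if_pos ⟨le_rfl, hxz⟩
  refine (hσ x hxc ?_).of_succ (hxc ▸ hcS)
  exact (hτ.mono n.le_succ).congr fun m hm => if_neg fun h => by omega

theorem forces_of_forall_child {q : G.Pos n}
    (hq : ∀ c, G.parent n c = q → c ∈ S (n + 1) ∧ Forces b S U c) : Forces b S U q := by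
  choose! σ hσ using fun c hc => (hq c hc).2
  let τ : G.Strategy :=
    { move := fun m p => (σ (trunc (n + 1) p)).move m p
      parent_move := fun m p => Strategy.parent_move _ m p }
  refine ⟨τ, fun x hx hτ => ?_⟩
  have hc : G.parent n (x.pos (n + 1)) = q := by rw [x.parent_pos, hx]
  refine (hσ _ hc x rfl ?_).of_succ (hq _ hc).1
  exact (hτ.mono n.le_succ).congr fun m hm => by simp only [τ, trunc_pos x hm]

/-- The positions of level at least `l` from which the player `b` can force `U` within `S`. -/
def forcing (b : Bool) (S U : G.PosSet) (l : ℕ) : G.PosSet :=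
  fun n => {q | l ≤ n ∧ Forces b S U q}

theorem exists_attack (b : Bool) (S U : G.PosSet) (l : ℕ) :
    ∃ τ : G.Strategy, ∀ (x : G.Play) (w : ℕ), x.pos w ∈ forcing b S U l w →
      (∀ j < w, x.pos j ∉ forcing b S U l j) → x.FollowsUntil b τ U w →
      x.ReachesWithin S U w := by
  classical
  have hstrat : ∀ w : Σ n, G.Pos n, ∃ σ : G.Strategy, w.2 ∈ forcing b S U l w.1 →
      ∀ x : G.Play, x.pos w.1 = w.2 → x.FollowsUntil b σ U w.1 → x.ReachesWithin S U w.1 := by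
    intro w
    by_cases hw : w.2 ∈ forcing b S U l w.1
    · obtain ⟨σ, hσ⟩ := hw.2
      exact ⟨σ, fun _ => hσ⟩
    · exact ⟨default, fun h => absurd h hw⟩
  choose σ hσ using hstrat
  refine ⟨⟨fun n q => (σ (firstHit (forcing b S U l) q)).move n q,
    fun n q => Strategy.parent_move _ n q⟩, fun x w hw hfirst hx => ?_⟩
  refine hσ ⟨w, x.pos w⟩ hw x rfl (hx.congr fun m hm => ?_)
  simp only [firstHit_pos hw hfirst hm]

/-- A strategy that realizes what the player `b` can force, from the first position of
`forcing b S U l` on. -/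
noncomputable def attack (b : Bool) (S U : G.PosSet) (l : ℕ) : G.Strategy :=
  (exists_attack b S U l).choose

end Forcing

end GameTree

/-! ## Martin's unravelling game -/

namespace GameTree

section Unravelling

variable {G : GameTree.{u}}

/-- `S` is a quasistrategy for player I in the game continuing a position of level `l`: it is closed
under the moves of player II and always allows player I some move. -/
def IsQuasiStrategy (S : G.PosSet) (l : ℕ) : Prop :=
  ∀ n, l ≤ n → ∀ q ∈ S n,
    (Nat.bodd n = true → ∀ q', G.parent n q' = q → q' ∈ S (n + 1)) ∧
    (Nat.bodd n = false → ∃ q', G.parent n q' = q ∧ q' ∈ S (n + 1))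

/-- Within the quasistrategy `S` of player I, `T` is a quasistrategy for player II from level `l` on
that avoids `D`. -/
structure IsAvoidingQuasiStrategy (D S T : G.PosSet) (l : ℕ) : Prop where
  subset : ∀ n, l ≤ n → T n ⊆ S n
  notMem : ∀ n, l ≤ n → ∀ q ∈ T n, q ∉ D n
  exists_child : ∀ n, l ≤ n → ∀ q ∈ T n, Nat.bodd n = true →
    ∃ q', G.parent n q' = q ∧ q' ∈ T (n + 1)
  child_mem : ∀ n, l ≤ n → ∀ q ∈ T n, Nat.bodd n = false →
    ∀ q', G.parent n q' = q → q' ∈ S (n + 1) → q' ∈ T (n + 1)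

/-- The claim made by player II in the unravelling game: either he commits himself to a
quasistrategy avoiding `D`, or he announces a position in `D` that the play will reach. -/
abbrev Claim (G : GameTree.{u}) := G.PosSet ⊕ Σ n, G.Pos n

variable (K : ℕ) (D : G.PosSet)

/-- The claim is admissible against the quasistrategy `S` and `q` conforms to it. -/
def Conforms (S : G.PosSet) {n : ℕ} (q : G.Pos n) : G.Claim → Prop
  | .inl T => IsAvoidingQuasiStrategy D S T (K + 2) ∧ ∀ j, K + 2 ≤ j → j ≤ n → trunc j q ∈ T j
  | .inr u => K + 2 ≤ u.1 ∧ u.2 ∈ D u.1 ∧ (∀ j, K + 1 ≤ j → j ≤ u.1 → trunc j u.2 ∈ S j) ∧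
      ∀ j, j ≤ n → j ≤ u.1 → trunc j q = trunc j u.2

/-- The positions of the unravelling game of the open set of plays meeting `D`. Player I adds a
quasistrategy to his move at level `K`, player II adds a claim to his move at level `K + 1`; from
then on both are bound by these. -/
@[ext]
structure UnravelPos (n : ℕ) where
  pos : G.Pos n
  sys : K < n → G.PosSet
  claim : K + 1 < n → G.Claim
  isQuasiStrategy : ∀ h, IsQuasiStrategy (sys h) (K + 1)
  trunc_mem : ∀ h, trunc (K + 1) pos ∈ sys h (K + 1)
  conforms : ∀ h, Conforms K D (sys (Nat.lt_of_succ_lt h)) pos (claim h)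

/-- The condition for `q`, `S` and `c` to make up a position of the unravelling game. -/
def Annotates {n : ℕ} (q : G.Pos n) (S : G.PosSet) (c : G.Claim) : Prop :=
  (K < n → IsQuasiStrategy S (K + 1) ∧ trunc (K + 1) q ∈ S (K + 1)) ∧
    (K + 1 < n → Conforms K D S q c)

variable {K D}

/-- The position of the unravelling game at `q` with constant annotations `S` and `c`. -/
def Annotates.toUnravelPos {n : ℕ} {q : G.Pos n} {S : G.PosSet} {c : G.Claim}
    (h : Annotates K D q S c) : UnravelPos K D n :=
  ⟨q, fun _ => S, fun _ => c, fun hn => (h.1 hn).1, fun hn => (h.1 hn).2, fun hn => h.2 hn⟩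

theorem UnravelPos.annotates {n : ℕ} (p : UnravelPos K D n) {S : G.PosSet} {c : G.Claim}
    (hS : ∀ h, p.sys h = S) (hc : ∀ h, p.claim h = c) : Annotates K D p.pos S c := by
  refine ⟨fun h => ?_, fun h => ?_⟩
  · rw [← hS h]
    exact ⟨p.isQuasiStrategy h, p.trunc_mem h⟩
  · rw [← hS (by omega), ← hc h]
    exact p.conforms h

theorem UnravelPos.ext_of_annotation {n : ℕ} {p : UnravelPos K D n} {q : G.Pos n} {S : G.PosSet}
    {c : G.Claim} (h : Annotates K D q S c) (hpos : p.pos = q) (hS : ∀ h, p.sys h = S)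
    (hc : ∀ h, p.claim h = c) : p = h.toUnravelPos :=
  UnravelPos.ext hpos (funext hS) (funext hc)

theorem Conforms.of_parent {S : G.PosSet} {n : ℕ} {q : G.Pos (n + 1)} {c : G.Claim}
    (h : Conforms K D S q c) : Conforms K D S (G.parent n q) c := by
  cases c with
  | inl T => exact ⟨h.1, fun j h₁ h₂ => by rw [trunc_parent q h₂]; exact h.2 j h₁ (by omega)⟩
  | inr u =>
    exact ⟨h.1, h.2.1, h.2.2.1, fun j h₁ h₂ => by
      rw [trunc_parent q h₁]; exact h.2.2.2 j (by omega) h₂⟩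

theorem trunc_eq_parent {n : ℕ} (q : G.Pos (n + 1)) : trunc n q = G.parent n q := by
  rw [← trunc_parent q le_rfl, trunc_self]

theorem exists_conforming_child {S : G.PosSet} (hS : IsQuasiStrategy S (K + 1)) {n : ℕ}
    (hn : K + 2 ≤ n) {q : G.Pos n} {c : G.Claim} (h : Conforms K D S q c) :
    ∃ q', G.parent n q' = q ∧ Conforms K D S q' c := by
  cases c with
  | inl T =>
    obtain ⟨hT, hq⟩ := h
    have hqT : q ∈ T n := by simpa only [trunc_self] using hq n hn le_rfl
    obtain ⟨q', rfl, hq'⟩ : ∃ q', G.parent n q' = q ∧ q' ∈ T (n + 1) := by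
      cases hb : Nat.bodd n with
      | true => exact hT.exists_child n hn q hqT hb
      | false =>
        obtain ⟨q', hq', hqS⟩ := (hS n (by omega) q (hT.subset n hn hqT)).2 hb
        exact ⟨q', hq', hT.child_mem n hn q hqT hb q' hq' hqS⟩
    refine ⟨q', rfl, hT, fun j h₁ h₂ => ?_⟩
    rcases h₂.eq_or_lt with rfl | h₂
    · rwa [trunc_self]
    · rw [← trunc_parent q' (Nat.le_of_lt_succ h₂)]
      exact hq j h₁ (Nat.le_of_lt_succ h₂)
  | inr u =>
    obtain ⟨hu, huD, huS, hq⟩ := h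
    rcases Nat.lt_or_ge n u.1 with hnu | hnu
    · have hparent : G.parent n (trunc (n + 1) u.2) = q := by
        rw [← trunc_eq_parent, trunc_trunc _ n.le_succ, ← hq n le_rfl hnu.le, trunc_self]
      exact ⟨trunc (n + 1) u.2, hparent, hu, huD, huS, fun j h₁ _ => trunc_trunc _ h₁⟩
    · obtain ⟨q', rfl⟩ := G.surjective_parent n q
      exact ⟨q', rfl, hu, huD, huS, fun j _ h₂ => by
        rw [← trunc_parent q' (by omega)]; exact hq j (by omega) h₂⟩

theorem isQuasiStrategy_univ (l : ℕ) : IsQuasiStrategy (fun n => (univ : Set (G.Pos n))) l :=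
  fun n _ q _ => ⟨fun _ _ _ => mem_univ _, fun _ =>
    (G.surjective_parent n q).imp fun _ h => ⟨h, mem_univ _⟩⟩

/-- If no position in `D` can be reached within `S`, all of `S` avoids `D`. -/
theorem exists_claim (hK : Nat.bodd K = false) {S : G.PosSet} (hS : IsQuasiStrategy S (K + 1))
    {q : G.Pos (K + 1)} (hq : q ∈ S (K + 1)) :
    ∃ (q' : G.Pos (K + 2)) (c : G.Claim), G.parent (K + 1) q' = q ∧ Conforms K D S q' c := by
  have hodd : Nat.bodd (K + 1) = true := by simp [hK]
  by_cases h : ∃ u : Σ n, G.Pos n, K + 2 ≤ u.1 ∧ u.2 ∈ D u.1 ∧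
      (∀ j, K + 1 ≤ j → j ≤ u.1 → trunc j u.2 ∈ S j) ∧ trunc (K + 1) u.2 = q
  · obtain ⟨u, hu, huD, huS, rfl⟩ := h
    refine ⟨trunc (K + 2) u.2, .inr u, ?_, hu, huD, huS, fun j h₁ _ => trunc_trunc _ h₁⟩
    rw [← trunc_eq_parent, trunc_trunc _ (Nat.le_succ _)]
  · let T : G.PosSet := fun n =>
      {p | (∀ j, K + 1 ≤ j → j ≤ n → trunc j p ∈ S j) ∧ trunc (K + 1) p = q}
    have hTS : ∀ n, K + 1 ≤ n → T n ⊆ S n := fun n hn p hp => by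
      simpa only [trunc_self] using hp.1 n hn le_rfl
    have hchild : ∀ n, K + 1 ≤ n → ∀ p ∈ T n, ∀ p', G.parent n p' = p → p' ∈ S (n + 1) →
        p' ∈ T (n + 1) := by
      rintro n hn _ hp p' rfl hp'
      refine ⟨fun j h₁ h₂ => ?_, by rw [← trunc_parent p' hn, hp.2]⟩
      rcases h₂.eq_or_lt with rfl | h₂
      · rwa [trunc_self]
      · rw [← trunc_parent p' (Nat.le_of_lt_succ h₂)]
        exact hp.1 j h₁ (Nat.le_of_lt_succ h₂)
    have hT : IsAvoidingQuasiStrategy D S T (K + 2) :=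
      { subset := fun n hn => hTS n (by omega)
        notMem := fun n hn p hp hpD => h ⟨⟨n, p⟩, hn, hpD, hp.1, hp.2⟩
        exists_child := fun n hn p hp hb => (G.surjective_parent n p).imp fun p' hp' =>
          ⟨hp', hchild n (by omega) p hp p' hp' ((hS n (by omega) p
            (hTS n (by omega) hp)).1 hb p' hp')⟩
        child_mem := fun n hn p hp _ => hchild n (by omega) p hp }
    obtain ⟨q', hq'⟩ := G.surjective_parent (K + 1) q
    have hqT : q ∈ T (K + 1) := by
      refine ⟨fun j h₁ h₂ => ?_, trunc_self q⟩
      obtain rfl : j = K + 1 := le_antisymm h₂ h₁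
      rwa [trunc_self]
    refine ⟨q', .inl T, hq', hT, fun j h₁ h₂ => ?_⟩
    obtain rfl : j = K + 2 := le_antisymm h₂ h₁
    rw [trunc_self]
    exact hchild _ le_rfl q hqT q' hq' ((hS _ le_rfl q hq).1 hodd q' hq')

end Unravelling

section UnravellingTree

variable {G : GameTree.{u}} {K : ℕ} {D : G.PosSet}

theorem annotates_of_le {n : ℕ} (hn : n ≤ K) (q : G.Pos n) (S : G.PosSet) (c : G.Claim) :
    Annotates K D q S c :=
  ⟨fun _ => by omega, fun _ => by omega⟩

theorem annotates_succ {q : G.Pos (K + 1)} {S : G.PosSet} (hS : IsQuasiStrategy S (K + 1))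
    (hq : q ∈ S (K + 1)) (c : G.Claim) : Annotates K D q S c :=
  ⟨fun _ => ⟨hS, by rwa [trunc_self]⟩, fun _ => by omega⟩

theorem UnravelPos.exists_annotation {n : ℕ} (p : UnravelPos K D n) :
    ∃ (S : G.PosSet) (c : G.Claim), (∀ h, p.sys h = S) ∧ ∀ h, p.claim h = c := by
  have hsys : ∃ S : G.PosSet, ∀ h, p.sys h = S := by
    by_cases h : K < n
    exacts [⟨p.sys h, fun _ => rfl⟩, ⟨default, fun h' => absurd h' h⟩]
  have hclaim : ∃ c : G.Claim, ∀ h, p.claim h = c := by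
    by_cases h : K + 1 < n
    exacts [⟨p.claim h, fun _ => rfl⟩, ⟨.inl default, fun h' => absurd h' h⟩]
  exact ⟨_, _, hsys.choose_spec, hclaim.choose_spec⟩

theorem Annotates.exists_child (hK : Nat.bodd K = false) {n : ℕ} {q : G.Pos n} {S : G.PosSet}
    {c : G.Claim} (h : Annotates K D q S c) :
    ∃ (q' : G.Pos (n + 1)) (S' : G.PosSet) (c' : G.Claim), G.parent n q' = q ∧
      Annotates K D q' S' c' ∧ (K < n → S' = S) ∧ (K + 1 < n → c' = c) := by
  rcases lt_trichotomy n K with hn | rfl | hn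
  · obtain ⟨q', hq'⟩ := G.surjective_parent n q
    exact ⟨q', S, c, hq', annotates_of_le hn _ _ _, fun _ => rfl, fun _ => rfl⟩
  · obtain ⟨q', hq'⟩ := G.surjective_parent n q
    exact ⟨q', fun _ => univ, c, hq', annotates_succ (isQuasiStrategy_univ _) (mem_univ _) _,
      fun h => absurd h (lt_irrefl _), fun _ => rfl⟩
  obtain ⟨hS, hqS⟩ := h.1 hn
  have annotates_child : ∀ {q' : G.Pos (n + 1)} {c'}, G.parent n q' = q →
      Conforms K D S q' c' → Annotates K D q' S c' := by
    rintro q' c' rfl hc'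
    exact ⟨fun _ => ⟨hS, by rwa [← trunc_parent q' hn]⟩, fun _ => hc'⟩
  rcases (Nat.succ_le_of_lt hn).eq_or_lt with rfl | hn'
  · rw [trunc_self] at hqS
    obtain ⟨q', c', hq', hc'⟩ := exists_claim (D := D) hK hS hqS
    exact ⟨q', S, c', hq', annotates_child hq' hc', fun _ => rfl, fun h => by omega⟩
  · obtain ⟨q', hq', hc'⟩ := exists_conforming_child hS hn' (h.2 hn')
    exact ⟨q', S, c, hq', annotates_child hq' hc', fun _ => rfl, fun _ => rfl⟩

/-- The previous position, with the annotations restricted to it. -/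
def UnravelPos.parent {n : ℕ} (p : UnravelPos K D (n + 1)) : UnravelPos K D n where
  pos := G.parent n p.pos
  sys h := p.sys (by omega)
  claim h := p.claim (by omega)
  isQuasiStrategy h := p.isQuasiStrategy _
  trunc_mem h := by rw [trunc_parent p.pos h]; exact p.trunc_mem _
  conforms h := (p.conforms _).of_parent

/-- Martin's unravelling game of the open set of plays meeting `D`. -/
abbrev unravel (D : G.PosSet) (hK : Nat.bodd K = false) : GameTree.{u} where
  Pos := UnravelPos K D
  parent _ p := p.parent
  surjective_parent n p := by
    obtain ⟨S, c, hS, hc⟩ := p.exists_annotation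
    obtain ⟨q', S', c', hq', h, hS', hc'⟩ := (p.annotates hS hc).exists_child hK
    refine ⟨h.toUnravelPos, UnravelPos.ext hq' (funext fun hn => ?_) (funext fun hn => ?_)⟩
    exacts [(hS' hn).trans (hS hn).symm, (hc' hn).trans (hc hn).symm]

open Classical in
/-- The move underlying the answer of `f` to the position `(q, S, c)` of the unravelling game. -/
noncomputable def answer {n : ℕ} (f : UnravelPos K D n → UnravelPos K D (n + 1)) (q : G.Pos n)
    (S : G.PosSet) (c : G.Claim) : G.Pos (n + 1) :=
  if h : Annotates K D q S c then (f h.toUnravelPos).pos else (default : G.Strategy).move n q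

/-- The quasistrategy that `f` chooses at `q`. -/
def sysOf (f : UnravelPos K D K → UnravelPos K D (K + 1)) (q : G.Pos K) : G.PosSet :=
  (f (annotates_of_le le_rfl q default (.inl default)).toUnravelPos).sys K.lt_succ_self

open Classical in
/-- The claim that `f` makes at `(q, S)`. -/
noncomputable def claimOf (f : UnravelPos K D (K + 1) → UnravelPos K D (K + 2))
    (q : G.Pos (K + 1)) (S : G.PosSet) : G.Claim :=
  if h : Annotates K D q S (.inl default) then
    (f h.toUnravelPos).claim (Nat.lt_succ_self _) else .inl default

theorem toUnravelPos_congr {n : ℕ} {q : G.Pos n} {S S' : G.PosSet} {c c' : G.Claim}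
    (h : Annotates K D q S c) (h' : Annotates K D q S' c') (hS : K < n → S = S')
    (hc : K + 1 < n → c = c') : h.toUnravelPos = h'.toUnravelPos :=
  UnravelPos.ext_of_annotation h' rfl hS hc

theorem answer_of_annotates {n : ℕ} {f : UnravelPos K D n → UnravelPos K D (n + 1)} {q : G.Pos n}
    {S : G.PosSet} {c : G.Claim} (h : Annotates K D q S c) :
    answer f q S c = (f h.toUnravelPos).pos :=
  dif_pos h

theorem answer_of_le {n : ℕ} (hn : n ≤ K) {f : UnravelPos K D n → UnravelPos K D (n + 1)}
    {q : G.Pos n} {S S' : G.PosSet} {c c' : G.Claim} : answer f q S c = answer f q S' c' := by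
  rw [answer_of_annotates (annotates_of_le hn q S c),
    answer_of_annotates (annotates_of_le hn q S' c')]
  congr 2
  exact toUnravelPos_congr _ _ (fun _ => by omega) (fun _ => by omega)

theorem isQuasiStrategy_sysOf (f : UnravelPos K D K → UnravelPos K D (K + 1)) (q : G.Pos K) :
    IsQuasiStrategy (sysOf f q) (K + 1) :=
  UnravelPos.isQuasiStrategy _ _

theorem answer_mem_sysOf (f : UnravelPos K D K → UnravelPos K D (K + 1)) (q : G.Pos K)
    (S : G.PosSet) (c : G.Claim) : answer f q S c ∈ sysOf f q (K + 1) := by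
  rw [answer_of_le le_rfl (S' := default) (c' := .inl default),
    answer_of_annotates (annotates_of_le le_rfl _ _ _)]
  have := UnravelPos.trunc_mem (f (annotates_of_le le_rfl q default (.inl default)).toUnravelPos)
    K.lt_succ_self
  rwa [trunc_self] at this

variable {hK : Nat.bodd K = false} (s : (unravel D hK).Strategy)

theorem parent_strategy_move {n : ℕ} (p : UnravelPos K D n) : (s.move n p).parent = p :=
  s.parent_move n p

theorem sys_move {n : ℕ} (hn : K < n) {q : G.Pos n} {S : G.PosSet} {c : G.Claim}
    (h : Annotates K D q S c) (h' : K < n + 1) :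
    UnravelPos.sys (s.move n h.toUnravelPos) h' = S :=
  congrArg (fun p : UnravelPos K D n => p.sys hn) (parent_strategy_move s h.toUnravelPos)

theorem claim_move {n : ℕ} (hn : K + 1 < n) {q : G.Pos n} {S : G.PosSet} {c : G.Claim}
    (h : Annotates K D q S c) (h' : K + 1 < n + 1) :
    UnravelPos.claim (s.move n h.toUnravelPos) h' = c :=
  congrArg (fun p : UnravelPos K D n => p.claim hn) (parent_strategy_move s h.toUnravelPos)

theorem sysOf_eq {q : G.Pos K} {S : G.PosSet} {c : G.Claim} (h : Annotates K D q S c) :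
    sysOf (s.move K) q = UnravelPos.sys (s.move K h.toUnravelPos) K.lt_succ_self := by
  rw [sysOf, toUnravelPos_congr (annotates_of_le le_rfl q default _) h
    (fun _ => by omega) (fun _ => by omega)]

theorem claimOf_eq {q : G.Pos (K + 1)} {S : G.PosSet} {c : G.Claim} (h : Annotates K D q S c) :
    claimOf (s.move (K + 1)) q S =
      UnravelPos.claim (s.move (K + 1) h.toUnravelPos) (Nat.lt_succ_self _) := by
  have h₀ : Annotates K D q S (.inl default) := ⟨h.1, fun _ => by omega⟩
  rw [claimOf, dif_pos h₀, toUnravelPos_congr h₀ h (fun _ => rfl) (fun _ => by omega)]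

theorem answer_conforms {n : ℕ} (hn : K < n) {q : G.Pos n} {S : G.PosSet} {c c' : G.Claim}
    (h : Annotates K D q S c)
    (hc : UnravelPos.claim (s.move n h.toUnravelPos) (Nat.succ_lt_succ hn) = c') :
    Conforms K D S (answer (s.move n) q S c) c' := by
  have := UnravelPos.conforms (s.move n h.toUnravelPos) (Nat.succ_lt_succ hn)
  rwa [sys_move s hn, hc, ← answer_of_annotates h] at this

theorem parent_answer {n : ℕ} (q : G.Pos n) (S : G.PosSet) (c : G.Claim) :
    G.parent n (answer (s.move n) q S c) = q := by
  unfold answer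
  split_ifs with h
  · exact congrArg UnravelPos.pos (parent_strategy_move s h.toUnravelPos)
  · exact Strategy.parent_move _ n q

variable {b : Bool} {x : G.Play} {S : G.PosSet} {c : G.Claim}

theorem exists_lift_of_annotates (hx : ∀ n, Annotates K D (x.pos n) S c)
    (hmove : ∀ n, Nat.bodd n = b → x.pos (n + 1) = answer (s.move n) (x.pos n) S c)
    (hsys : Nat.bodd K = b → sysOf (s.move K) (x.pos K) = S)
    (hclaim : Nat.bodd (K + 1) = b → claimOf (s.move (K + 1)) (x.pos (K + 1)) S = c) :
    ∃ y : (unravel D hK).Play, y.Follows b s ∧ ∀ n, UnravelPos.pos (y.pos n) = x.pos n := by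
  refine ⟨⟨fun n => (hx n).toUnravelPos, fun n => ?_⟩, fun n hn => ?_, fun n => rfl⟩
  · exact UnravelPos.ext (x.parent_pos n) rfl rfl
  refine (UnravelPos.ext_of_annotation (hx (n + 1)) ?_ (fun h => ?_) fun h => ?_).symm
  · rw [hmove n hn, answer_of_annotates (hx n)]
  · rcases (Nat.le_of_lt_succ h).eq_or_lt with rfl | h'
    · rw [← sysOf_eq s (hx K), hsys hn]
    · exact sys_move s h' (hx n) h
  · rcases (Nat.le_of_lt_succ h).eq_or_lt with rfl | h'
    · rw [← claimOf_eq s (hx (K + 1)), hclaim hn]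
    · exact claim_move s h' (hx n) h

theorem exists_lift_of_reaches {m : ℕ} (hS : IsQuasiStrategy S (K + 1)) (hm : K + 2 ≤ m)
    (hD : x.pos m ∈ D m) (hxS : ∀ j, K + 1 ≤ j → j ≤ m → x.pos j ∈ S j)
    (hmove : ∀ n, n ≤ K ∨ m ≤ n → Nat.bodd n = b →
      x.pos (n + 1) = answer (s.move n) (x.pos n) S (.inr ⟨m, x.pos m⟩))
    (hsys : Nat.bodd K = b → sysOf (s.move K) (x.pos K) = S)
    (hclaim : Nat.bodd (K + 1) = b →
      claimOf (s.move (K + 1)) (x.pos (K + 1)) S = .inr ⟨m, x.pos m⟩) :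
    ∃ y : (unravel D hK).Play, y.Follows b s ∧ ∀ n, UnravelPos.pos (y.pos n) = x.pos n := by
  have hx : ∀ n, Annotates K D (x.pos n) S (.inr ⟨m, x.pos m⟩) := fun n =>
    ⟨fun hn => ⟨hS, by rw [trunc_pos x hn]; exact hxS _ le_rfl (by omega)⟩,
      fun _ => ⟨hm, hD, fun j h₁ h₂ => by rw [trunc_pos x h₂]; exact hxS j h₁ h₂,
        fun j h₁ h₂ => by rw [trunc_pos x h₁, trunc_pos x h₂]⟩⟩
  refine exists_lift_of_annotates s hx (fun n hb => ?_) hsys hclaim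
  by_cases hn : n ≤ K ∨ m ≤ n
  · exact hmove n hn hb
  obtain ⟨hKn, hnm⟩ := not_or.1 hn
  rw [not_le] at hKn hnm
  have hconf : UnravelPos.claim (s.move n (hx n).toUnravelPos) (Nat.succ_lt_succ hKn) =
      .inr ⟨m, x.pos m⟩ := by
    rcases (Nat.succ_le_of_lt hKn).eq_or_lt with rfl | hKn'
    · rw [← claimOf_eq s (hx (K + 1)), hclaim hb]
    · exact claim_move s hKn' (hx n) _
  have htrunc := (answer_conforms s hKn (hx n) hconf).2.2.2 (n + 1) le_rfl hnm
  rw [trunc_self, trunc_pos x hnm] at htrunc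
  exact htrunc.symm

theorem exists_lift_of_avoids {T : G.PosSet} (hS : IsQuasiStrategy S (K + 1))
    (hT : IsAvoidingQuasiStrategy D S T (K + 2)) (hxS : x.pos (K + 1) ∈ S (K + 1))
    (hxT : ∀ j, K + 2 ≤ j → x.pos j ∈ T j)
    (hmove : ∀ n, Nat.bodd n = b → x.pos (n + 1) = answer (s.move n) (x.pos n) S (.inl T))
    (hsys : Nat.bodd K = b → sysOf (s.move K) (x.pos K) = S)
    (hclaim : Nat.bodd (K + 1) = b → claimOf (s.move (K + 1)) (x.pos (K + 1)) S = .inl T) :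
    ∃ y : (unravel D hK).Play, y.Follows b s ∧ ∀ n, UnravelPos.pos (y.pos n) = x.pos n := by
  refine exists_lift_of_annotates s (fun n => ⟨fun hn => ?_, fun _ => ?_⟩) hmove hsys hclaim
  · exact ⟨hS, by rwa [trunc_pos x hn]⟩
  · exact ⟨hT, fun j h₁ h₂ => by rw [trunc_pos x h₂]; exact hxT j h₁⟩

end UnravellingTree

end GameTree

/-! ## Projections of strategies -/

namespace GameTree

section UnravellingCovering

variable {G : GameTree.{u}} {K : ℕ} {D : G.PosSet}

open Classical in
/-- The reply to `q` of a player who pretends that the annotations are `S₀` and `c₀`. As soon as he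
can force `U` within `R` he does so, and once `u` in `U` has been reached he takes `σ u` and the
claim `u` for the annotations. -/
noncomputable def simulate (b : Bool) (R U : G.PosSet) (σ : (Σ n, G.Pos n) → G.PosSet)
    (S₀ : G.PosSet) (c₀ : G.Claim) {n : ℕ} (f : UnravelPos K D n → UnravelPos K D (n + 1))
    (q : G.Pos n) : G.Pos (n + 1) :=
  if Meets U q then answer f q (σ (firstHit U q)) (.inr (firstHit U q))
  else if Meets (forcing b R U (K + 1)) q then (attack b R U (K + 1)).move n q
  else answer f q S₀ c₀

variable {hK : Nat.bodd K = false} (s : (unravel D hK).Strategy) {b : Bool}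
  {R U S₀ : G.PosSet} {σ : (Σ n, G.Pos n) → G.PosSet} {c₀ : G.Claim}

theorem parent_simulate {n : ℕ} (q : G.Pos n) :
    G.parent n (simulate b R U σ S₀ c₀ (s.move n) q) = q := by
  unfold simulate
  split_ifs
  exacts [parent_answer s q _ _, Strategy.parent_move _ n q, parent_answer s q _ _]

variable {x : G.Play}

theorem simulate_of_reached {m n : ℕ} (hm : x.pos m ∈ U m) (hfirst : ∀ j < m, x.pos j ∉ U j)
    (hmn : m ≤ n) : simulate b R U σ S₀ c₀ (s.move n) (x.pos n) =
      answer (s.move n) (x.pos n) (σ ⟨m, x.pos m⟩) (.inr ⟨m, x.pos m⟩) := by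
  rw [simulate, if_pos (meets_pos.2 ⟨m, hmn, hm⟩), firstHit_pos hm hfirst hmn]

theorem mem_forcing_of_mem {l n : ℕ} (hln : l ≤ n) {q : G.Pos n} (h : q ∈ U n) :
    q ∈ forcing b R U l n :=
  ⟨hln, forces_of_mem h⟩

theorem exists_reached_of_mem_forcing
    (hx : ∀ n, K < n → Nat.bodd n = b →
      x.pos (n + 1) = simulate b R U σ S₀ c₀ (s.move n) (x.pos n))
    (h : ∃ n, x.pos n ∈ forcing b R U (K + 1) n) :
    ∃ m, x.pos m ∈ U m ∧ (∀ j < m, x.pos j ∉ U j) ∧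
      ∃ w, (∀ j < w, x.pos j ∉ forcing b R U (K + 1) j) ∧
        ∀ j, w < j → j ≤ m → x.pos j ∈ R j := by
  obtain ⟨w, hw, hw_first⟩ := Play.exists_first h
  have hattack : x.FollowsUntil b (attack b R U (K + 1)) U w := fun n hn hb hnU => by
    rw [hx n (hw.1.trans hn) hb, simulate, if_neg hnU, if_pos (meets_pos.2 ⟨w, hn, hw⟩)]
  obtain ⟨m', hm', hR⟩ := (exists_attack b R U (K + 1)).choose_spec x w hw hw_first hattack
  obtain ⟨m, hm, hm_first⟩ := Play.exists_first ⟨m', hm'⟩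
  have hmm' : m ≤ m' := not_lt.1 fun hlt => hm_first m' hlt hm'
  exact ⟨m, hm, hm_first, w, hw_first, fun j h₁ h₂ => hR j h₁ (h₂.trans hmm')⟩

theorem mem_forcing_of_mem_target (hU : ∀ n, n ≤ K → U n = ∅) {n : ℕ} {q : G.Pos n} (h : q ∈ U n) :
    q ∈ forcing b R U (K + 1) n := by
  refine mem_forcing_of_mem (not_lt.1 fun hn => ?_) h
  simp [hU n (Nat.le_of_lt_succ hn)] at h

theorem simulate_of_notMem_forcing (hU : ∀ n, n ≤ K → U n = ∅) {n : ℕ}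
    (hx : ∀ j ≤ n, x.pos j ∉ forcing b R U (K + 1) j) :
    simulate b R U σ S₀ c₀ (s.move n) (x.pos n) = answer (s.move n) (x.pos n) S₀ c₀ := by
  have hforcing : ¬ Meets (forcing b R U (K + 1)) (x.pos n) := fun h => by
    obtain ⟨j, hj, hW⟩ := meets_pos.1 h
    exact hx j hj hW
  have htarget : ¬ Meets U (x.pos n) := fun h =>
    hforcing (Exists.imp (fun _ => And.imp_right (mem_forcing_of_mem_target hU)) h)
  rw [simulate, if_neg htarget, if_neg hforcing]

/-! ### Player I -/

/-- The positions of `D` that player II may announce. -/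
def lateHits (K : ℕ) (D : G.PosSet) : G.PosSet := fun n => {q | K + 2 ≤ n ∧ q ∈ D n}

/-- The positions of the quasistrategy `S` from which player I cannot force `D` within `S`. -/
def unforced (K : ℕ) (D S : G.PosSet) : G.PosSet :=
  fun n => S n \ forcing false S (lateHits K D) (K + 1) n

theorem lateHits_eq_empty {n : ℕ} (hn : n ≤ K) : lateHits K D n = ∅ :=
  eq_empty_of_forall_notMem fun _ h => by have := h.1; omega

theorem isAvoidingQuasiStrategy_unforced {S : G.PosSet} (hS : IsQuasiStrategy S (K + 1)) :
    IsAvoidingQuasiStrategy D S (unforced K D S) (K + 2) where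
  subset _ _ _ hq := hq.1
  notMem n hn q hq hD := hq.2 (mem_forcing_of_mem (by omega) ⟨hn, hD⟩)
  exists_child n hn q hq hb := by
    by_contra! h
    refine hq.2 ⟨by omega, forces_of_forall_child fun q' hq' => ?_⟩
    have hq'S := (hS n (by omega) q hq.1).1 hb q' hq'
    exact ⟨hq'S, (not_not.1 fun hW => h q' hq' ⟨hq'S, hW⟩ :
      q' ∈ forcing false S (lateHits K D) (K + 1) (n + 1)).2⟩
  child_mem n hn q hq hb q' hq' hq'S := by
    refine ⟨hq'S, fun hW => hq.2 ⟨by omega, ?_⟩⟩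
    rw [← hq']
    exact forces_of_own_move hb hq'S hW.2

/-- The projection of strategies of player I: he pretends that the claim of player II is the
quasistrategy of the positions from which he cannot force `D`. -/
noncomputable def projectI (s : (unravel D hK).Strategy) : G.Strategy where
  move n q :=
    let S := sysOf (s.move K) (trunc K q)
    if K < n then
      simulate false S (lateHits K D) (fun _ => S) S (.inl (unforced K D S)) (s.move n) q
    else answer (s.move n) q default (.inl default)
  parent_move n q := by
    dsimp only
    split_ifs
    exacts [parent_simulate s q, parent_answer s q _ _]

section

variable {s}

theorem answer_mem_of_unforced {S : G.PosSet} (hS : IsQuasiStrategy S (K + 1)) {n : ℕ}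
    (hn : K + 1 < n) (hx : ∀ j, K + 1 ≤ j → j ≤ n → x.pos j ∈ unforced K D S j) :
    answer (s.move n) (x.pos n) S (.inl (unforced K D S)) ∈ S (n + 1) := by
  have h : Annotates K D (x.pos n) S (.inl (unforced K D S)) := by
    refine ⟨fun _ => ⟨hS, ?_⟩, fun _ => ⟨isAvoidingQuasiStrategy_unforced hS, fun j h₁ h₂ => ?_⟩⟩
    · rw [trunc_pos x hn.le]
      exact (hx (K + 1) le_rfl hn.le).1
    · rw [trunc_pos x h₂]
      exact hx j (by omega) h₂
  have hconf := (answer_conforms s (by omega) h (claim_move s hn h _)).2 (n + 1) (by omega) le_rfl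
  rw [trunc_self] at hconf
  exact hconf.1

theorem Play.Follows.projectI_of_lt (hx : x.Follows false (projectI s))
    {n : ℕ} (hn : K < n) (hb : Nat.bodd n = false) :
    let S := sysOf (s.move K) (x.pos K)
    x.pos (n + 1) = simulate false S (lateHits K D) (fun _ => S) S (.inl (unforced K D S))
      (s.move n) (x.pos n) := by
  rw [hx n hb]
  simp only [projectI, if_pos hn, trunc_pos x hn.le]

theorem Play.Follows.projectI_of_le (hx : x.Follows false (projectI s))
    {n : ℕ} (hn : n ≤ K) (hb : Nat.bodd n = false)
    (S : G.PosSet) (c : G.Claim) : x.pos (n + 1) = answer (s.move n) (x.pos n) S c := by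
  rw [hx n hb]
  simp only [projectI, if_neg hn.not_gt]
  exact answer_of_le hn

theorem mem_sysOf_of_notMem_forcing (hx : x.Follows false (projectI s))
    {S : G.PosSet} (hS : S = sysOf (s.move K) (x.pos K)) {n : ℕ}
    (hW : ∀ j < n, x.pos j ∉ forcing false S (lateHits K D) (K + 1) j) :
    ∀ j, K + 1 ≤ j → j ≤ n → x.pos j ∈ S j := by
  have hSq : IsQuasiStrategy S (K + 1) := hS ▸ isQuasiStrategy_sysOf _ _
  have hbase : x.pos (K + 1) ∈ S (K + 1) := by
    rw [hx.projectI_of_le le_rfl hK S (.inl default), hS]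
    exact answer_mem_sysOf _ _ _ _
  induction n with
  | zero => intro j h₁ h₂; omega
  | succ n ih =>
    intro j h₁ h₂
    have ih := ih fun i hi => hW i (by omega)
    rcases h₂.lt_or_eq with h₂ | rfl
    · exact ih j h₁ (Nat.le_of_lt_succ h₂)
    rcases h₁.eq_or_lt with h₁ | h₁
    · obtain rfl : n = K := by omega
      exact hbase
    have hxn : x.pos n ∈ S n := ih n (by omega) le_rfl
    cases hb : Nat.bodd n with
    | true => exact (hSq n (by omega) _ hxn).1 hb _ (x.parent_pos n)
    | false =>
      have hn : K + 1 < n := by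
        refine lt_of_le_of_ne (by omega) ?_
        rintro rfl
        simp [hK] at hb
      rw [hx.projectI_of_lt (by omega) hb, ← hS, simulate_of_notMem_forcing s
        (fun _ => lateHits_eq_empty) fun i hi => hW i (by omega)]
      exact answer_mem_of_unforced hSq hn fun i h₁ h₂ => ⟨ih i (by omega) h₂, hW i (by omega)⟩

theorem Play.Follows.exists_lift_projectI (hx : x.Follows false (projectI s)) :
    ∃ y : (unravel D hK).Play, y.Follows false s ∧ ∀ n, UnravelPos.pos (y.pos n) = x.pos n := by
  obtain ⟨S, hS⟩ : ∃ S, S = sysOf (s.move K) (x.pos K) := ⟨_, rfl⟩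
  have hSq : IsQuasiStrategy S (K + 1) := hS ▸ isQuasiStrategy_sysOf _ _
  have hclaim : Nat.bodd (K + 1) ≠ false := by simp [hK]
  have hmove : ∀ n, K < n → Nat.bodd n = false → x.pos (n + 1) = _ := fun n hn hb =>
    hx.projectI_of_lt hn hb
  rw [← hS] at hmove
  by_cases h : ∃ n, x.pos n ∈ forcing false S (lateHits K D) (K + 1) n
  · obtain ⟨m, hm, hfirst, w, hw, hR⟩ :=
      exists_reached_of_mem_forcing s hmove h
    refine exists_lift_of_reaches s hSq hm.1 hm.2 (fun j h₁ h₂ => ?_) (fun n hn hb => ?_)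
      (fun _ => hS.symm) fun hb => absurd hb hclaim
    · rcases Nat.lt_or_ge w j with hj | hj
      exacts [hR j hj h₂, mem_sysOf_of_notMem_forcing hx hS hw j h₁ hj]
    · rcases Nat.lt_or_ge K n with hKn | hKn
      · rw [hmove n hKn hb, simulate_of_reached s hm hfirst (by omega)]
      · exact hx.projectI_of_le hKn hb _ _
  · have hW := not_exists.1 h
    have hxS : ∀ j, K + 1 ≤ j → x.pos j ∈ S j := fun j hj =>
      mem_sysOf_of_notMem_forcing hx hS (fun i _ => hW i) j hj le_rfl
    refine exists_lift_of_avoids s hSq (isAvoidingQuasiStrategy_unforced hSq) (hxS _ le_rfl)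
      (fun j hj => ⟨hxS j (by omega), hW j⟩) (fun n hb => ?_) (fun _ => hS.symm)
      fun hb => absurd hb hclaim
    rcases Nat.lt_or_ge K n with hKn | hKn
    · rw [hmove n hKn hb,
        simulate_of_notMem_forcing s (fun _ => lateHits_eq_empty) fun j _ => hW j]
    · exact hx.projectI_of_le hKn hb _ _

end

/-! ### Player II -/

/-- The positions that player II, using `f`, announces at `q` against some quasistrategy. -/
def announced (f : UnravelPos K D (K + 1) → UnravelPos K D (K + 2)) (q : G.Pos (K + 1)) :
    G.PosSet :=
  fun n => {u | ∃ S : G.PosSet, IsQuasiStrategy S (K + 1) ∧ q ∈ S (K + 1) ∧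
    claimOf f q S = .inr ⟨n, u⟩}

open Classical in
/-- A quasistrategy against which the position `u` is announced. -/
noncomputable def provocation (f : UnravelPos K D (K + 1) → UnravelPos K D (K + 2))
    (q : G.Pos (K + 1)) (u : Σ n, G.Pos n) : G.PosSet :=
  if h : u.2 ∈ announced f q u.1 then h.choose else default

theorem provocation_spec {f : UnravelPos K D (K + 1) → UnravelPos K D (K + 2)}
    {q : G.Pos (K + 1)} {n : ℕ} {u : G.Pos n} (h : u ∈ announced f q n) :
    IsQuasiStrategy (provocation f q ⟨n, u⟩) (K + 1) ∧ q ∈ provocation f q ⟨n, u⟩ (K + 1) ∧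
      claimOf f q (provocation f q ⟨n, u⟩) = .inr ⟨n, u⟩ := by
  simp only [provocation, dif_pos h]
  exact h.choose_spec

/-- The positions from which player II cannot force a position that he would announce. -/
def unannounced (f : UnravelPos K D (K + 1) → UnravelPos K D (K + 2)) (q : G.Pos (K + 1)) :
    G.PosSet :=
  fun n => (forcing true (fun _ => univ) (announced f q) (K + 1) n)ᶜ

theorem isQuasiStrategy_unannounced (f : UnravelPos K D (K + 1) → UnravelPos K D (K + 2))
    (q : G.Pos (K + 1)) : IsQuasiStrategy (unannounced f q) (K + 1) := by
  intro n hn p hp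
  refine ⟨fun hb p' hp' hW => hp ⟨hn, ?_⟩, fun _ => ?_⟩
  · rw [← hp']
    exact forces_of_own_move hb (mem_univ _) hW.2
  · by_contra! h
    exact hp ⟨hn, forces_of_forall_child fun p' hp' => ⟨mem_univ _, (not_not.1 (h p' hp')).2⟩⟩

theorem conforms_of_announces {q : G.Pos (K + 1)} {S : G.PosSet} (hS : IsQuasiStrategy S (K + 1))
    (hq : q ∈ S (K + 1)) {c : G.Claim} (hc : claimOf (s.move (K + 1)) q S = c) :
    Conforms K D S (answer (s.move (K + 1)) q S c) c :=
  answer_conforms s K.lt_succ_self (annotates_succ hS hq c)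
    (by rw [← claimOf_eq s (annotates_succ hS hq c), hc])

theorem announced_eq_empty {q : G.Pos (K + 1)} {n : ℕ} (hn : n ≤ K) :
    announced (s.move (K + 1)) q n = ∅ := by
  refine eq_empty_of_forall_notMem ?_
  rintro u ⟨S, hS, hq, hc⟩
  have := (conforms_of_announces s hS hq hc).1
  dsimp only at this
  omega

/-- The projection of strategies of player II: he pretends that the quasistrategy of player I is
`unannounced`. -/
noncomputable def projectII (s : (unravel D hK).Strategy) : G.Strategy where
  move n q :=
    let f := s.move (K + 1)
    let q₀ := trunc (K + 1) q
    if K < n then simulate true (fun _ => univ) (announced f q₀) (provocation f q₀)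
      (unannounced f q₀) (claimOf f q₀ (unannounced f q₀)) (s.move n) q
    else answer (s.move n) q default (.inl default)
  parent_move n q := by
    dsimp only
    split_ifs
    exacts [parent_simulate s q, parent_answer s q _ _]

section

variable {s}

theorem exists_claimOf_unannounced {q : G.Pos (K + 1)}
    (hq : q ∈ unannounced (s.move (K + 1)) q (K + 1)) :
    ∃ T : G.PosSet, claimOf (s.move (K + 1)) q (unannounced (s.move (K + 1)) q) = .inl T := by
  have hS := isQuasiStrategy_unannounced (s.move (K + 1)) q
  cases hc : claimOf (s.move (K + 1)) q (unannounced (s.move (K + 1)) q) with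
  | inl T => exact ⟨T, rfl⟩
  | inr u =>
    obtain ⟨hKu, -, huS, -⟩ := conforms_of_announces s hS hq hc
    have hu := huS u.1 (by omega) le_rfl
    rw [trunc_self] at hu
    have hmem : u.2 ∈ announced (s.move (K + 1)) q u.1 := ⟨_, hS, hq, hc⟩
    exact absurd (mem_forcing_of_mem (by omega) hmem) hu

theorem mem_of_moves_conform {S T : G.PosSet} (hS : IsQuasiStrategy S (K + 1))
    (hT : IsAvoidingQuasiStrategy D S T (K + 2)) (hxS : ∀ n, x.pos n ∈ S n)
    (hbase : x.pos (K + 2) ∈ T (K + 2))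
    (hmove : ∀ n, Nat.bodd n = true → x.pos (n + 1) = answer (s.move n) (x.pos n) S (.inl T))
    (j : ℕ) (hj : K + 2 ≤ j) : x.pos j ∈ T j := by
  induction j using Nat.strong_induction_on with
  | _ j ih =>
  rcases hj.eq_or_lt with rfl | hj
  · exact hbase
  obtain ⟨n, rfl⟩ : ∃ n, j = n + 1 := ⟨j - 1, by omega⟩
  have hn : K + 1 < n := Nat.lt_of_succ_lt_succ hj
  cases hb : Nat.bodd n with
  | true =>
    have h : Annotates K D (x.pos n) S (.inl T) :=
      ⟨fun hKn => ⟨hS, by rw [trunc_pos x hKn]; exact hxS _⟩, fun _ => ⟨hT, fun i h₁ h₂ => by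
        rw [trunc_pos x h₂]; exact ih i (by omega) h₁⟩⟩
    have hconf := (answer_conforms s (by omega) h (claim_move s hn h (by omega))).2
      (n + 1) (by omega) le_rfl
    rwa [trunc_self, ← hmove n hb] at hconf
  | false => exact hT.child_mem n hn _ (ih n n.lt_succ_self hn) hb _ (x.parent_pos n) (hxS _)

theorem Play.Follows.projectII_of_lt (hx : x.Follows true (projectII s))
    {n : ℕ} (hn : K < n) (hb : Nat.bodd n = true) :
    let f := s.move (K + 1)
    let q₀ := x.pos (K + 1)
    x.pos (n + 1) = simulate true (fun _ => univ) (announced f q₀) (provocation f q₀)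
      (unannounced f q₀) (claimOf f q₀ (unannounced f q₀)) (s.move n) (x.pos n) := by
  rw [hx n hb]
  simp only [projectII, if_pos hn, trunc_pos x (show K + 1 ≤ n from hn)]

theorem Play.Follows.projectII_of_le (hx : x.Follows true (projectII s))
    {n : ℕ} (hn : n ≤ K) (hb : Nat.bodd n = true)
    (S : G.PosSet) (c : G.Claim) : x.pos (n + 1) = answer (s.move n) (x.pos n) S c := by
  rw [hx n hb]
  simp only [projectII, if_neg hn.not_gt]
  exact answer_of_le hn

theorem Play.Follows.exists_lift_of_announced (hx : x.Follows true (projectII s))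
    (h : ∃ n, x.pos n ∈ forcing true (fun _ => univ)
      (announced (s.move (K + 1)) (x.pos (K + 1))) (K + 1) n) :
    ∃ y : (unravel D hK).Play, y.Follows true s ∧ ∀ n, UnravelPos.pos (y.pos n) = x.pos n := by
  obtain ⟨m, hm, hfirst, -⟩ :=
    exists_reached_of_mem_forcing s (fun n hn hb => hx.projectII_of_lt hn hb) h
  obtain ⟨hS, hqS, hc⟩ := provocation_spec hm
  obtain ⟨hKm, hD, hmS, -⟩ := conforms_of_announces s hS hqS hc
  replace hKm : K + 2 ≤ m := hKm
  refine exists_lift_of_reaches s hS hKm hD (fun j h₁ h₂ => ?_) (fun n hn hb => ?_)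
    (fun hb => by simp [hK] at hb) fun _ => hc
  · rw [← trunc_pos x h₂]
    exact hmS j h₁ h₂
  · rcases Nat.lt_or_ge K n with hKn | hKn
    · rw [hx.projectII_of_lt hKn hb, simulate_of_reached s hm hfirst (by omega)]
    · exact hx.projectII_of_le hKn hb _ _

theorem Play.Follows.exists_lift_of_unannounced (hx : x.Follows true (projectII s))
    (hx' : ∀ n, x.pos n ∉ forcing true (fun _ => univ)
      (announced (s.move (K + 1)) (x.pos (K + 1))) (K + 1) n) :
    ∃ y : (unravel D hK).Play, y.Follows true s ∧ ∀ n, UnravelPos.pos (y.pos n) = x.pos n := by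
  set q := x.pos (K + 1) with hq
  obtain ⟨S, hS_eq⟩ : ∃ S, S = unannounced (s.move (K + 1)) q := ⟨_, rfl⟩
  have hxS : ∀ n, x.pos n ∈ S n := hS_eq ▸ hx'
  have hS : IsQuasiStrategy S (K + 1) := hS_eq ▸ isQuasiStrategy_unannounced _ _
  obtain ⟨T, hT_eq⟩ := exists_claimOf_unannounced (s := s) (hx' (K + 1))
  rw [← hS_eq] at hT_eq
  have hmove : ∀ n, Nat.bodd n = true → x.pos (n + 1) = answer (s.move n) (x.pos n) S (.inl T) := by
    intro n hb
    rcases Nat.lt_or_ge K n with hn | hn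
    · rw [hx.projectII_of_lt hn hb, simulate_of_notMem_forcing s
        (fun _ => announced_eq_empty s) fun j _ => hx' j, ← hq, ← hS_eq, hT_eq]
    · exact hx.projectII_of_le hn hb _ _
  have hbase := conforms_of_announces s hS (hxS (K + 1)) hT_eq
  rw [← hmove (K + 1) (by simp [hK])] at hbase
  obtain ⟨hT, hxT⟩ := hbase
  refine exists_lift_of_avoids s hS hT (hxS _) ?_ hmove (fun hb => by simp [hK] at hb)
    fun _ => hT_eq
  refine mem_of_moves_conform hS hT hxS ?_ hmove
  simpa only [trunc_self] using hxT (K + 2) le_rfl le_rfl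

theorem Play.Follows.exists_lift_projectII (hx : x.Follows true (projectII s)) :
    ∃ y : (unravel D hK).Play, y.Follows true s ∧ ∀ n, UnravelPos.pos (y.pos n) = x.pos n := by
  by_cases h : ∃ n, x.pos n ∈ forcing true (fun _ => univ)
      (announced (s.move (K + 1)) (x.pos (K + 1))) (K + 1) n
  exacts [hx.exists_lift_of_announced h, hx.exists_lift_of_unannounced (not_exists.1 h)]

end

variable (D hK) in
/-- The covering of `G` by the unravelling game of `D`. -/
noncomputable def unravelCovering : Covering (unravel D hK) G K where
  toPos _ p := p.pos
  toPos_parent _ _ := rfl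
  bijective_toPos n hn := by
    refine ⟨fun p p' h => ?_, fun q => ?_⟩
    · exact UnravelPos.ext h (funext fun h => by omega) (funext fun h => by omega)
    · exact ⟨(annotates_of_le hn q default (.inl default)).toUnravelPos, rfl⟩
  strat
    | false => projectI
    | true => projectII
  strat_congr b s s' n h := by
    rcases Nat.lt_or_ge K n with hn | hn
    · cases b <;> simp only [projectI, projectII, h K hn.le, h (K + 1) hn, h n le_rfl]
    · cases b <;> simp only [projectI, projectII, if_neg hn.not_gt, h n le_rfl]
  strat_toPos b s n hn p := by
    have hp : (annotates_of_le (by omega) p.pos default (.inl default)).toUnravelPos = p :=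
      UnravelPos.ext rfl (funext fun h => by omega) (funext fun h => by omega)
    have hanswer : answer (s.move n) p.pos default (.inl default) = (s.move n p).pos := by
      rw [answer_of_annotates (annotates_of_le (by omega) _ _ _), hp]
    have hKn : ¬ K < n := by omega
    cases b <;> simpa only [projectI, projectII, if_neg hKn] using hanswer
  exists_lift
    | false, _, _, hx => hx.exists_lift_projectI
    | true, _, _, hx => hx.exists_lift_projectII

end UnravellingCovering

end GameTree

/-! ## Borel determinacy -/

namespace GameTree

section Determinacy

variable {G H : GameTree.{u}}

theorem isClopen_setOf_pos (n : ℕ) (P : G.Pos n → Prop) : IsClopen {x : G.Play | P (x.pos n)} := by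
  have hopen : ∀ P : G.Pos n → Prop, IsOpen {x : G.Play | P (x.pos n)} := fun P x hx =>
    ⟨n, fun y hy => show P (y.pos n) from hy ▸ hx⟩
  exact ⟨⟨hopen fun p => ¬ P p⟩, hopen P⟩

/-- The positions at which it is certain that the play will belong to `A`. -/
def secured (A : Set G.Play) : G.PosSet := fun n => {q | ∀ x : G.Play, x.pos n = q → x ∈ A}

theorem secured_mono {A : Set G.Play} {x : G.Play} {m n : ℕ} (hmn : m ≤ n)
    (h : x.pos m ∈ secured A m) : x.pos n ∈ secured A n :=
  fun y hy => h y (Play.pos_eq_of_le hy hmn)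

theorem mem_iff_exists_secured {A : Set G.Play} (hA : IsOpen A) {x : G.Play} :
    x ∈ A ↔ ∃ n, x.pos n ∈ secured A n :=
  ⟨fun h => Play.isOpen_iff.1 hA x h, fun ⟨_, h⟩ => h x rfl⟩

theorem claim_pos_eq {K : ℕ} {D : G.PosSet} {hK : Nat.bodd K = false} (y : (unravel D hK).Play)
    {n : ℕ} (hn : K + 1 < n) :
    UnravelPos.claim (y.pos n) hn = UnravelPos.claim (y.pos (K + 2)) (Nat.lt_succ_self _) := by
  induction n, (show K + 2 ≤ n from hn) using Nat.le_induction with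
  | base => rfl
  | succ n hn' ih =>
    have hparent : (y.pos (n + 1)).parent = y.pos n := y.parent_pos n
    rw [← ih hn', ← hparent]
    rfl

theorem mapPlay_unravelCovering_mem_iff {K : ℕ} (hK : Nat.bodd K = false) {A : Set G.Play}
    (hA : IsOpen A) (y : (unravel (secured A) hK).Play) :
    (unravelCovering (secured A) hK).mapPlay y ∈ A ↔
      ∃ u, UnravelPos.claim (y.pos (K + 2)) (Nat.lt_succ_self _) = .inr u := by
  have hconf : ∀ n (hn : K + 1 < n), Conforms K (secured A) _ (UnravelPos.pos (y.pos n)) _ :=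
    fun n hn => UnravelPos.conforms (y.pos n) hn
  cases hc : UnravelPos.claim (y.pos (K + 2)) (Nat.lt_succ_self _) with
  | inl T =>
    refine iff_of_false (fun h => ?_) (by simp)
    obtain ⟨n, hn⟩ := (mem_iff_exists_secured hA).1 h
    have hK2 : K + 2 ≤ max n (K + 2) := le_max_right _ _
    have := hconf (max n (K + 2)) hK2
    rw [claim_pos_eq y, hc] at this
    have hmem := this.2 _ hK2 le_rfl
    rw [trunc_self] at hmem
    exact this.1.notMem _ hK2 _ hmem (secured_mono (le_max_left n _) hn)
  | inr u =>
    refine iff_of_true ?_ ⟨u, rfl⟩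
    have hu : K + 2 ≤ u.1 := by
      have := hconf (K + 2) (Nat.lt_succ_self _)
      rw [hc] at this
      exact this.1
    have := hconf u.1 hu
    rw [claim_pos_eq y, hc] at this
    obtain ⟨-, huA, -, hpos⟩ := this
    have hpos := hpos u.1 le_rfl le_rfl
    rw [trunc_self, trunc_self] at hpos
    exact huA _ hpos

theorem exists_unravelling_of_isOpen {A : Set G.Play} (hA : IsOpen A) (k : ℕ) :
    ∃ (H : GameTree.{u}) (c : Covering H G k), IsClopen (c.mapPlay ⁻¹' A) := by
  have hK : Nat.bodd (2 * k) = false := by simp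
  refine ⟨_, (unravelCovering (secured A) hK).mono (by omega : k ≤ 2 * k), ?_⟩
  convert isClopen_setOf_pos (G := unravel (secured A) hK) (2 * k + 2) fun p =>
    ∃ u, UnravelPos.claim p (Nat.lt_succ_self _) = .inr u using 1
  exact Set.ext (mapPlay_unravelCovering_mem_iff hK hA)

/-- Martin's unravelling theorem. The statement for all continuous maps `f` into `Y` makes the
hypothesis of the Borel induction available on the coverings of `G`. -/
theorem exists_unravelling_of_borel {Y : Type v} [TopologicalSpace Y] {B : Set Y}
    (hB : @MeasurableSet Y (borel Y) B) (f : C(G.Play, Y)) (k : ℕ) :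
    ∃ (H : GameTree.{u}) (c : Covering H G k), IsClopen (c.mapPlay ⁻¹' (f ⁻¹' B)) := by
  let _ : MeasurableSpace Y := borel Y
  have : BorelSpace Y := ⟨rfl⟩
  induction B, hB using MeasurableSet.induction_on_open generalizing G k with
  | isOpen U hU => exact exists_unravelling_of_isOpen (hU.preimage f.continuous) k
  | compl B _ ih =>
    obtain ⟨H, c, hc⟩ := ih f k
    exact ⟨H, c, hc.compl⟩
  | iUnion B _ _ ih =>
    choose next c hc using fun i (T : Σ G : GameTree.{u}, C(G.Play, Y)) => ih i T.2 (k + i)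
    let T : ℕ → Σ G : GameTree.{u}, C(G.Play, Y) := fun i => Nat.rec ⟨G, f⟩
      (fun i T => ⟨next i T, T.2.comp ⟨(c i T).mapPlay, (c i T).continuous_mapPlay⟩⟩) i
    let d : ∀ i, Covering (T (i + 1)).1 (T i).1 (k + i) := fun i => c i (T i)
    let S : ℕ → GameTree.{u} := fun i => (T i).1
    let L : Covering (limit (G := S) d) G k := limitCovering (G := S) d
    let proj : ∀ i, (limit (G := S) d).Play → (T i).1.Play := limitPlayProj (G := S) d
    have hproj : ∀ i y, (T i).2 (proj i y) = f (L.mapPlay y) := by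
      intro i y
      induction i with
      | zero => rfl
      | succ i ih =>
        rw [← ih]
        exact congrArg (T i).2 (Play.ext (funext fun n => (y.pos n).toPos_proj i))
    have hopen : IsOpen (L.mapPlay ⁻¹' (f ⁻¹' ⋃ i, B i)) := by
      rw [preimage_iUnion, preimage_iUnion]
      refine isOpen_iUnion fun i => ?_
      have : L.mapPlay ⁻¹' (f ⁻¹' B i) =
          proj (i + 1) ⁻¹' ((d i).mapPlay ⁻¹' ((T i).2 ⁻¹' B i)) := by
        ext y
        rw [mem_preimage, mem_preimage, ← hproj (i + 1) y]
        rfl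
      rw [this]
      exact (hc i (T i)).isOpen.preimage (continuous_limitPlayProj (G := S) d (i + 1))
    obtain ⟨H, e, he⟩ := exists_unravelling_of_isOpen hopen k
    exact ⟨H, L.comp e, he⟩

/-- One of the players has a winning strategy in the game on `G` in which player I, moving at the
even levels, tries to bring the play into `A`. -/
def IsDetermined (A : Set G.Play) : Prop :=
  (∃ s, ∀ x : G.Play, x.Follows false s → x ∈ A) ∨ ∃ s, ∀ x : G.Play, x.Follows true s → x ∉ A

theorem Covering.isDetermined {k : ℕ} (c : Covering H G k) {A : Set G.Play}
    (h : IsDetermined (c.mapPlay ⁻¹' A)) : IsDetermined A := by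
  have hlift : ∀ b s (x : G.Play), x.Follows b (c.strat b s) →
      ∃ y : H.Play, y.Follows b s ∧ c.mapPlay y = x := fun b s x hx =>
    (c.exists_lift b s x hx).imp fun y hy => ⟨hy.1, Play.ext (funext hy.2)⟩
  refine h.imp (fun ⟨s, hs⟩ => ⟨c.strat false s, fun x hx => ?_⟩)
    fun ⟨s, hs⟩ => ⟨c.strat true s, fun x hx => ?_⟩
  all_goals
    obtain ⟨y, hy, rfl⟩ := hlift _ s x hx
    exact hs y hy

theorem isDetermined_of_isOpen [Subsingleton (G.Pos 0)] {A : Set G.Play} (hA : IsOpen A) :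
    IsDetermined A := by
  let D := secured A
  by_cases h : ∀ r : G.Pos 0, r ∈ forcing false (fun _ => univ) D 0 0
  · refine .inl ⟨attack false (fun _ => univ) D 0, fun x hx => ?_⟩
    obtain ⟨m, hm, -⟩ := (exists_attack false (fun _ => univ) D 0).choose_spec x 0 (h _)
      (fun j hj => absurd hj j.not_lt_zero) fun n _ hb _ => hx n hb
    exact hm x rfl
  obtain ⟨r, hr⟩ := not_forall.1 h
  have exists_safe_child : ∀ n q, ∃ q', G.parent n q' = q ∧
      (q ∉ forcing false (fun _ => univ) D 0 n →
        q' ∉ forcing false (fun _ => univ) D 0 (n + 1)) := by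
    intro n q
    by_contra! hq
    obtain ⟨q', hq'⟩ := G.surjective_parent n q
    exact (hq q' hq').1 ⟨n.zero_le, forces_of_forall_child fun p hp => ⟨mem_univ _, (hq p hp).2.2⟩⟩
  choose move parent_move move_notMem using exists_safe_child
  refine .inr ⟨⟨move, parent_move⟩, fun x hx hxA => ?_⟩
  have hsafe : ∀ n, x.pos n ∉ forcing false (fun _ => univ) D 0 n := by
    intro n
    induction n with
    | zero => rwa [Subsingleton.elim (x.pos 0) r]
    | succ n ih =>
      cases hb : Nat.bodd n with
      | false =>
        refine fun hn => ih ⟨n.zero_le, ?_⟩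
        rw [← x.parent_pos n]
        exact forces_of_own_move hb (mem_univ _) hn.2
      | true =>
        rw [hx n hb]
        exact move_notMem n _ ih
  obtain ⟨n, hn⟩ := (mem_iff_exists_secured hA).1 hxA
  exact hsafe n (mem_forcing_of_mem n.zero_le hn)

end Determinacy

section Sequences

variable (A : Type u) [Nonempty A]

/-- The tree of finite sequences in `A`. -/
abbrev sequences : GameTree.{u} where
  Pos n := Fin n → A
  parent _ p i := p i.castSucc
  surjective_parent _ p := ⟨Fin.snoc p (Classical.arbitrary A), by funext i; simp⟩

variable {A}

/-- The play in which the successive moves are the entries of `x`. -/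
def Play.ofSeq (x : ℕ → A) : (sequences A).Play := ⟨fun _ i => x i, fun _ => rfl⟩

/-- The sequence of moves of the play `x`. -/
def Play.toSeq (x : (sequences A).Play) : ℕ → A := fun n => x.pos (n + 1) (Fin.last n)

theorem Play.continuous_toSeq [TopologicalSpace A] [DiscreteTopology A] :
    Continuous (Play.toSeq (A := A)) := by
  refine continuous_pi fun n => continuous_def.2 fun U _ x hx => ⟨n + 1, fun y hy => ?_⟩
  rw [mem_preimage] at hx ⊢
  rwa [Play.toSeq, hy]

theorem Play.ofSeq_follows {b : Bool} {s : (sequences A).Strategy} {x : ℕ → A}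
    (hx : ∀ n, Nat.bodd n = b → x n = s.move n (fun i => x i) (Fin.last n)) :
    (Play.ofSeq x).Follows b s := by
  intro n hn
  funext i
  refine Fin.lastCases (hx n hn) (fun j => ?_) i
  exact (congrFun (s.parent_move n ((Play.ofSeq x).pos n)) j).symm

theorem borel_determinacy [TopologicalSpace A] [DiscreteTopology A] {B : Set (ℕ → A)}
    (hB : @MeasurableSet (ℕ → A) (borel _) B) :
    (∃ s : ∀ n, (Fin n → A) → A, ∀ x : ℕ → A,
      (∀ n, Nat.bodd n = false → x n = s n (fun i => x i)) → x ∈ B) ∨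
    (∃ s : ∀ n, (Fin n → A) → A, ∀ x : ℕ → A,
      (∀ n, Nat.bodd n = true → x n = s n (fun i => x i)) → x ∉ B) := by
  obtain ⟨H, c, hc⟩ := exists_unravelling_of_borel hB ⟨_, Play.continuous_toSeq⟩ 0
  have : Subsingleton ((sequences A).Pos 0) := inferInstanceAs (Subsingleton (Fin 0 → A))
  have : Subsingleton (H.Pos 0) := (c.bijective_toPos 0 le_rfl).1.subsingleton
  refine (c.isDetermined (isDetermined_of_isOpen hc.isOpen)).imp ?_ ?_
  all_goals exact fun ⟨s, hs⟩ => ⟨fun n p => s.move n p (Fin.last n), fun x hx =>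
    hs (Play.ofSeq x) (Play.ofSeq_follows hx)⟩

end Sequences

end GameTree

/-! ## A rank for alternating countable unions and complements -/

section GδRanked

variable {α β : Type*} [TopologicalSpace α] [TopologicalSpace β]

theorem isGδ_inter_preimage {G : Set α} {H : Set β} {ψ : α → β} (hG : IsGδ G)
    (hψ : ContinuousOn ψ G) (hH : IsGδ H) : IsGδ (G ∩ ψ ⁻¹' H) := by
  obtain ⟨U, hU, rfl⟩ := isGδ_iff_eq_iInter_nat.1 hH
  rw [preimage_iInter, inter_iInter]
  refine IsGδ.iInter fun n => ?_
  obtain ⟨V, hV, hVU⟩ := continuousOn_iff'.1 hψ _ (hU n)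
  rw [inter_comm, hVU]
  exact hV.isGδ.inter hG

/-- `E` consists of the points of odd rank for a rank function with values in `ℕ` whose superlevel
sets are `Gδ`. In Cantor space this is a convenient sufficient condition for `InDelta E`. -/
def IsGδRanked (E : Set α) : Prop :=
  ∃ r : α → ℕ, (∀ n, IsGδ {x | n < r x}) ∧ E = {x | Odd (r x)}

namespace IsGδRanked

variable {E F : Set α}

theorem compl (h : IsGδRanked E) : IsGδRanked Eᶜ := by
  obtain ⟨r, hr, rfl⟩ := h
  refine ⟨fun x => r x + 1, fun n => ?_, ?_⟩
  · cases n with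
    | zero => simp
    | succ n => simpa using hr n
  · ext x
    simp [Nat.odd_add_one]

theorem setOf (hE : IsGδRanked E) (hF : IsGδRanked F) (f : Prop → Prop → Prop) :
    IsGδRanked {x | f (x ∈ E) (x ∈ F)} := by
  classical
  obtain ⟨a, ha, rfl⟩ := hE
  obtain ⟨b, hb, rfl⟩ := hF
  -- The last summand gives `θ i j` the parity required by `f`; as the first one grows in steps of
  -- two, `θ` is nevertheless monotone.
  let θ : ℕ → ℕ → ℕ := fun i j => 2 * (i + j) + if f (Odd i) (Odd j) then 1 else 0
  have monotone_θ : ∀ {i j i' j'}, i ≤ i' → j ≤ j' → θ i j ≤ θ i' j' := by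
    intro i j i' j' hi hj
    rcases hi.eq_or_lt with rfl | hi
    · rcases hj.eq_or_lt with rfl | hj
      · exact le_rfl
      · grind
    · grind
  refine ⟨fun x => θ (a x) (b x), fun n => ?_, ?_⟩
  · have : {x | n < θ (a x) (b x)} =
        ⋂ p : {p : ℕ × ℕ // θ p.1 p.2 ≤ n}, ({x | p.1.1 < a x} ∪ {x | p.1.2 < b x}) := by
      ext x
      refine ⟨fun h => mem_iInter.2 fun ⟨(i, j), hp⟩ => ?_, fun h => ?_⟩
      · by_contra hx
        obtain ⟨hi, hj⟩ := not_or.1 hx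
        exact (h.trans_le (monotone_θ (not_lt.1 hi) (not_lt.1 hj))).not_ge hp
      · by_contra hx
        exact (mem_iInter.1 h ⟨(a x, b x), not_lt.1 hx⟩).elim (lt_irrefl (a x)) (lt_irrefl (b x))
    rw [this]
    exact IsGδ.iInter fun p => (ha _).union (hb _)
  · ext x
    by_cases h : f (Odd (a x)) (Odd (b x)) <;> simp [θ, h]

theorem of_isGδ (h : IsGδ E) : IsGδRanked E := by
  classical
  refine ⟨fun x => if x ∈ E then 1 else 0, fun n => ?_, ?_⟩
  · have : {x | n < if x ∈ E then 1 else 0} = E ∩ {_x | n < 1} := by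
      ext x
      by_cases hx : x ∈ E <;> simp [hx]
    rw [this]
    exact h.inter (IsOpen.isGδ isOpen_const)
  · ext x
    by_cases hx : x ∈ E <;> simp [hx]

theorem empty : IsGδRanked (∅ : Set α) := of_isGδ IsGδ.empty

theorem of_iUnion {C : ℕ → Set α} (hclosed : ∀ i, IsClosed (C i)) (hGδ : ∀ i, IsGδ (C i))
    (hcover : ⋃ i, C i = univ) (h : ∀ i, IsGδRanked (E ∩ C i)) : IsGδRanked E := by
  classical
  choose r hr hE using h
  have hex : ∀ x, ∃ i, x ∈ C i := fun x => mem_iUnion.1 (hcover ▸ mem_univ x)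
  let ι : α → ℕ := fun x => Nat.find (hex x)
  -- The rank of a point is its rank in the first piece containing it.
  refine ⟨fun x => r (ι x) x, fun n => ?_, ?_⟩
  · have : {x | n < r (ι x) x} = ⋂ i, (((C i)ᶜ ∪ ⋃ j ∈ Iio i, C j) ∪ {x | n < r i x}) := by
      ext x
      simp only [mem_iInter, mem_union, mem_compl_iff, mem_iUnion, mem_Iio, exists_prop]
      refine ⟨fun h i => ?_, fun h => ?_⟩
      · by_cases hi : x ∈ C i
        · rcases (Nat.find_min' (hex x) hi).lt_or_eq with hlt | heq
          · exact .inl (.inr ⟨_, hlt, Nat.find_spec (hex x)⟩)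
          · exact .inr (heq ▸ h)
        · exact .inl (.inl hi)
      · rcases h (ι x) with (hι | ⟨j, hj, hxj⟩) | h
        · exact absurd (Nat.find_spec (hex x)) hι
        · exact absurd hxj (Nat.find_min (hex x) hj)
        · exact h
    rw [this]
    exact IsGδ.iInter fun i => ((hclosed i).isOpen_compl.isGδ.union
      (IsGδ.biUnion (finite_Iio i) fun j _ => hGδ j)).union (hr i n)
  · ext x
    have := Set.ext_iff.1 (hE (ι x)) x
    rwa [mem_inter_iff, and_iff_left (Nat.find_spec (hex x))] at this

theorem union (hE : IsGδRanked E) (hF : IsGδRanked F) : IsGδRanked (E ∪ F) := hE.setOf hF Or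

theorem inter (hE : IsGδRanked E) (hF : IsGδRanked F) : IsGδRanked (E ∩ F) := hE.setOf hF And

theorem diff (hE : IsGδRanked E) (hF : IsGδRanked F) : IsGδRanked (E \ F) := hE.inter hF.compl

theorem preimage {G : Set α} {H : Set β} {ψ : α → β} (hG : IsGδ G) (hψ : ContinuousOn ψ G)
    (hH : IsGδRanked H) : IsGδRanked (G ∩ ψ ⁻¹' H) := by
  classical
  obtain ⟨r, hr, rfl⟩ := hH
  refine ⟨fun x => if x ∈ G then r (ψ x) + 2 else 0, fun n => ?_, ?_⟩
  · have : {x | n < if x ∈ G then r (ψ x) + 2 else 0} = G ∩ ψ ⁻¹' {y | n < r y + 2} := by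
      ext x
      by_cases hx : x ∈ G <;> simp [hx]
    rw [this]
    refine isGδ_inter_preimage hG hψ ?_
    rcases n with _ | _ | n
    · simp
    · simp
    · simpa using hr n
  · ext x
    by_cases hx : x ∈ G <;> simp [hx, Nat.odd_add]

theorem dOmegaSigmaTwo {E : Set Cantor} (h : IsGδRanked E) : DOmegaSigmaTwo E := by
  obtain ⟨r, hr, rfl⟩ := h
  refine ⟨fun n => {x | r x ≤ n}, fun n => ?_, fun a b hab x hx => le_trans hx hab, ?_⟩
  · obtain ⟨U, hU, hUr⟩ := isGδ_iff_eq_iInter_nat.1 (hr n)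
    refine ⟨fun k => (U k)ᶜ, fun k => (hU k).isClosed_compl, ?_⟩
    rw [← compl_iInter, ← hUr]
    ext x
    simp
  · ext x
    simp only [mem_ofPred_eq, mem_iUnion, mem_sdiff, not_exists, exists_prop,
      not_and, not_le]
    refine ⟨fun h => ⟨r x, h, le_rfl, fun m hm => hm⟩, fun ⟨n, hn, hle, hlt⟩ => ?_⟩
    have : r x = n := hle.eq_of_not_lt fun h => (hlt _ h).false
    rwa [this]

theorem inDelta {E : Set Cantor} (h : IsGδRanked E) : InDelta E :=
  ⟨h.dOmegaSigmaTwo, h.compl.dOmegaSigmaTwo⟩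

end IsGδRanked

end GδRanked

/-! ## Cylinders and extensions of partial maps -/

open PiNat Topology TopologicalSpace Filter Uniformity

section Cylinders

variable {E : ℕ → Type*}

theorem cylinder_eq_of_mem {x y : ∀ n, E n} {m n : ℕ} (h : y ∈ cylinder x n) (hmn : m ≤ n) :
    cylinder y m = cylinder x m :=
  mem_cylinder_iff_eq.1 (cylinder_anti x hmn h)

/-- The largest cylinder around `x` with the property `P`. If no cylinder around `x` has the
property `P`, then the value is `univ`. -/
noncomputable def cell (P : Set (∀ n, E n) → Prop) (x : ∀ n, E n) : Set (∀ n, E n) :=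
  cylinder x (sInf {m | P (cylinder x m)})

variable {P : Set (∀ n, E n) → Prop} {x y : ∀ n, E n}

theorem mem_cell : x ∈ cell P x := self_mem_cylinder _ _

theorem cell_spec (hx : ∃ m, P (cylinder x m)) : P (cell P x) := Nat.sInf_mem hx

theorem exists_cylinder_of_mem_cell (hx : ∃ m, P (cylinder x m)) (hy : y ∈ cell P x) :
    ∃ m, P (cylinder y m) :=
  ⟨sInf {m | P (cylinder x m)}, (mem_cylinder_iff_eq.1 hy).symm ▸ cell_spec hx⟩

theorem cell_eq_of_mem (hx : ∃ m, P (cylinder x m)) (hy : y ∈ cell P x) : cell P y = cell P x := by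
  have hPy : P (cylinder y (sInf {m | P (cylinder x m)})) :=
    (mem_cylinder_iff_eq.1 hy).symm ▸ cell_spec hx
  have hle : sInf {m | P (cylinder y m)} ≤ sInf {m | P (cylinder x m)} := Nat.sInf_le hPy
  have hge : sInf {m | P (cylinder x m)} ≤ sInf {m | P (cylinder y m)} := by
    refine Nat.sInf_le ?_
    rw [mem_ofPred_eq, ← cylinder_eq_of_mem hy hle]
    exact Nat.sInf_mem (s := {m | P (cylinder y m)}) ⟨_, hPy⟩
  rw [cell, cell, hle.antisymm hge]
  exact cylinder_eq_of_mem hy le_rfl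

variable [∀ n, TopologicalSpace (E n)] [∀ n, DiscreteTopology (E n)]

theorem cylinder_mem_nhds (x : ∀ n, E n) (n : ℕ) : cylinder x n ∈ 𝓝 x :=
  (isOpen_cylinder _ x n).mem_nhds (self_mem_cylinder x n)

theorem exists_cylinder_subset {U : Set (∀ n, E n)} (hU : U ∈ 𝓝 x) : ∃ n, cylinder x n ⊆ U := by
  obtain ⟨_, ⟨y, n, rfl⟩, hx, hyU⟩ :=
    (isTopologicalBasis_cylinders E).mem_nhds_iff.1 hU
  exact ⟨n, mem_cylinder_iff_eq.1 hx ▸ hyU⟩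

theorem isOpen_cell : IsOpen (cell P x) := isOpen_cylinder _ _ _

theorem isGδ_setOf_mem_cell {G : Set (∀ n, E n) → Set (∀ n, E n)}
    (hG : ∀ C, P C → IsGδ (G C)) : IsGδ {x | (∃ m, P (cylinder x m)) ∧ x ∈ G (cell P x)} := by
  have hopen : ∀ C, P C → ∃ U : ℕ → Set (∀ n, E n), (∀ n, IsOpen (U n)) ∧ G C = ⋂ n, U n :=
    fun C hC => isGδ_iff_eq_iInter_nat.1 (hG C hC)
  choose! U hU hGU using hopen
  have : {x | (∃ m, P (cylinder x m)) ∧ x ∈ G (cell P x)} =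
      ⋂ n, {x | (∃ m, P (cylinder x m)) ∧ x ∈ U (cell P x) n} := by
    ext x
    simp only [mem_iInter, mem_ofPred_eq, forall_and_left]
    exact and_congr_right fun hx => by rw [hGU _ (cell_spec hx), mem_iInter]
  rw [this]
  refine IsGδ.iInter_of_isOpen fun n => isOpen_iff_mem_nhds.2 fun x ⟨hx, hxU⟩ => ?_
  filter_upwards [isOpen_cell.mem_nhds mem_cell, (hU _ (cell_spec hx) n).mem_nhds hxU]
    with y hy hyU
  exact ⟨exists_cylinder_of_mem_cell hx hy, by rwa [cell_eq_of_mem hx hy]⟩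

theorem continuousOn_of_cell {Y : Type*} [TopologicalSpace Y] {S : Set (∀ n, E n)}
    {ψ : Set (∀ n, E n) → (∀ n, E n) → Y} (hS : ∀ x ∈ S, ∃ m, P (cylinder x m))
    (hψ : ∀ x ∈ S, ContinuousOn (ψ (cell P x)) (S ∩ cell P x)) :
    ContinuousOn (fun x => ψ (cell P x) x) S := by
  intro x hx
  refine (continuousWithinAt_inter (isOpen_cell.mem_nhds (mem_cell (P := P)))).1 ?_
  exact (hψ x hx x ⟨hx, mem_cell⟩).congr
    (fun y hy => by rw [cell_eq_of_mem (hS x hx) hy.2]) rfl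

end Cylinders

section Lavrentiev

variable {α Y : Type*} [TopologicalSpace α] [UniformSpace Y] [IsCountablyGenerated (𝓤 Y)]

theorem isGδ_inter_setOf_eq [T0Space Y] {G : Set α} {f g : α → Y} (hG : IsGδ G)
    (hf : ContinuousOn f G) (hg : ContinuousOn g G) : IsGδ (G ∩ {x | f x = g x}) :=
  isGδ_inter_preimage hG (hf.prodMk hg) isClosed_diagonal.isGδ

variable [CompleteSpace Y]

theorem isGδ_setOf_exists_tendsto_nhdsWithin {X : Set α} (hX : Dense X) (f : α → Y) :
    IsGδ {x | ∃ y, Tendsto f (𝓝[X] x) (𝓝 y)} := by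
  obtain ⟨V, hV⟩ := (𝓤 Y).exists_antitone_basis
  have : {x | ∃ y, Tendsto f (𝓝[X] x) (𝓝 y)} =
      ⋂ n, {x | ∃ U ∈ 𝓝[X] x, ∀ a ∈ U, ∀ b ∈ U, (f a, f b) ∈ V n} := by
    ext x
    have : (𝓝[X] x).NeBot := mem_closure_iff_nhdsWithin_neBot.1 (hX x)
    rw [mem_iInter, mem_ofPred_eq, ← cauchy_map_iff_exists_tendsto,
      hV.1.cauchy_iff, and_iff_right (this.map f)]
    refine ⟨fun h n => ?_, fun h n _ => ?_⟩
    · obtain ⟨W, hW, hWV⟩ := h n trivial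
      exact ⟨_, hW, fun a ha b hb => hWV _ ha _ hb⟩
    · obtain ⟨U, hU, hUV⟩ := h n
      refine ⟨f '' U, image_mem_map hU, ?_⟩
      rintro _ ⟨a, ha, rfl⟩ _ ⟨b, hb, rfl⟩
      exact hUV a ha b hb
  rw [this]
  refine IsGδ.iInter_of_isOpen fun n => isOpen_iff_mem_nhds.2 fun x ⟨U, hU, hUV⟩ => ?_
  filter_upwards [eventually_nhds_nhdsWithin.2 hU] with y hy using ⟨U, hy, hUV⟩

variable [T0Space Y]

theorem exists_isGδ_continuousOn_extension {X : Set α} (hX : Dense X) {f : α → Y}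
    (hf : ContinuousOn f X) :
    ∃ (G : Set α) (ψ : α → Y), IsGδ G ∧ X ⊆ G ∧ ContinuousOn ψ G ∧ EqOn ψ f X :=
  ⟨_, extendFrom X f, isGδ_setOf_exists_tendsto_nhdsWithin hX f, fun x hx => ⟨f x, hf x hx⟩,
    continuousOn_extendFrom (fun x _ => hX x) fun _ => id, extendFrom_extends hf⟩

end Lavrentiev

/-- A form of Lavrentiev's theorem. -/
theorem exists_isGδ_extension_of_homeomorph {Y : Type*} [TopologicalSpace Y]
    [IsCompletelyMetrizableSpace Y] {X : Set Y} (hX : Dense X) (h : X ≃ₜ X) :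
    ∃ (G : Set Y) (ψ : Y → Y), IsGδ G ∧ X ⊆ G ∧ ContinuousOn ψ G ∧
      (∀ x ∈ G, x ∈ X ↔ ψ x ∈ X) ∧ ∀ x : X, ψ x = h x := by
  let := upgradeIsCompletelyMetrizable Y
  have extend : ∀ e : X ≃ₜ X, ∃ (G : Set Y) (ψ : Y → Y), IsGδ G ∧ X ⊆ G ∧ ContinuousOn ψ G ∧
      ∀ x : X, ψ x = e x := by
    intro e
    let f : Y → Y := Function.extend Subtype.val (fun x : X => (e x : Y)) id
    have hf : ∀ x : X, f x = e x := Subtype.val_injective.extend_apply _ _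
    have hfc : ContinuousOn f X := continuousOn_iff_continuous_domRestrict.2
      ((continuous_subtype_val.comp e.continuous).congr fun x => (hf x).symm)
    obtain ⟨G, ψ, hG, hXG, hψ, hψf⟩ := exists_isGδ_continuousOn_extension hX hfc
    exact ⟨G, ψ, hG, hXG, hψ, fun x => (hψf x.2).trans (hf x)⟩
  obtain ⟨G, f, hG, hXG, hf, hfh⟩ := extend h
  obtain ⟨G', g, hG', hXG', hg, hgh⟩ := extend h.symm
  have hgf : ContinuousOn (g ∘ f) (G ∩ f ⁻¹' G') :=
    hg.comp (hf.mono inter_subset_left) fun x hx => hx.2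
  refine ⟨(G ∩ f ⁻¹' G') ∩ {x | g (f x) = x}, f,
    isGδ_inter_setOf_eq (isGδ_inter_preimage hG hf hG') hgf continuousOn_id,
    fun x hx => ⟨⟨hXG hx, ?_⟩, ?_⟩, hf.mono fun x hx => hx.1.1,
    fun x ⟨_, hx⟩ => ⟨fun hxX => ?_, fun hfx => ?_⟩, hfh⟩
  · rw [mem_preimage, hfh ⟨x, hx⟩]
    exact hXG' (h ⟨x, hx⟩).2
  · rw [mem_ofPred_eq, hfh ⟨x, hx⟩, hgh, h.symm_apply_apply]
  · rw [hfh ⟨x, hxX⟩]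
    exact (h ⟨x, hxX⟩).2
  · rw [← hx, hgh ⟨f x, hfx⟩]
    exact (h.symm _).2

/-! ## Reductions on dense Gδ sets -/

/-- The proposition `p` or its negation, according to the bit `ε`. -/
def Twist (ε : Bool) (p : Prop) : Prop := p ↔ ε = false

theorem twist_false {p : Prop} : Twist false p ↔ p := by simp [Twist]

theorem twist_true {p : Prop} : Twist true p ↔ ¬p := by simp [Twist]

theorem twist_twist {ε δ : Bool} {p : Prop} : Twist ε (Twist δ p) ↔ Twist (ε ^^ δ) p := by
  cases ε <;> cases δ <;> simp [Twist]

theorem twist_not {ε : Bool} {p : Prop} : Twist (!ε) p ↔ Twist ε ¬p := by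
  cases ε <;> simp [Twist]

theorem not_twist {ε : Bool} {p : Prop} : ¬Twist ε p ↔ Twist ε ¬p := by
  cases ε <;> simp [Twist]

theorem twist_iff_twist {ε : Bool} {p q : Prop} : (Twist ε p ↔ Twist ε q) ↔ (p ↔ q) := by
  cases ε <;> simp [Twist, not_iff_not]

theorem twist_congr {ε : Bool} {p q : Prop} (h : p ↔ q) : Twist ε p ↔ Twist ε q := by
  rw [Twist, Twist, h]

section Reductions

variable {α : Type*} [TopologicalSpace α] {X U V W : Set α} {ε δ : Bool}

/-- There is a continuous reduction of `X` to itself (`ε = false`) or to its complement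
(`ε = true`), with values in `U`, whose domain is a `Gδ` subset of `V` containing all of `X ∩ V`
but a set of finite `Gδ` rank. -/
def AlmostReduces (X : Set α) (ε : Bool) (V U : Set α) : Prop :=
  ∃ (G : Set α) (ψ : α → α), IsGδ G ∧ G ⊆ V ∧ ContinuousOn ψ G ∧ MapsTo ψ G U ∧
    (∀ x ∈ G, x ∈ X ↔ Twist ε (ψ x ∈ X)) ∧ IsGδRanked ((X ∩ V) \ G)

theorem isGδRanked_diff_inter_preimage {G G' : Set α} {ψ : α → α} (hG : IsGδ G) (hGV : G ⊆ V)
    (hψ : ContinuousOn ψ G) (hψU : MapsTo ψ G U) (hred : ∀ x ∈ G, x ∈ X ↔ Twist ε (ψ x ∈ X))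
    (hrem : IsGδRanked ((X ∩ V) \ G)) (hU : IsGδRanked U) (hG' : IsGδ G')
    (hrem' : IsGδRanked ((X ∩ U) \ G')) : IsGδRanked ((X ∩ V) \ (G ∩ ψ ⁻¹' G')) := by
  have twisted_remainder : IsGδRanked ((U \ G') ∩ {y | Twist ε (y ∈ X)}) := by
    cases ε with
    | false =>
      convert hrem' using 1
      ext y
      simp only [twist_false, mem_inter_iff, Set.mem_sdiff, mem_ofPred_eq]
      tauto
    | true =>
      convert (hU.diff (.of_isGδ hG')).diff hrem' using 1
      ext y
      simp only [twist_true, mem_inter_iff, Set.mem_sdiff, mem_ofPred_eq]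
      tauto
  convert hrem.union (.preimage hG hψ twisted_remainder) using 1
  ext x
  have := hred x
  have := @hψU x
  have := @hGV x
  simp only [mem_inter_iff, Set.mem_sdiff, mem_union, mem_preimage, mem_ofPred_eq] at *
  tauto

theorem AlmostReduces.comp (hU : IsGδRanked U) (h : AlmostReduces X ε V U)
    (h' : AlmostReduces X δ U W) : AlmostReduces X (ε ^^ δ) V W := by
  obtain ⟨G, ψ, hG, hGV, hψ, hψU, hred, hrem⟩ := h
  obtain ⟨G', ψ', hG', _, hψ', hψW, hred', hrem'⟩ := h'
  refine ⟨G ∩ ψ ⁻¹' G', ψ' ∘ ψ, isGδ_inter_preimage hG hψ hG', fun x hx => hGV hx.1,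
    hψ'.comp (hψ.mono inter_subset_left) fun x hx => hx.2, fun x hx => hψW hx.2,
    fun x hx => ?_, isGδRanked_diff_inter_preimage hG hGV hψ hψU hred hrem hU hG' hrem'⟩
  rw [hred x hx.1, twist_congr (hred' _ hx.2), twist_twist]
  rfl

end Reductions

variable {E : ℕ → Type*} [∀ n, TopologicalSpace (E n)] [∀ n, DiscreteTopology (E n)]
  {X U : Set (∀ n, E n)}

theorem almostReduces_univ_of_local
    (h : ∀ x ∈ X, ∃ (m : ℕ) (G : Set (∀ n, E n)) (ψ : (∀ n, E n) → ∀ n, E n), IsGδ G ∧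
      X ∩ cylinder x m ⊆ G ∧ ContinuousOn ψ G ∧ MapsTo ψ G U ∧ ∀ x ∈ G, x ∈ X ↔ ψ x ∈ X) :
    AlmostReduces X false univ U := by
  let P : Set (∀ n, E n) → Prop := fun C => ∃ (G : Set (∀ n, E n)) (ψ : (∀ n, E n) → ∀ n, E n),
    IsGδ G ∧ X ∩ C ⊆ G ∧ ContinuousOn ψ G ∧ MapsTo ψ G U ∧ ∀ x ∈ G, x ∈ X ↔ ψ x ∈ X
  have hP : ∀ C, P C → P C := fun _ => id
  have : Nonempty ((∀ n, E n) → ∀ n, E n) := ⟨id⟩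
  choose! G ψ hG hXG hψ hψU hred using hP
  refine ⟨{x | (∃ m, P (cylinder x m)) ∧ x ∈ G (cell P x)}, fun x => ψ (cell P x) x,
    isGδ_setOf_mem_cell hG, subset_univ _, ?_, ?_, ?_, ?_⟩
  · refine continuousOn_of_cell (fun x hx => hx.1) fun x ⟨hx, _⟩ =>
      (hψ _ (cell_spec hx)).mono ?_
    rintro y ⟨⟨-, hy⟩, hyx⟩
    rwa [← cell_eq_of_mem hx hyx]
  · exact fun x ⟨hx, hxG⟩ => hψU _ (cell_spec hx) hxG
  · exact fun x ⟨hx, hxG⟩ => by rw [twist_false, hred _ (cell_spec hx) x hxG]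
  · convert IsGδRanked.empty using 1
    rw [inter_univ, sdiff_eq_empty]
    exact fun x hx => ⟨h x hx, hXG _ (cell_spec (h x hx)) ⟨hx, mem_cell⟩⟩

theorem almostReduces_false_of_isHomogeneous {X : Set Cantor} (hX : Dense X)
    (hhom : IsHomogeneous X) (z : Cantor) (n : ℕ) :
    AlmostReduces X false univ (cylinder z n) := by
  refine almostReduces_univ_of_local fun p hp => ?_
  obtain ⟨q, hq, hqz⟩ := hX.exists_mem_open (isOpen_cylinder _ z n) ⟨z, self_mem_cylinder _ _⟩
  obtain ⟨h, hpq⟩ := hhom ⟨p, hp⟩ ⟨q, hq⟩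
  obtain ⟨G, ψ, hG, hXG, hψ, hred, hψh⟩ := exists_isGδ_extension_of_homeomorph hX h
  have hψp : ψ p ∈ cylinder z n := by rwa [hψh ⟨p, hp⟩, hpq]
  obtain ⟨V, hV, hVG⟩ := mem_nhdsWithin_iff_exists_mem_nhds_inter.1
    (hψ p (hXG hp) ((isOpen_cylinder _ z n).mem_nhds hψp))
  obtain ⟨m, hm⟩ := exists_cylinder_subset hV
  exact ⟨m, G ∩ ψ ⁻¹' cylinder z n, ψ,
    isGδ_inter_preimage hG hψ (isOpen_cylinder _ z n).isGδ,
    fun x ⟨hx, hxp⟩ => ⟨hXG hx, hVG ⟨hm hxp, hXG hx⟩⟩, hψ.mono inter_subset_left,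
    fun x hx => hx.2, fun x hx => hred x hx.1⟩

section Core

variable {α ι : Type*} [TopologicalSpace α] {X : Set α} {ε : ι → Bool}

/-- The domain of the composition of the partial maps `ψ a` with domains `G a` along a word `w`,
the first letter of `w` being applied first. -/
def wordDomain (G : ι → Set α) (ψ : ι → α → α) : List ι → Set α
  | [] => univ
  | a :: w => G a ∩ ψ a ⁻¹' wordDomain G ψ w

variable {G : ι → Set α} {ψ : ι → α → α}

theorem isGδ_wordDomain (hG : ∀ a, IsGδ (G a)) (hψ : ∀ a, ContinuousOn (ψ a) (G a)) :
    ∀ w, IsGδ (wordDomain G ψ w)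
  | [] => IsGδ.univ
  | a :: w => isGδ_inter_preimage (hG a) (hψ a) (isGδ_wordDomain hG hψ w)

theorem isGδRanked_diff_wordDomain (hG : ∀ a, IsGδ (G a)) (hψ : ∀ a, ContinuousOn (ψ a) (G a))
    (hred : ∀ a, ∀ x ∈ G a, x ∈ X ↔ Twist (ε a) (ψ a x ∈ X))
    (hrem : ∀ a, IsGδRanked (X \ G a)) (w : List ι) : IsGδRanked (X \ wordDomain G ψ w) := by
  induction w with
  | nil => simpa [wordDomain] using IsGδRanked.empty
  | cons a w ih =>
    simpa [wordDomain] using isGδRanked_diff_inter_preimage (V := univ) (U := univ) (hG a)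
      (subset_univ _) (hψ a) (mapsTo_univ _ _) (hred a) (by simpa using hrem a)
      (.of_isGδ IsGδ.univ) (isGδ_wordDomain hG hψ w) (by simpa using ih)

theorem isGδRanked_of_iInter_eq_empty [PerfectlyNormalSpace α] {κ : Type*} [Countable κ]
    {D : κ → Set α} (hD : ∀ w, IsGδ (D w)) (hempty : ⋂ w, D w = ∅)
    (h : ∀ w, IsGδRanked (X \ D w)) : IsGδRanked X := by
  rcases isEmpty_or_nonempty α with _ | ⟨⟨x⟩⟩
  · simpa [eq_empty_of_isEmpty X] using IsGδRanked.empty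
  have : Nonempty κ := by
    by_contra hκ
    rw [not_nonempty_iff] at hκ
    simpa using hempty.subset (mem_iInter.2 fun w => hκ.elim w : x ∈ _)
  choose O hO hDO using fun w => isGδ_iff_eq_iInter_nat.1 (hD w)
  obtain ⟨f, hf⟩ := exists_surjective_nat (κ × ℕ)
  refine .of_iUnion (C := fun i => (O (f i).1 (f i).2)ᶜ) (fun i => (hO _ _).isClosed_compl)
    (fun i => (hO _ _).isClosed_compl.isGδ) ?_ fun i => ?_
  · refine eq_univ_of_forall fun x => ?_
    have hx : x ∉ ⋂ w, ⋂ n, O w n := by simp_rw [← hDO, hempty, notMem_empty, not_false_eq_true]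
    simp only [mem_iInter, not_forall] at hx
    obtain ⟨w, n, hx⟩ := hx
    obtain ⟨i, hi⟩ := hf (w, n)
    exact mem_iUnion.2 ⟨i, by rwa [hi]⟩
  · have hDO' : D (f i).1 ⊆ O (f i).1 (f i).2 := (hDO _).trans_subset (iInter_subset _ _)
    convert (h (f i).1).inter (.of_isGδ (hO (f i).1 (f i).2).isClosed_compl.isGδ) using 1
    rw [Set.sdiff_eq, inter_assoc, inter_eq_right.2 (compl_subset_compl.2 hDO')]

theorem exists_isGδ_invariant [PerfectlyNormalSpace α] [Countable ι] {U : ι → Set α}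
    (hX : ¬ IsGδRanked X) (h : ∀ a, AlmostReduces X (ε a) univ (U a)) :
    ∃ (T : Set α) (ψ : ι → α → α), IsGδ T ∧ T.Nonempty ∧ (∀ a, ContinuousOn (ψ a) T) ∧
      (∀ a, MapsTo (ψ a) T T) ∧ (∀ a, MapsTo (ψ a) T (U a)) ∧
      ∀ a, ∀ x ∈ T, x ∈ X ↔ Twist (ε a) (ψ a x ∈ X) := by
  choose G ψ hG _ hψ hψU hred hrem using h
  simp only [inter_univ] at hrem
  have hTG : ∀ a, ⋂ w, wordDomain G ψ w ⊆ G a := fun a x hx => (mem_iInter.1 hx [a]).1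
  refine ⟨⋂ w, wordDomain G ψ w, ψ, .iInter (isGδ_wordDomain hG hψ), ?_,
    fun a => (hψ a).mono (hTG a), fun a x hx => mem_iInter.2 fun w => (mem_iInter.1 hx (a :: w)).2,
    fun a => (hψU a).mono_left (hTG a), fun a x hx => hred a x (hTG a hx)⟩
  exact nonempty_iff_ne_empty.2 fun hempty => hX <| isGδRanked_of_iInter_eq_empty
    (isGδ_wordDomain hG hψ) hempty (isGδRanked_diff_wordDomain hG hψ hred hrem)

end Core

section BaireCategory

theorem isMeagre_or_exists_isOpen_isMeagre_diff {α : Type*} [TopologicalSpace α] {W : Set α}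
    (hW : BaireMeasurableSet W) :
    IsMeagre W ∨ ∃ U, IsOpen U ∧ U.Nonempty ∧ IsMeagre (U \ W) := by
  obtain ⟨U, hU, hWU⟩ := hW.residualEq_isOpen
  rcases U.eq_empty_or_nonempty with rfl | hne
  · left
    filter_upwards [hWU] with x hx
    exact fun hxW => (iff_of_eq hx).1 hxW
  · refine .inr ⟨U, hU, hne, ?_⟩
    filter_upwards [hWU] with x hx hxU
    exact hxU.2 ((iff_of_eq hx).2 hxU.1)

theorem BorelSet.baireMeasurableSet {W : Set Cantor} (hW : BorelSet W) :
    BaireMeasurableSet W := by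
  borelize Cantor
  exact MeasurableSet.baireMeasurableSet hW

theorem BorelSet.preimage {W : Set Cantor} (hW : BorelSet W) {f : Cantor → Cantor}
    (hf : Continuous f) : BorelSet (f ⁻¹' W) := by
  borelize Cantor
  exact hf.measurable hW

/-- The homeomorphism changing the `n`-th bit. -/
def flipBit (n : ℕ) : Cantor ≃ₜ Cantor where
  toEquiv := Function.Involutive.toPerm (fun x => Function.update x n !x n) fun x => by simp
  continuous_toFun := continuous_id.update n
    ((continuous_of_discreteTopology (f := not)).comp (continuous_apply n))
  continuous_invFun := continuous_id.update n
    ((continuous_of_discreteTopology (f := not)).comp (continuous_apply n))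

theorem flipBit_apply_self (n : ℕ) (x : Cantor) : flipBit n x n = !x n :=
  Function.update_self (β := fun _ => Bool) n (!x n) x

theorem flipBit_apply_of_ne {i n : ℕ} (h : i ≠ n) (x : Cantor) : flipBit n x i = x i :=
  Function.update_of_ne (β := fun _ => Bool) h (!x n) x

theorem not_forall_flipBit_mem_iff {W : Set Cantor} (hW : BorelSet W) :
    ¬ ∀ n x, flipBit n x ∈ W ↔ x ∉ W := by
  intro hflip
  have not_meagre : ∀ (v : Cantor) (n : ℕ), ¬ IsMeagre (cylinder v n) := fun v n =>
    not_isMeagre_of_isOpen (isOpen_cylinder _ v n) ⟨v, self_mem_cylinder v n⟩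
  have meagre_preimage : ∀ (n : ℕ) {M : Set Cantor}, IsMeagre M → IsMeagre (flipBit n ⁻¹' M) :=
    fun n _ hM => hM.preimage_of_isOpenMap (flipBit n).continuous (flipBit n).isOpenMap
  rcases isMeagre_or_exists_isOpen_isMeagre_diff hW.baireMeasurableSet with
    hM | ⟨U, hU, ⟨v, hv⟩, hM⟩
  · refine not_meagre (fun _ => false) 0 ((hM.union (meagre_preimage 0 hM)).mono fun x _ => ?_)
    exact or_iff_not_imp_left.2 (hflip 0 x).2
  · obtain ⟨n, hn⟩ := exists_cylinder_subset (hU.mem_nhds hv)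
    refine not_meagre v n ((hM.union (meagre_preimage n hM)).mono fun x hx => ?_)
    by_cases hxW : x ∈ W
    · refine .inr ⟨hn fun i hi => ?_, fun h => (hflip n x).1 h hxW⟩
      rw [flipBit_apply_of_ne hi.ne, hx i hi]
    · exact .inl ⟨hn hx, hxW⟩

end BaireCategory

theorem polishSpace_of_isGδ {α : Type*} [TopologicalSpace α] [PolishSpace α] {T : Set α}
    (hT : IsGδ T) : PolishSpace T := by
  obtain ⟨O, hO, rfl⟩ := isGδ_iff_eq_iInter_nat.1 hT
  have : ∀ n, PolishSpace (O n) := fun n => (hO n).polishSpace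
  let f : ↥(⋂ n, O n) → ∀ n, O n := fun x n => ⟨x, mem_iInter.1 x.2 n⟩
  have hf : IsInducing f := by
    refine IsInducing.of_comp (f := f) (g := fun y => (y 0 : α)) ?_ ?_ .subtypeVal
    · exact continuous_pi fun n => continuous_subtype_val.subtype_mk _
    · exact continuous_subtype_val.comp (continuous_apply 0)
  have hrange : range f = {y | ∀ n, (y n : α) = y 0} := by
    ext y
    refine ⟨?_, fun hy => ⟨⟨y 0, mem_iInter.2 fun n => hy n ▸ (y n).2⟩, ?_⟩⟩
    · rintro ⟨x, rfl⟩
      exact fun n => rfl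
    · exact funext fun n => Subtype.ext (hy n).symm
  refine IsClosedEmbedding.polishSpace (f := f) ⟨⟨hf, fun x y h => ?_⟩, ?_⟩
  · exact Subtype.ext (congrArg (fun y => (y 0 : α)) h)
  · rw [hrange, ofPred_forall]
    exact isClosed_iInter fun n => isClosed_eq (continuous_subtype_val.comp (continuous_apply n))
      (continuous_subtype_val.comp (continuous_apply 0))

section InfiniteComposition

variable {T A : Type*}

section

variable [TopologicalSpace T]

/-- The composition of the maps `g i (z i)` for `k ≤ i < k + d`, the map with the largest index
being applied first. -/
def iterComp (g : ℕ → A → C(T, T)) (z : ℕ → A) (k : ℕ) : ℕ → C(T, T)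
  | 0 => .id T
  | d + 1 => (iterComp g z k d).comp (g (k + d) (z (k + d)))

variable {g : ℕ → A → C(T, T)}

theorem iterComp_succ' (z : ℕ → A) (k d : ℕ) :
    iterComp g z k (d + 1) = (g k (z k)).comp (iterComp g z (k + 1) d) := by
  induction d with
  | zero => rfl
  | succ d ih =>
    rw [iterComp, ih, iterComp, ContinuousMap.comp_assoc, Nat.add_right_comm k 1 d, Nat.add_assoc]

theorem iterComp_congr {z z' : ℕ → A} {k d : ℕ} (h : ∀ i, k ≤ i → i < k + d → z i = z' i) :
    iterComp g z k d = iterComp g z' k d := by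
  induction d with
  | zero => rfl
  | succ d ih =>
    rw [iterComp, iterComp, ih fun i hi hid => h i hi (hid.trans (Nat.lt_succ_self _)),
      h (k + d) (Nat.le_add_right k d) (Nat.lt_succ_self _)]

end

variable [MetricSpace T] [Finite A] {g : ℕ → A → C(T, T)} {p : T}

theorem exists_dist_iterComp_le (hg : ∀ U ∈ 𝓝 p, ∃ m, ∀ a x, g m a x ∈ U) :
    ∃ m : ℕ → ℕ, ∀ z k d x,
      dist (iterComp (fun n => g (m n)) z k d p)
        (iterComp (fun n => g (m n)) z k d (g (m (k + d)) (z (k + d)) x)) ≤ (1 / 2) ^ (k + d) := by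
  classical
  cases nonempty_fintype A
  have exists_index : ∀ (n : ℕ) (S : Finset C(T, T)), ∃ m, ∀ F ∈ S, ∀ a x,
      dist (F p) (F (g m a x)) ≤ (1 / 2) ^ n := by
    intro n S
    have hS : ∀ᶠ y in 𝓝 p, ∀ F ∈ S, dist (F p) (F y) ≤ (1 / 2) ^ n := by
      refine (eventually_all_finset S).2 fun F _ => ?_
      filter_upwards [F.continuous.continuousAt (Metric.closedBall_mem_nhds (F p)
        (pow_pos one_half_pos n))] with y hy
      rwa [dist_comm]
    obtain ⟨m, hm⟩ := hg _ hS
    exact ⟨m, fun F hF a x => hm a x F hF⟩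
  choose μ hμ using exists_index
  -- `S n` contains the compositions of consecutive maps ending just before index `n`.
  let S : ℕ → Finset C(T, T) := Nat.rec {.id T} fun n S =>
    insert (.id T) (Finset.image₂ (fun F a => F.comp (g (μ n S) a)) S Finset.univ)
  have iterComp_mem : ∀ z k d, iterComp (fun n => g (μ n (S n))) z k d ∈ S (k + d) := by
    intro z k d
    induction d with
    | zero => cases k <;> simp [S, iterComp]
    | succ d ih =>
      exact Finset.mem_insert_of_mem (Finset.mem_image₂_of_mem ih (Finset.mem_univ _))
  exact ⟨fun n => μ n (S n), fun z k d x => hμ _ _ _ (iterComp_mem z k d) _ _⟩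

variable [CompleteSpace T] [TopologicalSpace A] [DiscreteTopology A]

/-- Along a sufficiently sparse sequence `m`, the finite compositions of the maps `g (m k) (z k)`
are uniformly Cauchy, and `L z k` is the limit of those that start from the index `k`. -/
theorem exists_infinite_composition (hg : ∀ U ∈ 𝓝 p, ∃ m, ∀ a x, g m a x ∈ U) :
    ∃ (m : ℕ → ℕ) (L : (ℕ → A) → ℕ → T), (∀ k, Continuous fun z => L z k) ∧
      (∀ z k, L z k = g (m k) (z k) (L z (k + 1))) ∧
      ∀ z z' k, (∀ i ≥ k, z i = z' i) → L z k = L z' k := by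
  obtain ⟨m, hm⟩ := exists_dist_iterComp_le hg
  let F : (ℕ → A) → ℕ → ℕ → C(T, T) := iterComp fun n => g (m n)
  have dist_succ_le : ∀ z k d, dist (F z k d p) (F z k (d + 1) p) ≤ 1 * (1 / 2) ^ d := by
    intro z k d
    rw [one_mul]
    exact (hm z k d p).trans (pow_le_pow_of_le_one one_half_pos.le one_half_lt_one.le
      (Nat.le_add_left d k))
  have exists_limit : ∀ z k, ∃ l, Tendsto (fun d => F z k d p) atTop (𝓝 l) := fun z k =>
    cauchySeq_tendsto_of_complete
      (cauchySeq_of_le_geometric _ _ one_half_lt_one (dist_succ_le z k))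
  choose L hL using exists_limit
  refine ⟨m, L, fun k => ?_, fun z k => ?_, fun z z' k h => ?_⟩
  · have uniform : TendstoUniformly (fun d z => F z k d p) (fun z => L z k) atTop := by
      refine Metric.tendstoUniformly_iff.2 fun δ hδ => ?_
      have small : Tendsto (fun d : ℕ => (1 * (1 / 2) ^ d / (1 - 1 / 2) : ℝ)) atTop (𝓝 0) := by
        simpa using ((tendsto_pow_atTop_nhds_zero_of_lt_one one_half_pos.le
          one_half_lt_one).const_mul (1 : ℝ)).div_const (1 - 1 / 2)
      filter_upwards [small.eventually_lt_const hδ] with d hd z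
      rw [dist_comm]
      exact (dist_le_of_le_geometric_of_tendsto _ _ one_half_lt_one (dist_succ_le z k) (hL z k)
        d).trans_lt hd
    refine uniform.continuous (.of_forall fun d => IsLocallyConstant.continuous ?_)
    refine (IsLocallyConstant.iff_eventually_eq _).2 fun z => ?_
    filter_upwards [cylinder_mem_nhds z (k + d)] with z' hz'
    exact congrArg (· p) (iterComp_congr fun i _ hi => hz' i hi)
  · have hL' := (tendsto_add_atTop_iff_nat 1).2 (hL z k)
    simp only [F, iterComp_succ'] at hL'
    exact tendsto_nhds_unique hL' (((g (m k) (z k)).continuous.tendsto _).comp (hL z (k + 1)))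
  · refine tendsto_nhds_unique ((hL z k).congr fun d => ?_) (hL z' k)
    exact congrArg (· p) (iterComp_congr fun i hi _ => h i hi)

end InfiniteComposition

theorem mem_iff_notMem_of_flipBit {α : Type*} {X : Set α} {L : Cantor → ℕ → α}
    (hL : ∀ w k, L w (k + 1) ∈ X ↔ Twist (w k) (L w k ∈ X))
    (hcongr : ∀ w w' k, (∀ i, k ≤ i → w i = w' i) → L w k = L w' k) (n : ℕ) (w : Cantor) :
    L (flipBit n w) 0 ∈ X ↔ L w 0 ∉ X := by
  have flip_mem : ∀ k ≤ n, (L (flipBit n w) k ∈ X ↔ L w k ∉ X) := by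
    intro k hk
    induction hk using Nat.decreasingInduction with
    | self =>
      have hagree : L (flipBit n w) (n + 1) = L w (n + 1) :=
        hcongr _ _ _ fun i hi => flipBit_apply_of_ne (by omega) w
      have hflip := hL (flipBit n w) n
      rwa [hagree, hL w n, flipBit_apply_self, twist_not, twist_iff_twist, iff_not_comm] at hflip
    | of_succ k hk ih =>
      rwa [hL, hL, flipBit_apply_of_ne hk.ne, not_twist, twist_iff_twist] at ih
  exact flip_mem 0 n.zero_le

/-- Otherwise, infinite compositions of reductions along `z` would decide the parity of `z`: the
set of those `z` for which the infinite composition lies in `X` changes with every bit of `z`. -/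
theorem not_forall_almostReduces {X : Set Cantor} (hX : BorelSet X) (hrank : ¬ IsGδRanked X) :
    ¬ ∀ ε z n, AlmostReduces X ε univ (cylinder z n) := by
  intro h
  obtain ⟨z, hz⟩ := exists_dense_seq Cantor
  obtain ⟨T, ψ, hT, ⟨p, hp⟩, hψ, hψT, hψU, hred⟩ := exists_isGδ_invariant (ι := ℕ × ℕ × Bool)
    (U := fun a => cylinder (z a.1) a.2.1) hrank fun a => h a.2.2 (z a.1) a.2.1
  have : PolishSpace Cantor := { }
  have := polishSpace_of_isGδ hT
  let := upgradeIsCompletelyMetrizable T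
  have hnear : ∀ m, ∃ j, z j ∈ cylinder p m := fun m => by
    simpa using hz.exists_mem_open (isOpen_cylinder _ p m) ⟨p, self_mem_cylinder _ _⟩
  choose j hj using hnear
  let g : ℕ → Bool → C(T, T) := fun m ε =>
    ⟨(hψT (j m, m, ε)).restrict, (hψ (j m, m, ε)).mapsToRestrict _⟩
  have hg : ∀ U ∈ 𝓝 (⟨p, hp⟩ : T), ∃ m, ∀ ε x, g m ε x ∈ U := by
    intro U hU
    obtain ⟨V, hV, hVU⟩ := mem_nhds_subtype _ _ _ |>.1 hU
    obtain ⟨m, hm⟩ := exists_cylinder_subset hV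
    refine ⟨m, fun ε x => hVU (hm ?_)⟩
    rw [← mem_cylinder_iff_eq.1 (hj m)]
    exact hψU (j m, m, ε) x.2
  obtain ⟨m, L, hL, hL_eq, hL_congr⟩ := exists_infinite_composition hg
  have mem_iff : ∀ w k, (L w (k + 1) : Cantor) ∈ X ↔ Twist (w k) ((L w k : Cantor) ∈ X) := by
    intro w k
    rw [hL_eq w k]
    exact hred (j (m k), m k, w k) _ (L w (k + 1)).2
  exact not_forall_flipBit_mem_iff (hX.preimage (continuous_subtype_val.comp (hL 0)))
    (mem_iff_notMem_of_flipBit (L := fun w k => (L w k : Cantor)) mem_iff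
      fun w w' k h => congrArg Subtype.val (hL_congr w w' k h))

/-! ## Wadge games -/

theorem continuous_of_forall_exists_cylinder {E : ℕ → Type*} [∀ n, TopologicalSpace (E n)]
    [∀ n, DiscreteTopology (E n)] {β : Type*} [TopologicalSpace β] {f : (∀ n, E n) → β}
    (h : ∀ x, ∃ m, ∀ y ∈ cylinder x m, f y = f x) : Continuous f := by
  refine continuous_iff_continuousAt.2 fun x => ?_
  obtain ⟨m, hm⟩ := h x
  exact tendsto_nhds_of_eventually_eq (mem_of_superset (cylinder_mem_nhds x m) hm)

section WadgeGame

variable {A : Type u} {B : Type v}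

/-- `f` can be computed by a player who, in each round, answers the `k`-th entry of `a` with the
`k`-th entry of `f a`. -/
def IsCausal (f : (ℕ → A) → ℕ → B) : Prop :=
  ∀ ⦃a a' : ℕ → A⦄ ⦃k : ℕ⦄, (∀ i ≤ k, a i = a' i) → f a k = f a' k

theorem IsCausal.continuous [TopologicalSpace A] [DiscreteTopology A] [TopologicalSpace B]
    {f : (ℕ → A) → ℕ → B} (hf : IsCausal f) : Continuous f :=
  continuous_pi fun k => continuous_of_forall_exists_cylinder fun _ =>
    ⟨k + 1, fun _ hy => hf fun i hi => hy i (Nat.lt_succ_of_le hi)⟩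

/-- The sequence of moves in which `s` chooses those at the positions of parity `b`, and all others
are taken from `o`. -/
def playAgainst (s : ∀ n, (Fin n → A) → A) (b : Bool) (o : ℕ → A) (n : ℕ) : A :=
  if Nat.bodd n = b then s n fun i => playAgainst s b o i else o n

variable {s : ∀ n, (Fin n → A) → A} {b : Bool} {n : ℕ}

theorem playAgainst_of_bodd_eq (o : ℕ → A) (h : Nat.bodd n = b) :
    playAgainst s b o n = s n fun i => playAgainst s b o i := by
  rw [playAgainst, if_pos h]

theorem playAgainst_of_bodd_ne (o : ℕ → A) (h : Nat.bodd n ≠ b) :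
    playAgainst s b o n = o n := by
  rw [playAgainst, if_neg h]

theorem playAgainst_congr {o o' : ℕ → A} (h : ∀ i ≤ n, o i = o' i) :
    playAgainst s b o n = playAgainst s b o' n := by
  induction n using Nat.strong_induction_on with
  | _ n ih =>
    by_cases hb : Nat.bodd n = b
    · rw [playAgainst_of_bodd_eq o hb, playAgainst_of_bodd_eq o' hb]
      congr 1
      exact funext fun i => ih i i.2 fun j hj => h j (hj.trans i.2.le)
    · rw [playAgainst_of_bodd_ne o hb, playAgainst_of_bodd_ne o' hb, h n le_rfl]

variable [TopologicalSpace A] [TopologicalSpace B] {Z : Set (ℕ → A)} {Y : Set (ℕ → B)}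

theorem measurableSet_wadgeGame (hZ : @MeasurableSet _ (borel _) Z)
    (hY : @MeasurableSet _ (borel _) Y) : @MeasurableSet (ℕ → A × B) (borel _)
      {w | ¬ ((fun k => (w (2 * k)).1) ∈ Z ↔ (fun k => (w (2 * k + 1)).2) ∈ Y)} := by
  borelize (ℕ → A) (ℕ → B) (ℕ → A × B)
  have hfst : Continuous fun (w : ℕ → A × B) k => (w (2 * k)).1 := by fun_prop
  have hsnd : Continuous fun (w : ℕ → A × B) k => (w (2 * k + 1)).2 := by fun_prop
  exact MeasurableSet.compl ((hfst.measurable hZ).iff (hsnd.measurable hY))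

/-- Wadge's lemma, with the continuous reduction of the second case in the form in which the
winning strategy provides it. -/
theorem exists_continuous_or_exists_isCausal [DiscreteTopology A] [DiscreteTopology B]
    [Nonempty A] [Nonempty B] (hZ : @MeasurableSet _ (borel _) Z)
    (hY : @MeasurableSet _ (borel _) Y) :
    (∃ g : (ℕ → B) → ℕ → A, Continuous g ∧ ∀ y, y ∈ Y ↔ g y ∉ Z) ∨
      ∃ f : (ℕ → A) → ℕ → B, IsCausal f ∧ ∀ a, a ∈ Z ↔ f a ∈ Y := by
  inhabit A
  inhabit B
  rcases GameTree.borel_determinacy (measurableSet_wadgeGame hZ hY) with ⟨s, hs⟩ | ⟨s, hs⟩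
  · let play : (ℕ → B) → ℕ → A × B := fun y => playAgainst s false fun n => (default, y (n / 2))
    have play_odd : ∀ y, (fun k => (play y (2 * k + 1)).2) = y := fun y => funext fun k => by
      rw [show play y (2 * k + 1) = _ from playAgainst_of_bodd_ne _ (by simp)]
      exact congrArg y (by omega : (2 * k + 1) / 2 = k)
    refine .inl ⟨fun y k => (play y (2 * k)).1, continuous_pi fun k =>
      continuous_of_forall_exists_cylinder fun y => ⟨k + 1, fun y' hy' => ?_⟩, fun y => ?_⟩
    · rw [show play y' (2 * k) = play y (2 * k) from playAgainst_congr fun i hi => by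
        rw [hy' (i / 2) (by omega)]]
    · have hwin := hs (play y) fun n hn => playAgainst_of_bodd_eq _ hn
      rw [mem_ofPred_eq, play_odd] at hwin
      exact ⟨fun hy hZ => hwin (iff_of_true hZ hy),
        fun hZ => not_not.1 fun hy => hwin (iff_of_false hZ hy)⟩
  · let play : (ℕ → A) → ℕ → A × B := fun a => playAgainst s true fun n => (a (n / 2), default)
    have play_even : ∀ a, (fun k => (play a (2 * k)).1) = a := fun a => funext fun k => by
      rw [show play a (2 * k) = _ from playAgainst_of_bodd_ne _ (by simp)]
      simp
    refine .inr ⟨fun a k => (play a (2 * k + 1)).2, fun a a' k h => ?_, fun a => ?_⟩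
    · exact congrArg Prod.snd (playAgainst_congr fun i hi => by rw [h (i / 2) (by omega)])
    · have hwin := hs (play a) fun n hn => playAgainst_of_bodd_eq _ hn
      rwa [mem_ofPred_eq, not_not, play_even] at hwin

end WadgeGame

theorem isGδ_setOf_frequently {α : Type*} [TopologicalSpace α] {p : ℕ → α → Prop}
    (hp : ∀ k, IsOpen {v | p k v}) : IsGδ {v | ∃ᶠ k in atTop, p k v} := by
  have : {v | ∃ᶠ k in atTop, p k v} = ⋂ N, ⋃ k ∈ Ici N, {v | p k v} := by
    ext v
    simp [frequently_atTop]
  rw [this]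
  exact IsGδ.iInter_of_isOpen fun N => isOpen_biUnion fun k _ => hp k

section LabelledSequences

variable {X : Set Cantor}

/-- The sequences of bits, each carrying a label in `{0, 1, 2}`, such that either the label `2`
occurs infinitely often and the bits form a point of `X`, or all but finitely many labels are
`1`. -/
def labelledExtension (X : Set Cantor) : Set (ℕ → Bool × Fin 3) :=
  {a | (∃ᶠ k in atTop, (a k).2 = 2) ∧ (fun k => (a k).1) ∈ X ∨ ∀ᶠ k in atTop, (a k).2 = 1}

theorem isGδ_setOf_frequently_label {α : Type*} [TopologicalSpace α] {g : α → ℕ → Bool × Fin 3}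
    (hg : Continuous g) (s : Set (Fin 3)) : IsGδ {v | ∃ᶠ k in atTop, (g v k).2 ∈ s} :=
  isGδ_setOf_frequently fun k => (isOpen_discrete s).preimage
    (continuous_snd.comp ((continuous_apply k).comp hg))

theorem setOf_eventually_label_eq {α : Type*} (g : α → ℕ → Bool × Fin 3) :
    {v | ∀ᶠ k in atTop, (g v k).2 = 1} =
      {v | ∃ᶠ k in atTop, (g v k).2 ∈ ({1}ᶜ : Set (Fin 3))}ᶜ := by
  ext v
  simp

theorem measurableSet_labelledExtension (hX : BorelSet X) :
    @MeasurableSet _ (borel _) (labelledExtension X) := by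
  borelize Cantor (ℕ → Bool × Fin 3)
  have hbits : Continuous fun (a : ℕ → Bool × Fin 3) k => (a k).1 := by fun_prop
  have hlabel : ∀ s : Set (Fin 3),
      MeasurableSet {a : ℕ → Bool × Fin 3 | ∃ᶠ k in atTop, (a k).2 ∈ s} := fun s =>
    (isGδ_setOf_frequently_label continuous_id s).measurableSet
  have hone : MeasurableSet {a : ℕ → Bool × Fin 3 | ∀ᶠ k in atTop, (a k).2 = 1} := by
    rw [setOf_eventually_label_eq fun a : ℕ → Bool × Fin 3 => a]
    exact (hlabel _).compl
  exact ((hlabel {2}).inter (hbits.measurable hX)).union hone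

theorem almostReduces_true_of_labelledExtension {V : Set Cantor} (hV : IsGδ V)
    {g : Cantor → ℕ → Bool × Fin 3} (hg : Continuous g)
    (h : ∀ v ∈ V, v ∈ X ↔ g v ∉ labelledExtension X) : AlmostReduces X true V univ := by
  let I : Set Cantor := {v | ∃ᶠ k in atTop, (g v k).2 = 2}
  let J : Set Cantor := {v | ∀ᶠ k in atTop, (g v k).2 = 1}
  have hI : IsGδ I := isGδ_setOf_frequently_label hg {2}
  have hJ : IsGδRanked J := by
    rw [show J = _ from setOf_eventually_label_eq g]
    exact (IsGδRanked.of_isGδ (isGδ_setOf_frequently_label hg _)).compl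
  have disjoint_IJ : ∀ v ∈ I, v ∉ J := fun v hI hJ => by
    obtain ⟨k, h2, h1⟩ := (hI.and_eventually hJ).exists
    exact absurd (h1.symm.trans h2) (by decide)
  have mem_iff : ∀ v ∈ V, v ∈ X ↔ ¬ (v ∈ I ∧ (fun k => (g v k).1) ∈ X ∨ v ∈ J) := h
  refine ⟨V ∩ I, fun v k => (g v k).1, hV.inter hI, inter_subset_left, Continuous.continuousOn
    (by fun_prop), mapsTo_univ _ _, fun v ⟨hvV, hvI⟩ => ?_, ?_⟩
  · rw [twist_true, mem_iff v hvV]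
    have := disjoint_IJ v hvI
    tauto
  · convert (IsGδRanked.of_isGδ hV).diff ((IsGδRanked.of_isGδ hI).union hJ) using 1
    ext v
    simp only [Set.mem_sdiff, mem_inter_iff, mem_union]
    have := mem_iff v
    tauto

open Classical in
/-- The bits of `x`, labelled by `2` at the positions in `S`, and by the `k`-th bit of `x`
throughout the `k`-th gap of `S`. -/
noncomputable def encode (S : Set ℕ) (x : Cantor) (k : ℕ) : Bool × Fin 3 :=
  (x k, if k ∈ S then 2 else if x (S ∩ Iio k).ncard then 1 else 0)

theorem continuous_encode (S : Set ℕ) : Continuous (encode S) := by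
  refine continuous_pi fun k => (continuous_apply k).prodMk ?_
  exact (continuous_of_discreteTopology (f := fun b : Bool =>
    (open Classical in if k ∈ S then 2 else if b then 1 else 0 : Fin 3))).comp (continuous_apply _)

theorem encode_congr {S S' : Set ℕ} {k : ℕ} (h : ∀ j ≤ k, j ∈ S ↔ j ∈ S') (x : Cantor) :
    encode S x k = encode S' x k := by
  have hinter : S ∩ Iio k = S' ∩ Iio k := by
    ext j
    exact and_congr_left fun hj => h j (le_of_lt hj)
  by_cases hk : k ∈ S
  · simp only [encode, hk, (h k le_rfl).1 hk, if_true]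
  · simp only [encode, hk, mt (h k le_rfl).2 hk, if_false, hinter]

theorem encode_mem_labelledExtension_of_infinite {S : Set ℕ} (hS : S.Infinite) (x : Cantor) :
    encode S x ∈ labelledExtension X ↔ x ∈ X := by
  have frequently_two : ∃ᶠ k in atTop, (encode S x k).2 = 2 :=
    (Nat.frequently_atTop_iff_infinite.2 hS).mono fun k hk => if_pos hk
  have not_eventually_one : ¬ ∀ᶠ k in atTop, (encode S x k).2 = 1 := fun h => by
    obtain ⟨k, h2, h1⟩ := (frequently_two.and_eventually h).exists
    exact absurd (h1.symm.trans h2) (by decide)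
  exact (or_iff_left not_eventually_one).trans (and_iff_right frequently_two)

theorem encode_mem_labelledExtension_coe_finset (T : Finset ℕ) (x : Cantor) :
    encode T x ∈ labelledExtension X ↔ x T.card = true := by
  have eventually_label : ∀ᶠ k in atTop, (encode T x k).2 = if x T.card then 1 else 0 := by
    filter_upwards [eventually_gt_atTop (T.sup id)] with k hk
    have hlt : ∀ j ∈ T, j < k := fun j hj => (Finset.le_sup (f := id) hj).trans_lt hk
    have hinter : (T : Set ℕ) ∩ Iio k = T := inter_eq_left.2 hlt
    have hkT : k ∉ T := fun h => (hlt k h).false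
    simp only [encode, Finset.mem_coe, hkT, if_false, hinter, ncard_coe_finset]
  have not_frequently_two : ¬ ∃ᶠ k in atTop, (encode T x k).2 = 2 := fun h => by
    obtain ⟨k, h2, hk⟩ := (h.and_eventually eventually_label).exists
    rw [h2] at hk
    split_ifs at hk <;> exact absurd hk (by decide)
  refine (or_iff_right fun h => not_frequently_two h.1).trans ⟨fun h => ?_, fun h => ?_⟩
  · obtain ⟨k, h1, hk⟩ := (h.and eventually_label).exists
    by_contra hx
    rw [h1, if_neg hx] at hk
    exact absurd hk (by decide)
  · filter_upwards [eventually_label] with k hk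
    rw [hk, if_pos h]

end LabelledSequences

section Embeddings

theorem exists_forall_exists_lt_ne_of_continuous {α β : Type*} [TopologicalSpace α]
    [CompactSpace α] [TopologicalSpace β] [DiscreteTopology β] {E : ℕ → Type*}
    [∀ n, TopologicalSpace (E n)] [∀ n, DiscreteTopology (E n)] {c : α → β} (hc : Continuous c)
    {g : α → ∀ n, E n} (hg : Continuous g) (hgc : ∀ x y, c x ≠ c y → g x ≠ g y) :
    ∃ N, ∀ x y, c x ≠ c y → ∃ m < N, g x m ≠ g y m := by
  have hcompact : IsCompact {p : α × α | c p.1 ≠ c p.2} := IsClosed.isCompact <|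
    (isClosed_discrete {b : β × β | b.1 ≠ b.2}).preimage
      (f := fun p : α × α => (c p.1, c p.2)) (by fun_prop)
  have hopen : ∀ m, IsOpen {p : α × α | g p.1 m ≠ g p.2 m} := fun m =>
    isOpen_ne_fun (by fun_prop) (by fun_prop)
  obtain ⟨t, ht⟩ := hcompact.elim_finite_subcover _ hopen fun p hp =>
    mem_iUnion.2 (Function.ne_iff.1 (hgc p.1 p.2 hp))
  refine ⟨t.sup id + 1, fun x y hxy => ?_⟩
  obtain ⟨m, hm, hne⟩ := mem_iUnion₂.1 (@ht (x, y) hxy)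
  exact ⟨m, Nat.lt_succ_of_le (Finset.le_sup (f := id) hm), hne⟩

theorem exists_infinite_inter_Iio_eq {κ : Finset ℕ → ℕ} (hκ : ∀ T, ∀ j ∈ T, j < κ T) :
    ∃ S : Set ℕ, S.Infinite ∧
      ∀ i, ∃ T : Finset ℕ, T.card = i ∧ ∀ j < κ T, j ∈ S ↔ j ∈ T := by
  let T : ℕ → Finset ℕ := Nat.rec ∅ fun _ T => insert (κ T) T
  have T_succ : ∀ i, T (i + 1) = insert (κ (T i)) (T i) := fun i => rfl
  have card_T : ∀ i, (T i).card = i := by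
    intro i
    induction i with
    | zero => rfl
    | succ i ih => rw [T_succ, Finset.card_insert_of_notMem fun h => (hκ _ _ h).false, ih]
  have strictMono_κT : StrictMono fun i => κ (T i) := strictMono_nat_of_lt_succ fun i =>
    hκ _ _ (Finset.mem_insert_self _ _)
  have mem_T : ∀ i j, j ∈ T i ↔ ∃ l < i, κ (T l) = j := by
    intro i j
    induction i with
    | zero => simp [T]
    | succ i ih =>
      rw [T_succ, Finset.mem_insert, ih]
      grind
  refine ⟨range fun i => κ (T i), infinite_range_of_injective strictMono_κT.injective,
    fun i => ⟨T i, card_T i, fun j hj => ?_⟩⟩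
  rw [mem_T]
  exact ⟨fun ⟨l, hl⟩ => ⟨l, strictMono_κT.lt_iff_lt.1 (hl.trans_lt hj), hl⟩,
    fun ⟨l, _, hl⟩ => ⟨l, hl⟩⟩

theorem exists_continuous_injective_of_isCausal {X : Set Cantor} {B : Type*} [TopologicalSpace B]
    [DiscreteTopology B] {Y : Set (ℕ → B)} {f : (ℕ → Bool × Fin 3) → ℕ → B} (hf : IsCausal f)
    (hred : ∀ a, a ∈ labelledExtension X ↔ f a ∈ Y) :
    ∃ e : Cantor → ℕ → B, Continuous e ∧ Function.Injective e ∧ ∀ x, x ∈ X ↔ e x ∈ Y := by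
  have hcont : ∀ S, Continuous fun x => f (encode S x) := fun S =>
    hf.continuous.comp (continuous_encode S)
  have exists_separation : ∀ T : Finset ℕ, ∃ κ, (∀ j ∈ T, j < κ) ∧
      ∀ x x' : Cantor, x T.card ≠ x' T.card →
        ∃ m < κ, f (encode T x) m ≠ f (encode T x') m := by
    intro T
    obtain ⟨N, hN⟩ := exists_forall_exists_lt_ne_of_continuous
      (continuous_apply (A := fun _ : ℕ => Bool) T.card) (hcont T) fun x x' hne heq => hne <| by
        rw [Bool.eq_iff_iff, ← encode_mem_labelledExtension_coe_finset (X := X), hred,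
          ← encode_mem_labelledExtension_coe_finset (X := X), hred]
        exact iff_of_eq (congrArg (· ∈ Y) heq)
    refine ⟨max N (T.sup id + 1), fun j hj => ?_, fun x x' hx => ?_⟩
    · exact lt_max_of_lt_right (Nat.lt_succ_of_le (Finset.le_sup (f := id) hj))
    · obtain ⟨m, hm, hne⟩ := hN x x' hx
      exact ⟨m, lt_max_of_lt_left hm, hne⟩
  choose κ hκ hsep using exists_separation
  obtain ⟨S, hS, hST⟩ := exists_infinite_inter_Iio_eq hκ
  refine ⟨fun x => f (encode S x), hcont S, fun x x' heq => funext fun i => ?_,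
    fun x => (encode_mem_labelledExtension_of_infinite hS x).symm.trans (hred _)⟩
  by_contra hne
  obtain ⟨T, rfl, hT⟩ := hST i
  obtain ⟨m, hm, hne⟩ := hsep T x x' hne
  have agree : ∀ x, f (encode S x) m = f (encode T x) m := fun x =>
    hf fun j hj => encode_congr (fun l hl => hT l (by omega)) x
  exact hne ((agree x).symm.trans ((congrFun heq m).trans (agree x')))

/-- The sequence with the first `n` entries of `z`, followed by the entries of `y`. -/
def prepend {A : Type*} (z : ℕ → A) (n : ℕ) (y : ℕ → A) (k : ℕ) : A :=
  if k < n then z k else y (k - n)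

section Prepend

variable {A : Type*} {z v : ℕ → A} {n : ℕ}

theorem prepend_mem_cylinder (z : ℕ → A) (n : ℕ) (y : ℕ → A) : prepend z n y ∈ cylinder z n :=
  fun _ hi => if_pos hi

theorem prepend_tail (h : v ∈ cylinder z n) : (prepend z n fun k => v (k + n)) = v := by
  funext k
  by_cases hk : k < n
  · rw [prepend, if_pos hk, h k hk]
  · rw [prepend, if_neg hk, Nat.sub_add_cancel (not_lt.1 hk)]

theorem prepend_injective (z : ℕ → A) (n : ℕ) : Function.Injective (prepend z n) := by
  intro x y h
  funext k
  simpa [prepend] using congrFun h (k + n)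

theorem continuous_prepend [TopologicalSpace A] (z : ℕ → A) (n : ℕ) :
    Continuous (prepend z n) := by
  refine continuous_pi fun k => ?_
  by_cases hk : k < n
  · simpa only [prepend, hk, if_true] using continuous_const
  · simpa only [prepend, hk, if_false] using continuous_apply (k - n)

end Prepend

theorem exists_continuous_injective_mem_cylinder {X : Set Cantor} (hX : BorelSet X)
    (hdense : Dense X) (hhom : IsHomogeneous X) (hΔ : ¬ InDelta X) (z : Cantor) (n : ℕ) :
    ∃ e : Cantor → Cantor, Continuous e ∧ Function.Injective e ∧
      (∀ x, e x ∈ cylinder z n) ∧ ∀ x, x ∈ X ↔ e x ∈ X := by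
  rcases exists_continuous_or_exists_isCausal (measurableSet_labelledExtension hX)
    (hX.preimage (continuous_prepend z n)) with ⟨g, hg, hgX⟩ | ⟨f, hf, hfX⟩
  · have hred := almostReduces_false_of_isHomogeneous hdense hhom
    have hflip : AlmostReduces X true (cylinder z n) univ := by
      refine almostReduces_true_of_labelledExtension (isOpen_cylinder _ z n).isGδ
        (g := fun v => g fun k => v (k + n)) (by fun_prop) fun v hv => ?_
      rw [← hgX, mem_preimage, prepend_tail hv]
    refine (not_forall_almostReduces hX (fun h => hΔ h.inDelta) fun ε u m => ?_).elim
    cases ε with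
    | false => exact hred u m
    | true =>
      exact ((hred z n).comp (.of_isGδ (isOpen_cylinder _ z n).isGδ) hflip).comp
        (.of_isGδ .univ) (hred u m)
  · obtain ⟨e, he, he_inj, heX⟩ := exists_continuous_injective_of_isCausal hf hfX
    exact ⟨prepend z n ∘ e, (continuous_prepend z n).comp he, (prepend_injective z n).comp he_inj,
      fun x => prepend_mem_cylinder z n _, heX⟩

end Embeddings

/-! ## Knaster–Reichbach extension -/

section LocallyConstant

theorem exists_injOn_forall_mem {ι Y : Type*} [Nonempty Y] {R : Set ι} (hR : R.Finite)
    {U : ι → Set Y} (hU : ∀ i ∈ R, (U i).Infinite) :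
    ∃ q : ι → Y, InjOn q R ∧ ∀ i ∈ R, q i ∈ U i := by
  classical
  induction R, hR using Set.Finite.induction_on with
  | empty => exact ⟨fun _ => Classical.arbitrary Y, injOn_empty _, fun _ => False.elim⟩
  | @insert a R ha hR ih =>
    obtain ⟨q, hq, hqU⟩ := ih fun i hi => hU i (mem_insert_of_mem a hi)
    obtain ⟨x, hx, hxq⟩ := (hU a (mem_insert a R)).exists_notMem_finite (hR.image q)
    have heq : EqOn (Function.update q a x) q R := fun i hi =>
      Function.update_of_ne (ne_of_mem_of_not_mem hi ha) _ _
    refine ⟨Function.update q a x, (injOn_insert ha).2 ⟨hq.congr heq.symm, ?_⟩,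
      forall_mem_insert.2 ⟨?_, fun i hi => heq hi ▸ hqU i hi⟩⟩
    · rwa [Function.update_self, heq.image_eq]
    · rwa [Function.update_self]

theorem exists_continuous_eqOn {E : ℕ → Type*} [∀ n, TopologicalSpace (E n)]
    [∀ n, DiscreteTopology (E n)] {Z : Type*} [TopologicalSpace Z] [Nonempty Z]
    {A : Set (∀ n, E n)} (hA : IsClosed A) {f : (∀ n, E n) → Z} (hf : ContinuousOn f A) :
    ∃ g, Continuous g ∧ EqOn g f A := by
  obtain rfl | hne := A.eq_empty_or_nonempty
  · exact ⟨fun _ => Classical.arbitrary Z, continuous_const, eqOn_empty _ _⟩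
  obtain ⟨r, hrA, hr, hrc⟩ := exists_retraction_of_isClosed hA hne
  exact ⟨f ∘ r, hf.comp_continuous hrc fun x => hr ▸ mem_range_self x,
    fun x hx => congrArg f (hrA x hx)⟩

instance : PerfectSpace Cantor := perfectSpace_iff_forall_not_isolated.2 fun x => by
  refine ⟨fun hx => ?_⟩
  obtain ⟨n, hn⟩ :=
    exists_cylinder_subset ((isOpen_singleton_iff_punctured_nhds x).2 hx |>.mem_nhds rfl)
  have : flipBit n x = x := hn fun i hi => flipBit_apply_of_ne hi.ne x
  simpa only [flipBit_apply_self, Bool.not_eq_self] using congrFun this n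

theorem infinite_sdiff_of_isOpen {Y : Type*} [TopologicalSpace Y] [T1Space Y] [PerfectSpace Y]
    {U L : Set Y} (hU : IsOpen U) (hne : U.Nonempty) (hL : IsClosed L) (hL' : interior L = ∅) :
    (U \ L).Infinite := by
  obtain ⟨x, hx⟩ : (U \ L).Nonempty := sdiff_nonempty.2 fun h =>
    hne.ne_empty (subset_empty_iff.1 (hL' ▸ hU.subset_interior_iff.2 h))
  exact infinite_of_mem_nhds x ((hU.sdiff hL).mem_nhds hx)

theorem exists_continuous_eqOn_range_prodMk_eq {ι κ : Type*} [TopologicalSpace κ]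
    [DiscreteTopology κ] [Nonempty κ] {L : Set Cantor} (hL : IsClosed L) (hL' : interior L = ∅)
    {β : Cantor → ι} (hβ : IsLocallyConstant β) {c : Cantor → κ} (hc : ContinuousOn c L)
    {R : Set (ι × κ)} (hRfin : R.Finite) (hRβ : Prod.fst '' R = range β)
    (hcR : ∀ y ∈ L, (β y, c y) ∈ R) :
    ∃ b : Cantor → κ, Continuous b ∧ EqOn b c L ∧ range (fun y => (β y, b y)) = R := by
  classical
  have hfiber : ∀ p ∈ R, (β ⁻¹' {p.1} \ L).Infinite := fun p hp => by
    obtain ⟨y, hy⟩ : p.1 ∈ range β := hRβ ▸ mem_image_of_mem _ hp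
    exact infinite_sdiff_of_isOpen (hβ.isOpen_fiber p.1) ⟨y, hy⟩ hL hL'
  obtain ⟨q, hq, hqR⟩ := exists_injOn_forall_mem hRfin hfiber
  have hRne : Nonempty (ι × κ) := ⟨(β default, Classical.arbitrary κ)⟩
  let f : Cantor → κ := L.piecewise c fun y => (Function.invFunOn q R y).2
  have hfq : ∀ p ∈ R, f (q p) = p.2 := fun p hp =>
    (piecewise_eq_of_notMem _ _ _ (hqR p hp).2).trans
      (congrArg Prod.snd (hq.leftInvOn_invFunOn hp))
  have hf : ContinuousOn f (L ∪ q '' R) := ContinuousOn.union_of_isClosed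
    (hc.congr (piecewise_eqOn _ _ _)) ((hRfin.image q).continuousOn _) hL (hRfin.image q).isClosed
  obtain ⟨g, hg, hgf⟩ := exists_continuous_eqOn (hL.union (hRfin.image q).isClosed) hf
  have hj : ∀ i ∈ range β, ∃ j, (i, j) ∈ R := fun i hi => by
    obtain ⟨p, hp, rfl⟩ := hRβ ▸ hi
    exact ⟨p.2, hp⟩
  choose! j hj using hj
  let b : Cantor → κ := fun y => if (β y, g y) ∈ R then g y else j (β y)
  have hb : IsLocallyConstant b := hβ.comp₂ ((IsLocallyConstant.iff_continuous g).2 hg)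
    fun i k => if (i, k) ∈ R then k else j i
  refine ⟨b, hb.continuous, fun y hy => ?_, (range_subset_iff.2 fun y => ?_).antisymm
    fun p hp => ⟨q p, ?_⟩⟩
  · have hgy : g y = c y := (hgf (Or.inl hy)).trans (piecewise_eq_of_mem _ _ _ hy)
    simp only [b, hgy, hcR y hy, if_true]
  · by_cases h : (β y, g y) ∈ R
    · simp only [b, h, if_true]
    · simpa only [b, h, if_false] using hj _ (mem_range_self y)
  · have hgq : (β (q p), g (q p)) = p :=
      Prod.ext (hqR p hp).1 ((hgf (Or.inr (mem_image_of_mem q hp))).trans (hfq p hp))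
    rw [← hgq] at hp
    simpa only [b, hp, if_true] using hgq

end LocallyConstant

/-- A pair of locally constant colourings of Cantor space with the same colours, which
correspond to each other under the partial equivalence `φ`. -/
structure Matched (φ : PartialEquiv Cantor Cantor) {ι : Type*} (α β : Cantor → ι) : Prop where
  isLocallyConstant_left : IsLocallyConstant α
  isLocallyConstant_right : IsLocallyConstant β
  range_eq : range α = range β
  map_eq : ∀ x ∈ φ.source, β (φ x) = α x

/-- A partial equivalence of Cantor space that maps its closed, nowhere dense source continuously
to its target. -/
structure IsThin (φ : PartialEquiv Cantor Cantor) : Prop where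
  isClosed_source : IsClosed φ.source
  interior_source : interior φ.source = ∅
  continuousOn : ContinuousOn φ φ.source

namespace Matched

variable {φ : PartialEquiv Cantor Cantor} {α β : Cantor → List Bool}

theorem symm {ι : Type*} {α β : Cantor → ι} (h : Matched φ α β) : Matched φ.symm β α where
  isLocallyConstant_left := h.isLocallyConstant_right
  isLocallyConstant_right := h.isLocallyConstant_left
  range_eq := h.range_eq.symm
  map_eq y hy := by rw [← h.map_eq _ (φ.map_target hy), φ.right_inv hy]

theorem exists_cons (h : Matched φ α β) (hφ : IsThin φ.symm) {a : Cantor → Bool}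
    (ha : Continuous a) :
    ∃ b : Cantor → Bool, Matched φ (fun x => a x :: α x) (fun y => b y :: β y) := by
  have hlc : IsLocallyConstant fun x => (α x, a x) :=
    h.isLocallyConstant_left.prodMk ((IsLocallyConstant.iff_continuous a).2 ha)
  obtain ⟨b, hb, hba, hR⟩ := exists_continuous_eqOn_range_prodMk_eq hφ.isClosed_source
    hφ.interior_source h.isLocallyConstant_right (c := a ∘ φ.symm)
    (ha.comp_continuousOn hφ.continuousOn) hlc.range_finite
    (by rw [← range_comp, ← h.range_eq]; rfl)
    fun y hy => ⟨φ.symm y, Prod.ext (h.symm.map_eq y hy) rfl⟩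
  refine ⟨b, hlc.comp fun p => p.2 :: p.1, ?_, ?_, fun x hx => ?_⟩
  · exact h.isLocallyConstant_right.comp₂ ((IsLocallyConstant.iff_continuous b).2 hb)
      fun i k => k :: i
  · have := congrArg (image fun p : List Bool × Bool => p.2 :: p.1) hR
    rw [← range_comp, ← range_comp] at this
    exact this.symm
  · rw [hba (φ.map_source hx), h.map_eq x hx, Function.comp_apply, φ.left_inv hx]

theorem exists_refinement (h : Matched φ α β) (hφ : IsThin φ) (hφ' : IsThin φ.symm) (n : ℕ) :
    ∃ α' β' : Cantor → List Bool, Matched φ α' β' ∧ (∀ x y, α' x = β' y → α x = β y) ∧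
      (∀ x x', α' x = α' x' → x n = x' n) ∧ ∀ y y', β' y = β' y' → y n = y' n := by
  obtain ⟨b, hb⟩ := h.exists_cons hφ' (continuous_apply n)
  obtain ⟨a, ha⟩ := hb.symm.exists_cons hφ (continuous_apply n)
  refine ⟨_, _, ha.symm, fun x y hxy => ?_, fun x x' hxx => ?_, fun y y' hyy => ?_⟩
  · exact (List.cons.inj (List.cons.inj hxy).2).2
  · exact (List.cons.inj (List.cons.inj hxx).2).1
  · exact (List.cons.inj hyy).1

theorem exists_seq (h : Matched φ α β) (hφ : IsThin φ) (hφ' : IsThin φ.symm) :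
    ∃ A B : ℕ → Cantor → List Bool, A 0 = α ∧ B 0 = β ∧ (∀ n, Matched φ (A n) (B n)) ∧
      (∀ n x y, A (n + 1) x = B (n + 1) y → A n x = B n y) ∧
      (∀ n x x', A (n + 1) x = A (n + 1) x' → x n = x' n) ∧
      ∀ n y y', B (n + 1) y = B (n + 1) y' → y n = y' n := by
  choose A B hAB hle hA hB using fun (p : {p : (Cantor → List Bool) × (Cantor → List Bool) //
    Matched φ p.1 p.2}) (n : ℕ) => p.2.exists_refinement hφ hφ' n
  let S : ℕ → {p : (Cantor → List Bool) × (Cantor → List Bool) // Matched φ p.1 p.2} := fun n =>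
    n.rec ⟨(α, β), h⟩ fun m p => ⟨(A p m, B p m), hAB p m⟩
  exact ⟨fun n => (S n).1.1, fun n => (S n).1.2, rfl, rfl, fun n => (S n).2,
    fun n => hle (S n) n, fun n => hA (S n) n, fun n => hB (S n) n⟩

theorem exists_forall_eq {ι : Type*} {A B : ℕ → Cantor → ι} (h : ∀ n, Matched φ (A n) (B n))
    (hle : ∀ n x y, A (n + 1) x = B (n + 1) y → A n x = B n y) (x : Cantor) :
    ∃ y, ∀ n, A n x = B n y := by
  have hclosed : ∀ n, IsClosed {y | A n x = B n y} := fun n => by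
    simpa only [eq_comm] using (h n).isLocallyConstant_right.isClosed_fiber (A n x)
  obtain ⟨y, hy⟩ := IsCompact.nonempty_iInter_of_sequence_nonempty_isCompact_isClosed
    (fun n => {y | A n x = B n y}) (fun n y => hle n x y)
    (fun n => by
      obtain ⟨y, hy⟩ : A n x ∈ range (B n) := (h n).range_eq ▸ mem_range_self x
      exact ⟨y, hy.symm⟩)
    (hclosed 0).isCompact hclosed
  exact ⟨y, mem_iInter.1 hy⟩

theorem exists_homeomorph (h : Matched φ α β) (hφ : IsThin φ) (hφ' : IsThin φ.symm) :
    ∃ k : Cantor ≃ₜ Cantor, EqOn k φ φ.source ∧ ∀ x, β (k x) = α x := by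
  obtain ⟨A, B, rfl, rfl, hAB, hle, hA, hB⟩ := h.exists_seq hφ hφ'
  choose k hk using exists_forall_eq hAB hle
  choose k' hk' using exists_forall_eq (fun n => (hAB n).symm)
    fun n y x hxy => (hle n x y hxy.symm).symm
  have hBinj : ∀ y y', (∀ n, B n y = B n y') → y = y' := fun y y' hyy =>
    funext fun n => hB n y y' (hyy (n + 1))
  have hAinj : ∀ x x', (∀ n, A n x = A n x') → x = x' := fun x x' hxx =>
    funext fun n => hA n x x' (hxx (n + 1))
  let e : Cantor ≃ Cantor :=
    { toFun := k
      invFun := k'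
      left_inv := fun x => hAinj _ _ fun n => by rw [← hk', ← hk]
      right_inv := fun y => hBinj _ _ fun n => by rw [← hk, ← hk'] }
  have he : Continuous e := continuous_pi fun n => by
    refine IsLocallyConstant.continuous ((IsLocallyConstant.iff_eventually_eq _).2 fun x => ?_)
    filter_upwards [(hAB (n + 1)).isLocallyConstant_left.eventually_eq x] with y hy
    exact hB n _ _ (((hk y _).symm.trans hy).trans (hk x _))
  exact ⟨he.homeoOfEquivCompactToT2,
    fun x hx => hBinj _ _ fun n => (hk x n).symm.trans ((hAB n).map_eq x hx).symm,
    fun x => (hk x 0).symm⟩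

end Matched

theorem isThin_toPartialEquiv_symm {f : Cantor → Cantor} {K : Set Cantor} (hK : IsClosed K)
    (hf : ContinuousOn f K) (hinj : InjOn f K) (hfK : interior (f '' K) = ∅) :
    IsThin (hinj.toPartialEquiv f K).symm where
  isClosed_source := (hK.isCompact.image_of_continuousOn hf).isClosed
  interior_source := hfK
  continuousOn := by
    refine continuousOn_iff_isClosed.2 fun T hT => ⟨f '' (K ∩ T), ?_, ?_⟩
    · exact ((hK.inter hT).isCompact.image_of_continuousOn
        (hf.mono inter_subset_left)).isClosed
    · refine Eq.trans ?_ (inter_eq_left.2 (image_mono inter_subset_left)).symm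
      rw [inter_comm]
      exact ((hinj.toPartialEquiv f K).image_source_inter_eq' T).symm

/-- A form of the Knaster–Reichbach theorem. -/
theorem exists_homeomorph_eqOn_of_injOn {K : Set Cantor} (hK : IsClosed K) (hK' : interior K = ∅)
    {f : Cantor → Cantor} (hf : ContinuousOn f K) (hinj : InjOn f K)
    (hfK : interior (f '' K) = ∅) {N : ℕ} (hN : ∀ x ∈ K, f x ∈ cylinder x N) :
    ∃ k : Cantor ≃ₜ Cantor, EqOn k f K ∧ ∀ x, k x ∈ cylinder x N := by
  have hres : IsLocallyConstant fun x : Cantor => res x N :=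
    (IsLocallyConstant.iff_eventually_eq _).2 fun x => by
      filter_upwards [cylinder_mem_nhds x N] with y hy using res_eq_res.2 hy
  have hmatch : Matched (hinj.toPartialEquiv f K) (fun x => res x N) fun x => res x N :=
    ⟨hres, hres, rfl, fun x hx => res_eq_res.2 (hN x hx)⟩
  obtain ⟨k, hkf, hkN⟩ := hmatch.exists_homeomorph ⟨hK, hK', hf⟩
    (isThin_toPartialEquiv_symm hK hf hinj hfK)
  exact ⟨k, hkf, fun x => res_eq_res.1 (hkN x)⟩

/-! ## Back and forth -/

section PiNat

variable {E : ℕ → Type*}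

theorem mem_cylinder_of_forall_succ {α : Type*} {a : ℕ → α → ∀ n, E n}
    (ha : ∀ n x, a (n + 1) x ∈ cylinder (a n x) n) {m n : ℕ} (hmn : m ≤ n) (x : α) :
    a n x ∈ cylinder (a m x) m := by
  induction n, hmn using Nat.le_induction with
  | base => exact self_mem_cylinder _ _
  | succ n hmn ih => exact fun i hi => (ha n x i (hi.trans_le hmn)).trans (ih i hi)

theorem diagonal_mem_cylinder {α : Type*} {a : ℕ → α → ∀ n, E n}
    (ha : ∀ n x, a (n + 1) x ∈ cylinder (a n x) n) (n : ℕ) (x : α) :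
    (fun i => a (i + 1) x i) ∈ cylinder (a n x) n :=
  fun i hi => (mem_cylinder_of_forall_succ ha hi x i i.lt_succ_self).symm

theorem cell_subset_cylinder {P : Set (∀ n, E n) → Prop} {x y : ∀ n, E n} {j : ℕ}
    (hy : y ∈ cylinder x j) (hx : x ∉ cell P y) : cell P y ⊆ cylinder x j := by
  obtain hle | hle := le_total j (sInf {m | P (cylinder y m)})
  · rw [← mem_cylinder_iff_eq.1 hy]
    exact cylinder_anti y hle
  · exact absurd (cylinder_anti y hle ((mem_cylinder_comm _ _ _).1 hy)) hx

open Classical in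
theorem injective_piecewise_cell {P : Set (∀ n, E n) → Prop} {K : Set (∀ n, E n)}
    (hP : ∀ x ∉ K, ∃ m, P (cylinder x m)) (hPK : ∀ C, P C → Disjoint C K)
    {e : Set (∀ n, E n) → (∀ n, E n) → ∀ n, E n} (he : ∀ x, Function.Injective (e (cell P x)))
    (hemem : ∀ x y, e (cell P x) y ∈ cell P x) :
    Function.Injective (K.piecewise id fun x => e (cell P x) x) := by
  have hnotMem : ∀ x ∉ K, e (cell P x) x ∉ K := fun x hx =>
    disjoint_left.1 (hPK _ (cell_spec (hP x hx))) (hemem x x)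
  refine (injective_piecewise_iff _).2
    ⟨injOn_id K, fun x hx y hy hxy => ?_, fun x hx y hy hxy => hnotMem y hy (hxy ▸ hx)⟩
  · replace hxy : e (cell P x) x = e (cell P y) y := hxy
    have hcell : cell P x = cell P y := by
      rw [← cell_eq_of_mem (hP x hx) (hemem x x), hxy, cell_eq_of_mem (hP y hy) (hemem y y)]
    rw [hcell] at hxy
    exact he y hxy

variable [∀ n, TopologicalSpace (E n)] [∀ n, DiscreteTopology (E n)]

theorem exists_homeomorph_apply_eq (x y : ∀ n, E n) :
    ∃ h : (∀ n, E n) ≃ₜ (∀ n, E n), h x = y := by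
  classical
  exact ⟨Homeomorph.piCongrRight fun i => (Equiv.swap (x i) (y i)).toHomeomorphOfDiscrete,
    funext fun i => Equiv.swap_apply_left (x i) (y i)⟩

theorem exists_forall_mem_cylinder_of_continuous [∀ n, Finite (E n)] {F : ℕ → Type*}
    [∀ n, TopologicalSpace (F n)] [∀ n, DiscreteTopology (F n)]
    {h : (∀ n, E n) → ∀ n, F n} (hh : Continuous h) (n : ℕ) :
    ∃ N, ∀ x, ∀ y ∈ cylinder x N, h y ∈ cylinder (h x) n := by
  let U : ℕ → Set (∀ n, E n) := fun N => {x | ∀ y ∈ cylinder x N, h y ∈ cylinder (h x) n}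
  have hU : ∀ N, IsOpen (U N) := fun N => isOpen_iff_mem_nhds.2 fun x hx => by
    filter_upwards [cylinder_mem_nhds x N] with y hy z hz
    rw [mem_cylinder_iff_eq.1 (hx y hy)]
    exact hx z (mem_cylinder_iff_eq.1 hy ▸ hz)
  have hcover : univ ⊆ ⋃ N, U N := fun x _ => by
    obtain ⟨N, hN⟩ := exists_cylinder_subset (hh.continuousAt (cylinder_mem_nhds (h x) n))
    exact mem_iUnion.2 ⟨N, fun y hy => hN hy⟩
  obtain ⟨N, hN⟩ := isCompact_univ.elim_directed_cover U hU hcover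
    (directed_of_isDirected_le fun M N hMN x hx y hy => hx y (cylinder_anti x hMN hy))
  exact ⟨N, fun x => hN (mem_univ x)⟩

theorem diagonal_comp_diagonal_eq {a b : ℕ → (∀ n, E n) → ∀ n, E n} (hb : ∀ n, Continuous (b n))
    (hba : ∀ n x, b n (a n x) = x) (ha : ∀ n x, a (n + 1) x ∈ cylinder (a n x) n)
    (hb' : ∀ n x, b (n + 1) x ∈ cylinder (b n x) n) (x : ∀ n, E n) :
    (fun i => b (i + 1) (fun j => a (j + 1) x j) i) = x := by
  funext i
  let w : ∀ n, E n := fun j => a (j + 1) x j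
  obtain ⟨N, hN⟩ := exists_cylinder_subset
    ((hb (i + 1)).continuousAt (cylinder_mem_nhds (b (i + 1) w) (i + 1)))
  let m := max N (i + 1)
  have ham : a m x ∈ cylinder w N := cylinder_anti w (le_max_left N (i + 1))
    ((mem_cylinder_comm _ _ _).1 (diagonal_mem_cylinder ha m x))
  calc b (i + 1) w i = b (i + 1) (a m x) i := (hN ham i i.lt_succ_self).symm
    _ = b m (a m x) i :=
      (mem_cylinder_of_forall_succ hb' (le_max_right N (i + 1)) _ i i.lt_succ_self).symm
    _ = x i := by rw [hba]

theorem exists_homeomorph_forall_mem_cylinder {s : ℕ → (∀ n, E n) ≃ₜ (∀ n, E n)}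
    (hs : ∀ n x, s (n + 1) x ∈ cylinder (s n x) n)
    (hs' : ∀ n y, (s (n + 1)).symm y ∈ cylinder ((s n).symm y) n) :
    ∃ k : (∀ n, E n) ≃ₜ (∀ n, E n), ∀ n x, k x ∈ cylinder (s n x) n := by
  refine ⟨{
    toFun := fun x i => s (i + 1) x i
    invFun := fun y i => (s (i + 1)).symm y i
    left_inv := diagonal_comp_diagonal_eq (fun n => (s n).symm.continuous)
      (fun n => (s n).symm_apply_apply) hs hs'
    right_inv := diagonal_comp_diagonal_eq (fun n => (s n).continuous)
      (fun n => (s n).apply_symm_apply) hs' hs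
    continuous_toFun :=
      continuous_pi fun i => (continuous_apply i).comp (s (i + 1)).continuous
    continuous_invFun :=
      continuous_pi fun i => (continuous_apply i).comp (s (i + 1)).symm.continuous },
    diagonal_mem_cylinder hs⟩

open Classical in
theorem continuous_piecewise_cell {P : Set (∀ n, E n) → Prop} {K : Set (∀ n, E n)}
    (hK : IsClosed K) (hP : ∀ x ∉ K, ∃ m, P (cylinder x m)) (hPK : ∀ C, P C → Disjoint C K)
    {e : Set (∀ n, E n) → (∀ n, E n) → ∀ n, E n} (he : ∀ x, Continuous (e (cell P x)))
    (hemem : ∀ x y, e (cell P x) y ∈ cell P x) :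
    Continuous (K.piecewise id fun x => e (cell P x) x) := by
  refine continuous_iff_continuousAt.2 fun x => ?_
  by_cases hx : x ∈ K
  · refine tendsto_nhds.2 fun U hU hxU => ?_
    obtain ⟨j, hj⟩ := exists_cylinder_subset (hU.mem_nhds hxU)
    rw [piecewise_eq_of_mem _ _ _ hx] at hj
    filter_upwards [cylinder_mem_nhds x j] with y hy
    refine hj ?_
    by_cases hyK : y ∈ K
    · rwa [piecewise_eq_of_mem _ _ _ hyK]
    · rw [piecewise_eq_of_notMem _ _ _ hyK]
      exact cell_subset_cylinder hy
        (disjoint_right.1 (hPK _ (cell_spec (hP y hyK))) hx) (hemem y y)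
  · refine ((continuousOn_of_cell (S := Kᶜ) (ψ := e) hP fun z _ => (he z).continuousOn).congr
      fun z hz => ?_).continuousAt (hK.isOpen_compl.mem_nhds hx)
    exact piecewise_eq_of_notMem _ _ _ hz

theorem exists_continuous_injective_eqOn_id {Q : (∀ n, E n) → (∀ n, E n) → Prop}
    (hQ : ∀ U : Set (∀ n, E n), IsOpen U → U.Nonempty →
      ∃ e : (∀ n, E n) → ∀ n, E n, Continuous e ∧ Function.Injective e ∧
        ∀ x, e x ∈ U ∧ Q x (e x))
    {K : Set (∀ n, E n)} (hK : IsClosed K) (N : ℕ) :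
    ∃ φ : (∀ n, E n) → ∀ n, E n, Continuous φ ∧ Function.Injective φ ∧ EqOn φ id K ∧
      (∀ x, φ x ∈ cylinder x N) ∧ ∀ x ∉ K, Q x (φ x) := by
  classical
  have : Nonempty ((∀ n, E n) → ∀ n, E n) := ⟨id⟩
  choose! e he hinj heQ using hQ
  let P : Set (∀ n, E n) → Prop := fun C => Disjoint C K ∧ ∀ z ∈ C, C ⊆ cylinder z N
  have hP : ∀ x ∉ K, ∃ m, P (cylinder x m) := fun x hx => by
    obtain ⟨m, hm⟩ := exists_cylinder_subset (hK.isOpen_compl.mem_nhds hx)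
    refine ⟨max m N, disjoint_left.2 fun y hy => hm (cylinder_anti x (le_max_left m N) hy),
      fun z hz => ?_⟩
    rw [← mem_cylinder_iff_eq.1 hz]
    exact cylinder_anti z (le_max_right m N)
  have hemem : ∀ x y, e (cell P x) y ∈ cell P x := fun x y =>
    (heQ _ isOpen_cell ⟨x, mem_cell⟩ y).1
  refine ⟨K.piecewise id fun x => e (cell P x) x,
    continuous_piecewise_cell hK hP (fun C hC => hC.1)
      (fun x => he _ isOpen_cell ⟨x, mem_cell⟩) hemem,
    injective_piecewise_cell hP (fun C hC => hC.1)
      (fun x => hinj _ isOpen_cell ⟨x, mem_cell⟩) hemem,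
    piecewise_eqOn _ _ _, fun x => ?_, fun x hx => ?_⟩
  · by_cases hx : x ∈ K
    · rw [piecewise_eq_of_mem _ _ _ hx]
      exact self_mem_cylinder x N
    · rw [piecewise_eq_of_notMem _ _ _ hx]
      exact (cell_spec (hP x hx)).2 x mem_cell (hemem x x)
  · rw [piecewise_eq_of_notMem _ _ _ hx]
    exact (heQ _ isOpen_cell ⟨x, mem_cell⟩ x).2

end PiNat

section BackAndForth

/-- The pair `(Cantor, Y)` embeds, as a pair, into every nonempty open subset of `Cantor`. -/
def EmbedsInOpens (Y : Set Cantor) : Prop :=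
  ∀ U : Set Cantor, IsOpen U → U.Nonempty →
    ∃ e : Cantor → Cantor, Continuous e ∧ Function.Injective e ∧
      ∀ x, e x ∈ U ∧ (x ∈ Y ↔ e x ∈ Y)

theorem EmbedsInOpens.compl {Y : Set Cantor} (hY : EmbedsInOpens Y) : EmbedsInOpens Yᶜ := by
  intro U hU hne
  obtain ⟨e, he, hinj, heU⟩ := hY U hU hne
  exact ⟨e, he, hinj, fun x => ⟨(heU x).1, not_congr (heU x).2⟩⟩

theorem BorelSet.embedsInOpens {X : Set Cantor} (hX : BorelSet X) (hdense : Dense X)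
    (hhom : IsHomogeneous X) (hΔ : ¬ InDelta X) : EmbedsInOpens X := by
  rintro U hU ⟨z, hz⟩
  obtain ⟨n, hn⟩ := exists_cylinder_subset (hU.mem_nhds hz)
  obtain ⟨e, he, hinj, hen, heX⟩ :=
    exists_continuous_injective_mem_cylinder hX hdense hhom hΔ z n
  exact ⟨e, he, hinj, fun x => ⟨hn (hen x), heX x⟩⟩

theorem EmbedsInOpens.exists_extension {Y : Set Cantor} (hY : EmbedsInOpens Y)
    (h : Cantor ≃ₜ Cantor) {K : Set Cantor} (hK : IsClosed K) (hKY : ∀ x ∈ K, x ∈ Y ↔ h x ∈ Y)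
    (N : ℕ) :
    ∃ φ : Cantor → Cantor, Continuous φ ∧ Function.Injective φ ∧ EqOn φ id K ∧
      (∀ x, φ x ∈ cylinder x N) ∧ ∀ x, x ∈ Y ↔ h (φ x) ∈ Y := by
  obtain ⟨φ, hφ, hinj, hφK, hφN, hφY⟩ := exists_continuous_injective_eqOn_id
    (Q := fun x y => x ∈ Y ↔ h y ∈ Y) (fun U hU hne => by
      obtain ⟨e, he, hinj, heU⟩ := hY (h '' U) (h.isOpenMap U hU) (hne.image h)
      refine ⟨h.symm ∘ e, h.symm.continuous.comp he, h.symm.injective.comp hinj, fun x => ⟨?_, ?_⟩⟩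
      · exact (h.image_eq_preimage_symm U).subset (heU x).1
      · simpa using (heU x).2) hK N
  refine ⟨φ, hφ, hinj, hφK, hφN, fun x => ?_⟩
  by_cases hx : x ∈ K
  · rw [hφK hx]
    exact hKY x hx
  · exact hφY x hx

theorem interior_image_eq_empty {α β : Type*} [TopologicalSpace α] [TopologicalSpace β]
    {f : α → β} (hf : Continuous f) (hinj : Function.Injective f) {A : Set α}
    (hA : interior A = ∅) : interior (f '' A) = ∅ := by
  have hsub : f ⁻¹' interior (f '' A) ⊆ interior A :=
    ((preimage_interior_subset_interior_preimage hf).trans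
      (interior_mono (hinj.preimage_image A).subset))
  refine eq_empty_of_forall_notMem fun y hy => ?_
  obtain ⟨x, -, rfl⟩ := interior_subset hy
  exact (hA ▸ hsub hy : x ∈ (∅ : Set α))

/-- A finite stage of the back-and-forth construction: a homeomorphism of `Cantor` which already
respects `Y` on a closed nowhere dense set. -/
structure Approximation (Y : Set Cantor) extends Cantor ≃ₜ Cantor where
  support : Set Cantor
  isClosed_support : IsClosed support
  interior_support : interior support = ∅
  mem_iff : ∀ x ∈ support, x ∈ Y ↔ toHomeomorph x ∈ Y

namespace Approximation

variable {Y : Set Cantor} {p q r : Approximation Y} {n : ℕ}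

/-- The inverse homeomorphism, supported on the image of the support. -/
def symm (p : Approximation Y) : Approximation Y where
  toHomeomorph := p.toHomeomorph.symm
  support := p.toHomeomorph '' p.support
  isClosed_support := p.toHomeomorph.isClosedMap _ p.isClosed_support
  interior_support := by rw [← Homeomorph.image_interior, p.interior_support, image_empty]
  mem_iff := by
    rintro _ ⟨x, hx, rfl⟩
    rw [Homeomorph.symm_apply_apply, p.mem_iff x hx]

/-- `q` agrees with `p` on the support of `p`, and is `n`-close to `p` in both directions. -/
structure Extends (q p : Approximation Y) (n : ℕ) : Prop where
  support_subset : p.support ⊆ q.support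
  eqOn : EqOn q.toHomeomorph p.toHomeomorph p.support
  mem_cylinder : ∀ x, q.toHomeomorph x ∈ cylinder (p.toHomeomorph x) n
  symm_mem_cylinder : ∀ x, q.toHomeomorph.symm x ∈ cylinder (p.toHomeomorph.symm x) n

theorem Extends.symm_left (hqp : q.Extends p.symm n) : q.symm.Extends p n where
  support_subset x hx := by
    refine ⟨p.toHomeomorph x, hqp.support_subset (mem_image_of_mem _ hx), ?_⟩
    rw [hqp.eqOn (mem_image_of_mem _ hx)]
    exact p.toHomeomorph.symm_apply_apply x
  eqOn x hx := by
    refine (Homeomorph.symm_apply_eq _).2 ?_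
    rw [hqp.eqOn (mem_image_of_mem _ hx)]
    exact (p.toHomeomorph.symm_apply_apply x).symm
  mem_cylinder := hqp.symm_mem_cylinder
  symm_mem_cylinder := hqp.mem_cylinder

theorem Extends.trans (hrq : r.Extends q n) (hqp : q.Extends p n) : r.Extends p n where
  support_subset := hqp.support_subset.trans hrq.support_subset
  eqOn _ hx := (hrq.eqOn (hqp.support_subset hx)).trans (hqp.eqOn hx)
  mem_cylinder x i hi := (hrq.mem_cylinder x i hi).trans (hqp.mem_cylinder x i hi)
  symm_mem_cylinder x i hi :=
    (hrq.symm_mem_cylinder x i hi).trans (hqp.symm_mem_cylinder x i hi)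

theorem exists_extends (hY : EmbedsInOpens Y) (p : Approximation Y) {D : Set Cantor}
    (hD : IsClosed D) (hD' : interior D = ∅) (n : ℕ) :
    ∃ q : Approximation Y, q.Extends p n ∧ D ⊆ q.support := by
  let h := p.toHomeomorph
  obtain ⟨N, hN⟩ := exists_forall_mem_cylinder_of_continuous h.continuous n
  obtain ⟨φ, hφ, hinj, hφp, hφN, hφY⟩ :=
    hY.exists_extension h p.isClosed_support p.mem_iff (max N n)
  have hK : interior (p.support ∪ D) = ∅ := by
    rw [interior_union_isClosed_of_interior_empty p.isClosed_support hD', p.interior_support]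
  obtain ⟨k, hkφ, hk⟩ := exists_homeomorph_eqOn_of_injOn (p.isClosed_support.union hD) hK
    hφ.continuousOn hinj.injOn (interior_image_eq_empty hφ hinj hK) fun x _ => hφN x
  refine ⟨⟨k.trans h, p.support ∪ D, p.isClosed_support.union hD, hK, fun x hx => ?_⟩,
    ⟨subset_union_left, fun x hx => congrArg h ((hkφ (Or.inl hx)).trans (hφp hx)),
      fun x => hN x _ (cylinder_anti x (le_max_left N n) (hk x)), fun y => ?_⟩,
    subset_union_right⟩
  · rw [hφY x, ← hkφ hx, Homeomorph.trans_apply]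
  · have hmem := hk (k.symm (h.symm y))
    rw [k.apply_symm_apply, mem_cylinder_comm] at hmem
    exact cylinder_anti _ (le_max_right N n) hmem

theorem exists_extends_subset_image (hY : EmbedsInOpens Y) (p : Approximation Y) {D : Set Cantor}
    (hD : IsClosed D) (hD' : interior D = ∅) (n : ℕ) :
    ∃ q : Approximation Y, q.Extends p n ∧ D ⊆ q.support ∧ D ⊆ q.toHomeomorph '' q.support := by
  obtain ⟨q, hqp, hDq⟩ := p.exists_extends hY hD hD' n
  obtain ⟨r, hrq, hDr⟩ := q.symm.exists_extends hY hD hD' n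
  refine ⟨r.symm, hrq.symm_left.trans hqp, hDq.trans hrq.symm_left.support_subset, fun x hx => ?_⟩
  exact ⟨r.toHomeomorph x, mem_image_of_mem _ (hDr hx), r.toHomeomorph.symm_apply_apply x⟩

theorem exists_homeomorph_of_extends {s : ℕ → Approximation Y}
    (hs : ∀ n, (s (n + 1)).Extends (s n) n) :
    ∃ k : Cantor ≃ₜ Cantor, ∀ n, EqOn k (s n).toHomeomorph (s n).support := by
  have hmono : Monotone fun n => (s n).support :=
    monotone_nat_of_le_succ fun n => (hs n).support_subset
  have heqOn : ∀ m n, m ≤ n → EqOn (s n).toHomeomorph (s m).toHomeomorph (s m).support := by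
    intro m n hmn
    induction n, hmn using Nat.le_induction with
    | base => exact eqOn_refl _ _
    | succ n hmn ih => exact fun x hx => ((hs n).eqOn (hmono hmn hx)).trans (ih hx)
  obtain ⟨k, hk⟩ := exists_homeomorph_forall_mem_cylinder (s := fun n => (s n).toHomeomorph)
    (fun n => (hs n).mem_cylinder) fun n => (hs n).symm_mem_cylinder
  refine ⟨k, fun n x hx => funext fun i => ?_⟩
  rw [hk (max n (i + 1)) x i (le_max_right n (i + 1)), heqOn n _ (le_max_left n (i + 1)) hx]

end Approximation

theorem exists_isClosed_interior_eq_empty_of_isMeagre {α : Type*} [TopologicalSpace α]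
    {Y : Set α} (hY : IsMeagre Y) :
    ∃ D : ℕ → Set α, (∀ n, IsClosed (D n)) ∧ (∀ n, interior (D n) = ∅) ∧ Y ⊆ ⋃ n, D n := by
  obtain ⟨S, hnwd, hS, hYS⟩ := isMeagre_iff_countable_union_isNowhereDense.1 hY
  obtain ⟨f, hf⟩ := (hS.insert ∅).exists_eq_range (insert_nonempty _ _)
  refine ⟨fun n => closure (f n), fun n => isClosed_closure, fun n => ?_, fun x hx => ?_⟩
  · obtain hn | hn : f n ∈ insert ∅ S := hf.symm.subset (mem_range_self n)
    · simp only [hn, closure_empty, interior_empty]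
    · exact hnwd _ hn
  · obtain ⟨t, ht, hxt⟩ := hYS hx
    obtain ⟨n, rfl⟩ : t ∈ range f := hf.subset (mem_insert_of_mem _ ht)
    exact mem_iUnion.2 ⟨n, subset_closure hxt⟩

theorem EmbedsInOpens.exists_homeomorph_of_isMeagre {Y : Set Cantor} (hY : EmbedsInOpens Y)
    (hmeagre : IsMeagre Y) {x y : Cantor} (hxy : x ∈ Y ↔ y ∈ Y) :
    ∃ k : Cantor ≃ₜ Cantor, k x = y ∧ ∀ z, z ∈ Y ↔ k z ∈ Y := by
  obtain ⟨D, hD, hD', hYD⟩ := exists_isClosed_interior_eq_empty_of_isMeagre hmeagre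
  obtain ⟨h, rfl⟩ := exists_homeomorph_apply_eq x y
  let p : Approximation Y := ⟨h, {x}, isClosed_singleton, interior_singleton x, by simpa using hxy⟩
  choose next hnext hsupport himage using fun (n : ℕ) (q : Approximation Y) =>
    q.exists_extends_subset_image hY (hD n) (hD' n) n
  let s : ℕ → Approximation Y := fun n => Nat.rec p next n
  obtain ⟨k, hk⟩ := Approximation.exists_homeomorph_of_extends (s := s) fun n => hnext n (s n)
  have hmem : ∀ n, ∀ z ∈ (s n).support, z ∈ Y ↔ k z ∈ Y := fun n z hz => by
    rw [hk n hz]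
    exact (s n).mem_iff z hz
  refine ⟨k, hk 0 rfl, fun z => ⟨fun hz => ?_, fun hz => ?_⟩⟩
  · obtain ⟨n, hn⟩ := mem_iUnion.1 (hYD hz)
    exact (hmem (n + 1) z (hsupport n (s n) hn)).1 hz
  · obtain ⟨n, hn⟩ := mem_iUnion.1 (hYD hz)
    obtain ⟨w, hw, hwz⟩ := himage n (s n) hn
    obtain rfl : w = z := k.injective ((hk (n + 1) hw).trans hwz)
    exact (hmem (n + 1) w hw).2 hz

end BackAndForth

/-! ## Homogeneity of the complement -/

section Dichotomy

variable {α : Type*} [TopologicalSpace α]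

theorem isMeagre_preimage_val {X M : Set α} (hX : Dense X) (hM : IsMeagre M) :
    IsMeagre ((↑) ⁻¹' M : Set X) := by
  obtain ⟨D, hD, hD', hMD⟩ := exists_isClosed_interior_eq_empty_of_isMeagre hM
  refine (isMeagre_iUnion fun n => ?_).mono ((preimage_mono hMD).trans preimage_iUnion.subset)
  refine (((hD n).preimage continuous_subtype_val).isNowhereDense_iff.2 ?_).isMeagre
  refine eq_empty_of_forall_notMem fun x hx => ?_
  obtain ⟨O, hO, hOD⟩ := isOpen_induced_iff.1 (isOpen_interior (s := ((↑) ⁻¹' D n : Set X)))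
  have hOX : O ∩ X ⊆ D n := fun z hz =>
    have hzO : (⟨z, hz.2⟩ : X) ∈ (↑) ⁻¹' O := hz.1
    (hOD.subset.trans interior_subset) hzO
  have hOsub : O ⊆ interior (D n) := hO.subset_interior_iff.2
    ((hX.open_subset_closure_inter hO).trans ((hD n).closure_subset_iff.2 hOX))
  exact (hD' n).subset (hOsub (hOD.symm.subset hx))

theorem isMeagre_or_isMeagre_compl [BaireSpace α] {X : Set α} (hX : BaireMeasurableSet X)
    (hdense : Dense X) (hhom : IsHomogeneous X) : IsMeagre X ∨ IsMeagre Xᶜ := by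
  by_contra! hne
  obtain ⟨U, hU, hUne, hUX⟩ := (isMeagre_or_exists_isOpen_isMeagre_diff hX).resolve_left hne.1
  obtain ⟨V, hV, hVne, hVX⟩ :=
    (isMeagre_or_exists_isOpen_isMeagre_diff hX.compl).resolve_left hne.2
  obtain ⟨q, hqU, hqX⟩ := hdense.inter_open_nonempty U hU hUne
  obtain ⟨p, hpV, hpX⟩ := hdense.inter_open_nonempty V hV hVne
  obtain ⟨g, hg⟩ := hhom ⟨q, hqX⟩ ⟨p, hpX⟩
  have hmeagre : IsMeagre (((↑) : X → α) '' (g ⁻¹' ((↑) ⁻¹' (V \ Xᶜ)))) :=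
    ((isMeagre_preimage_val hdense hVX).preimage_of_isOpenMap g.continuous g.isOpenMap).image_val
  obtain ⟨W, hW, hWV⟩ := isOpen_induced_iff.1
    ((hV.preimage continuous_subtype_val).preimage g.continuous)
  have hqW : (⟨q, hqX⟩ : X) ∈ (↑) ⁻¹' W := by rwa [hWV, mem_preimage, hg]
  refine not_isMeagre_of_isOpen (hW.inter hU) ⟨q, hqW, hqU⟩
    ((hmeagre.union hUX).mono fun z ⟨hzW, hzU⟩ => ?_)
  by_cases hzX : z ∈ X
  · have hz : (⟨z, hzX⟩ : X) ∈ g ⁻¹' ((↑) ⁻¹' V) := hWV ▸ hzW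
    exact Or.inl ⟨⟨z, hzX⟩, ⟨hz, not_not.2 (g ⟨z, hzX⟩).2⟩, rfl⟩
  · exact Or.inr ⟨hzU, hzX⟩

end Dichotomy

/-- The complement of a dense homogeneous Borel subspace of Cantor space outside Δ
is homogeneous. -/
theorem complement_homogeneous (X : Set Cantor)
    (hB : @MeasurableSet Cantor (borel Cantor) X) (hd : Dense X)
    (hhom : IsHomogeneous X) (hdel : ¬ InDelta X) :
    IsHomogeneous (Xᶜ : Set Cantor) := by
  have hX : EmbedsInOpens X := BorelSet.embedsInOpens hB hd hhom hdel
  rintro ⟨x, hx⟩ ⟨y, hy⟩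
  obtain ⟨k, hkx, hkX⟩ : ∃ k : Cantor ≃ₜ Cantor, k x = y ∧ ∀ z, z ∈ Xᶜ ↔ k z ∈ Xᶜ := by
    obtain hX' | hX' := isMeagre_or_isMeagre_compl (BorelSet.baireMeasurableSet hB) hd hhom
    · obtain ⟨k, hkx, hkX⟩ := hX.exists_homeomorph_of_isMeagre hX' (iff_of_false hx hy)
      exact ⟨k, hkx, fun z => not_congr (hkX z)⟩
    · exact hX.compl.exists_homeomorph_of_isMeagre hX' (iff_of_true hx hy)
  exact ⟨k.subtype hkX, Subtype.ext hkx⟩
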